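/- arXiv:math/0610942 — 2 statements merged into one kernel-verified Lean document; each statement's English description precedes it below -/
import Mathlib

section
/- Let d ≥ 6 be an integer, let ε ∈ (0,1), and set p = (4d+3)/7, q = (4d+3)/4 − ε, r = (4d+3)/3 − ε. Then for every C > 0 there is a constant A > 0 (depending only on d, ε, C) such that for every nonnegative measurable function f on ℝ^d one has ‖T[f]‖_{L^q(L^r),N} ≤ A ‖f‖_{L^p(ℝ^d)}. -/
/-!
The substitution `t = h / (1 + s)` turns the part of `T[f]` over heights `h / 2 < t ≤ h` into the
transform `∫ g (z + (1 + s) • v, s) ds`, in which `v` is the position of the original line and `z`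
its direction. The norm of the part at height `h` carries a positive power of `h`, so dyadic heights
sum geometrically and everything reduces to this transform.

Let `G` be a family of lines spending time at least `lam` in a set `E`. Cut `[0, 1)` into `N` slabs.
If the time is spread over three separated slabs, then repeated Cauchy–Schwarz bounds `|G|` by five
slices of `E`: one at the centre of a homothety of times, the others at two times and their images.
Otherwise a single slab carries a fixed fraction of the time, and stretching it to unit thickness
multiplies `lam` by `N / 12`, which closes an induction on scales. The result is a restricted
weak-type bound with constant a multiple of `lam ^ (-(n + 7 / 4 + η))`, where `n = d - 1` and
`η > 0` is arbitrarily small.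

Dyadic decomposition in the level and in the measure of the set of directions, together with
interpolation against Fubini and the trivial bound, gives the strong mixed norm for positions in the
unit ball. Galilean shifts of `g` then cover all positions; their contributions add up because
`p ≤ q`.
-/

open MeasureTheory ENNReal

noncomputable section

/-- `ℝ^n` with the Euclidean structure. We model `ℝ^d` as `Euc (d-1) × ℝ`. -/
abbrev Euc (n : ℕ) := EuclideanSpace ℝ (Fin n)

/-- The local x-ray transform: `T[f](ξ,x) = ∫_0^1 f (x + t(ξ + e_d)) dt`. -/
def xrayT {n : ℕ} (f : Euc n × ℝ → ℝ≥0∞) (ξ x : Euc n) : ℝ≥0∞ :=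
  ∫⁻ t in Set.Ioc (0:ℝ) 1, f (x + t • ξ, t)

/-- The Nikodym-order mixed norm `‖T[f]‖_{L^q(L^r),N}`. -/
def nikodymMixedNorm {n : ℕ} (q r C : ℝ) (f : Euc n × ℝ → ℝ≥0∞) : ℝ≥0∞ :=
  (∫⁻ x : Euc n, (∫⁻ ξ in Metric.ball (0 : Euc n) C, xrayT f ξ x ^ r) ^ (q / r)) ^ (1 / q)

/-- `‖f‖_{L^p}` for a nonnegative (extended-real-valued) function. -/
def lpNorm {α : Type*} [MeasureSpace α] (p : ℝ) (f : α → ℝ≥0∞) : ℝ≥0∞ :=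
  (∫⁻ z, f z ^ p) ^ (1 / p)

section ChangeOfVariables

variable {E : Type*} [NormedAddCommGroup E] [NormedSpace ℝ E] [MeasurableSpace E] [BorelSpace E]
  [FiniteDimensional ℝ E] (μ : Measure E) [μ.IsAddHaarMeasure]

lemma lintegral_comp_add_smul (f : E → ℝ≥0∞) (a : E) {c : ℝ} (hc : c ≠ 0) :
    ∫⁻ x, f (a + c • x) ∂μ = ENNReal.ofReal (|c⁻¹| ^ Module.finrank ℝ E) * ∫⁻ x, f x ∂μ := by
  calc ∫⁻ x, f (a + c • x) ∂μ
      = ∫⁻ y, f (a + y) ∂(μ.map (c • ·)) :=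
        (lintegral_map_equiv (fun y => f (a + y))
          (Homeomorph.smulOfNeZero c hc).toMeasurableEquiv).symm
    _ = ENNReal.ofReal (|c⁻¹| ^ Module.finrank ℝ E) * ∫⁻ x, f x ∂μ := by
        rw [Measure.map_addHaar_smul μ hc, lintegral_smul_measure, lintegral_add_left_eq_self,
          smul_eq_mul, ← inv_pow, abs_pow]

end ChangeOfVariables

lemma sq_lintegral_le_measure_mul {α : Type*} [MeasurableSpace α] {ν : Measure α}
    {f : α → ℝ≥0∞} (hf : AEMeasurable f ν) {S : Set α} (hS : f.support ⊆ S) :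
    (∫⁻ x, f x ∂ν) ^ 2 ≤ ν S * ∫⁻ x, f x ^ 2 ∂ν := by
  have sqrt_sq (y : ℝ≥0∞) : (y ^ (1 / 2 : ℝ)) ^ 2 = y := by
    rw [← ENNReal.rpow_natCast, ← ENNReal.rpow_mul]; norm_num
  have hölder := ENNReal.lintegral_mul_le_Lp_mul_Lq (ν.restrict S) Real.HolderConjugate.two_two
    (f := fun _ => 1) aemeasurable_const hf.restrict
  simp only [Pi.mul_apply, one_mul, lintegral_const, Measure.restrict_apply_univ,
    ENNReal.rpow_ofNat, one_pow] at hölder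
  calc (∫⁻ x, f x ∂ν) ^ 2
      = (∫⁻ x in S, f x ∂ν) ^ 2 := by rw [setLIntegral_eq_of_support_subset hS]
    _ ≤ (ν S ^ (1 / 2 : ℝ) * (∫⁻ x in S, f x ^ 2 ∂ν) ^ (1 / 2 : ℝ)) ^ 2 := by gcongr
    _ = ν S * ∫⁻ x in S, f x ^ 2 ∂ν := by rw [mul_pow, sqrt_sq, sqrt_sq]
    _ ≤ ν S * ∫⁻ x, f x ^ 2 ∂ν := by gcongr; exact Measure.restrict_le_self

section FiveSlices

variable {n : ℕ}

/-- Times `t, b, a, a'`, distinct from the base time `0`, such that the homothety with centre `t`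
and ratio `κ` maps `b` to `a` and `0` to `a'`. -/
structure HomotheticTimes (t b κ a a' : ℝ) : Prop where
  t_ne_zero : t ≠ 0
  b_ne_zero : b ≠ 0
  a_ne_zero : a ≠ 0
  b_ne_t : b ≠ t
  ratio_ne_zero : κ ≠ 0
  ratio_ne_one : κ ≠ 1
  a_eq : a = t + κ * (b - t)
  a'_eq : a' = (1 - κ) * t

namespace HomotheticTimes

variable {t b κ a a' : ℝ}

lemma a'_ne_zero (h : HomotheticTimes t b κ a a') : a' ≠ 0 := by
  rw [h.a'_eq]
  exact mul_ne_zero (sub_ne_zero.mpr h.ratio_ne_one.symm) h.t_ne_zero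

lemma sub_a_ne_zero (h : HomotheticTimes t b κ a a') : t - a ≠ 0 := by
  rw [h.a_eq, show t - (t + κ * (b - t)) = κ * (t - b) by ring]
  exact mul_ne_zero h.ratio_ne_zero (sub_ne_zero.mpr h.b_ne_t.symm)

end HomotheticTimes

/-- For a weight `χ o v` on the lines `s ↦ o + s • v`, the total weight of the points `o` at time
`0` that are joined to `p` at time `t` and to `q` at time `b`. -/
def wedgeCount (χ : Euc n → Euc n → ℝ≥0∞) (t b : ℝ) (p q : Euc n) : ℝ≥0∞ :=
  ∫⁻ o, χ o (t⁻¹ • (p - o)) * χ o (b⁻¹ • (q - o))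

variable {χ : Euc n → Euc n → ℝ≥0∞}

@[fun_prop]
lemma measurable_wedgeCount (hχ : Measurable (Function.uncurry χ)) (t b : ℝ) :
    Measurable (Function.uncurry (wedgeCount χ t b)) := by
  unfold wedgeCount Function.uncurry
  fun_prop

lemma lintegral_comp_inv_smul_sub (f : Euc n → ℝ≥0∞) {c : ℝ} (hc : c ≠ 0) (o : Euc n) :
    ∫⁻ p, f (c⁻¹ • (p - o)) = ENNReal.ofReal (|c| ^ n) * ∫⁻ v, f v := by
  have h := lintegral_comp_add_smul volume f (-(c⁻¹ • o)) (inv_ne_zero hc)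
  simpa [smul_sub, sub_eq_neg_add] using h

lemma lintegral_wedgeCount (hχ : Measurable (Function.uncurry χ)) {t b : ℝ} (ht : t ≠ 0)
    (hb : b ≠ 0) :
    ∫⁻ p, ∫⁻ q, wedgeCount χ t b p q =
      ENNReal.ofReal ((|t| * |b|) ^ n) * ∫⁻ o, (∫⁻ v, χ o v) ^ 2 := by
  calc ∫⁻ p, ∫⁻ q, wedgeCount χ t b p q
      = ∫⁻ p, ∫⁻ o, ∫⁻ q, χ o (t⁻¹ • (p - o)) * χ o (b⁻¹ • (q - o)) :=
        lintegral_congr fun p => lintegral_lintegral_swap (by fun_prop)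
    _ = ∫⁻ o, ∫⁻ p, ∫⁻ q, χ o (t⁻¹ • (p - o)) * χ o (b⁻¹ • (q - o)) :=
        lintegral_lintegral_swap (by fun_prop)
    _ = ∫⁻ o, ENNReal.ofReal ((|t| * |b|) ^ n) * (∫⁻ v, χ o v) ^ 2 := by
        refine lintegral_congr fun o => ?_
        rw [lintegral_lintegral_mul (by fun_prop) (by fun_prop), lintegral_comp_inv_smul_sub _ ht,
          lintegral_comp_inv_smul_sub _ hb, mul_pow, ENNReal.ofReal_mul (by positivity)]
        ring
    _ = _ := lintegral_const_mul _ (by fun_prop)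

lemma lintegral_triangular_substitution {F : Euc n → Euc n → Euc n → ℝ≥0∞}
    (hF : Measurable fun p : Euc n × Euc n × Euc n => F p.1 p.2.1 p.2.2) (x : Euc n) (α β : ℝ)
    {c₁ c₂ c₃ : ℝ} (hc₁ : c₁ ≠ 0) (hc₂ : c₂ ≠ 0) (hc₃ : c₃ ≠ 0) :
    ∫⁻ p, ∫⁻ o, ∫⁻ q, F (x + c₁ • p) (α • p + c₂ • o) (β • o + c₃ • q) =
      ENNReal.ofReal (|c₁⁻¹ * c₂⁻¹ * c₃⁻¹| ^ n) * ∫⁻ w, ∫⁻ u, ∫⁻ v, F w u v := by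
  have subst (f : Euc n → ℝ≥0∞) (a : Euc n) {c : ℝ} (hc : c ≠ 0) :
      ∫⁻ z, f (a + c • z) = ENNReal.ofReal (|c⁻¹| ^ n) * ∫⁻ z, f z := by
    simpa using lintegral_comp_add_smul volume f a hc
  calc ∫⁻ p, ∫⁻ o, ∫⁻ q, F (x + c₁ • p) (α • p + c₂ • o) (β • o + c₃ • q)
      = ∫⁻ p, ∫⁻ o, ENNReal.ofReal (|c₃⁻¹| ^ n) *
          ∫⁻ v, F (x + c₁ • p) (α • p + c₂ • o) v :=
        lintegral_congr fun p => lintegral_congr fun o => subst (F _ _) _ hc₃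
    _ = ∫⁻ p, ENNReal.ofReal (|c₃⁻¹| ^ n) * (ENNReal.ofReal (|c₂⁻¹| ^ n) *
          ∫⁻ u, ∫⁻ v, F (x + c₁ • p) u v) := by
        refine lintegral_congr fun p => ?_
        rw [lintegral_const_mul _ (by fun_prop),
          subst (fun u => ∫⁻ v, F (x + c₁ • p) u v) _ hc₂]
    _ = ENNReal.ofReal (|c₃⁻¹| ^ n) * (ENNReal.ofReal (|c₂⁻¹| ^ n) *
          (ENNReal.ofReal (|c₁⁻¹| ^ n) * ∫⁻ w, ∫⁻ u, ∫⁻ v, F w u v)) := by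
        rw [lintegral_const_mul _ (by fun_prop), lintegral_const_mul _ (by fun_prop),
          subst (fun w => ∫⁻ u, ∫⁻ v, F w u v) _ hc₁]
    _ = _ := by
        rw [abs_mul, abs_mul, mul_pow, mul_pow, ENNReal.ofReal_mul (by positivity),
          ENNReal.ofReal_mul (by positivity)]
        ring

lemma lintegral_slice_points {Ψ : Euc n → Euc n → Euc n → Euc n → ℝ≥0∞}
    (hΨ : Measurable fun p : Euc n × Euc n × Euc n × Euc n => Ψ p.1 p.2.1 p.2.2.1 p.2.2.2)
    (α β γ : ℝ) {c₁ c₂ c₃ : ℝ} (hc₁ : c₁ ≠ 0) (hc₂ : c₂ ≠ 0) (hc₃ : c₃ ≠ 0) :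
    ∫⁻ p, ∫⁻ q, ∫⁻ o', ∫⁻ o, Ψ o' (γ • o' + c₁ • p) (α • p + c₂ • o) (β • o + c₃ • q) =
      ENNReal.ofReal (|c₁⁻¹ * c₂⁻¹ * c₃⁻¹| ^ n) * ∫⁻ w, ∫⁻ u, ∫⁻ v, ∫⁻ o', Ψ o' w u v := by
  calc ∫⁻ p, ∫⁻ q, ∫⁻ o', ∫⁻ o, Ψ o' (γ • o' + c₁ • p) (α • p + c₂ • o) (β • o + c₃ • q)
      = ∫⁻ p, ∫⁻ o', ∫⁻ o, ∫⁻ q, Ψ o' (γ • o' + c₁ • p) (α • p + c₂ • o) (β • o + c₃ • q) := by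
        refine lintegral_congr fun p => ?_
        rw [lintegral_lintegral_swap (by fun_prop)]
        exact lintegral_congr fun o' => lintegral_lintegral_swap (by fun_prop)
    _ = ∫⁻ o', ∫⁻ p, ∫⁻ o, ∫⁻ q, Ψ o' (γ • o' + c₁ • p) (α • p + c₂ • o) (β • o + c₃ • q) :=
        lintegral_lintegral_swap (by fun_prop)
    _ = ENNReal.ofReal (|c₁⁻¹ * c₂⁻¹ * c₃⁻¹| ^ n) * ∫⁻ o', ∫⁻ w, ∫⁻ u, ∫⁻ v, Ψ o' w u v := by
        rw [← lintegral_const_mul _ (by fun_prop)]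
        exact lintegral_congr fun o' =>
          lintegral_triangular_substitution (by fun_prop) _ _ _ hc₁ hc₂ hc₃
    _ = _ := by
        rw [lintegral_lintegral_swap (by fun_prop)]
        congr! 3 with w
        rw [lintegral_lintegral_swap (by fun_prop)]
        exact lintegral_congr fun u => lintegral_lintegral_swap (by fun_prop)

/-- The linear combination recovering `q - o'` from the point `w` at time `a'` on the line `o'p`
and the points `u`, `v` at time `a` on the lines `op`, `oq`, where `o`, `o'` are at time `0`, `p` is
at time `t` and `q` at time `b`. -/
def sliceDisplacement (t b a a' : ℝ) (w u v : Euc n) : Euc n :=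
  (b / a) • v - ((b - a) * t / (a * (t - a))) • u + ((b - a) * t / ((t - a) * a')) • w

@[fun_prop]
lemma measurable_sliceDisplacement (t b a a' : ℝ) : Measurable fun p : Euc n × Euc n × Euc n =>
    sliceDisplacement t b a a' p.1 p.2.1 p.2.2 := by
  unfold sliceDisplacement
  fun_prop

variable {t b κ a a' : ℝ}

-- The two times `a`, `a'` are images of `b`, `0` under one homothety centred at `t`; this is what
-- makes the coefficient of `o'` equal to `-1`, so that the direction `q - o'` does not see `o'`.
lemma sliceDisplacement_eq_sub (h : HomotheticTimes t b κ a a') (o o' p q : Euc n) :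
    sliceDisplacement t b a a' ((1 - a' / t) • o' + (a' / t) • p)
      ((a / t) • p + (1 - a / t) • o) ((1 - a / b) • o + (a / b) • q) = q - o' := by
  have := h.t_ne_zero
  have := h.b_ne_zero
  have := h.a_ne_zero
  have := h.a'_ne_zero
  have := h.sub_a_ne_zero
  have coeff_o : (b / a) * (1 - a / b) = (b - a) * t / (a * (t - a)) * (1 - a / t) := by field_simp
  have coeff_o' : (b - a) * t / ((t - a) * a') * (1 - a' / t) = -1 := by
    field_simp
    rw [h.a_eq, h.a'_eq]
    ring
  have coeff_p : (b - a) * t / ((t - a) * a') * (a' / t) =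
      (b - a) * t / (a * (t - a)) * (a / t) := by field_simp
  have coeff_q : (b / a) * (a / b) = 1 := by field_simp
  simp only [sliceDisplacement, smul_add, smul_smul, coeff_o, coeff_o', coeff_p, coeff_q]
  module

variable {φ φ' : Euc n → ℝ≥0∞}

lemma wedgeCount_sq_le (hχ : Measurable (Function.uncurry χ)) (h : HomotheticTimes t b κ a a')
    (hφ : ∀ o v, χ o v ≤ φ (o + a • v)) (hφ' : ∀ o v, χ o v ≤ φ' (o + a' • v)) (p q : Euc n) :
    wedgeCount χ t b p q ^ 2 ≤ ∫⁻ o', ∫⁻ o, φ ((a / t) • p + (1 - a / t) • o) *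
      φ ((1 - a / b) • o + (a / b) • q) * φ' ((1 - a' / t) • o' + (a' / t) • p) *
      χ o' (b⁻¹ • sliceDisplacement t b a a' ((1 - a' / t) • o' + (a' / t) • p)
        ((a / t) • p + (1 - a / t) • o) ((1 - a / b) • o + (a / b) • q)) := by
  have χ_le {s : ℝ} {f : Euc n → ℝ≥0∞} (hf : ∀ o v, χ o v ≤ f (o + s • v)) (r : ℝ) (o p : Euc n) :
      χ o (r⁻¹ • (p - o)) ≤ f ((1 - s / r) • o + (s / r) • p) := by
    convert hf o _ using 2
    rw [smul_smul, ← div_eq_mul_inv]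
    module
  rw [wedgeCount, pow_two, ← lintegral_lintegral_mul (by fun_prop) (by fun_prop)]
  refine lintegral_mono fun o' => lintegral_mono fun o => ?_
  simp only [sliceDisplacement_eq_sub h o o' p q]
  calc χ o' (t⁻¹ • (p - o')) * χ o' (b⁻¹ • (q - o')) *
        (χ o (t⁻¹ • (p - o)) * χ o (b⁻¹ • (q - o)))
      = χ o (t⁻¹ • (p - o)) * χ o (b⁻¹ • (q - o)) * χ o' (t⁻¹ • (p - o')) *
        χ o' (b⁻¹ • (q - o')) := by ring
    _ ≤ _ := by
      rw [add_comm ((a / t) • p)]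
      gcongr <;> exact χ_le ‹_› _ _ _

lemma lintegral_wedgeCount_sq_le (hχ : Measurable (Function.uncurry χ)) (hφm : Measurable φ)
    (hφ'm : Measurable φ') (h : HomotheticTimes t b κ a a') (hφ : ∀ o v, χ o v ≤ φ (o + a • v))
    (hφ' : ∀ o v, χ o v ≤ φ' (o + a' • v)) {m : ℝ≥0∞} (hm : ∀ v, ∫⁻ o, χ o v ≤ m) :
    ∫⁻ p, ∫⁻ q, wedgeCount χ t b p q ^ 2 ≤
      ENNReal.ofReal (|(a' / t)⁻¹ * (1 - a / t)⁻¹ * (a / b)⁻¹| ^ n) *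
        ((∫⁻ z, φ z) ^ 2 * (∫⁻ z, φ' z) * m) := by
  set Ψ : Euc n → Euc n → Euc n → Euc n → ℝ≥0∞ := fun o' w u v =>
    φ u * φ v * φ' w * χ o' (b⁻¹ • sliceDisplacement t b a a' w u v)
  have integrate_o' (w u v : Euc n) : ∫⁻ o', Ψ o' w u v ≤ φ u * φ v * φ' w * m := by
    rw [lintegral_const_mul _ (by fun_prop)]
    gcongr
    exact hm _
  have hta : 1 - a / t ≠ 0 := by
    rw [one_sub_div h.t_ne_zero]
    exact div_ne_zero h.sub_a_ne_zero h.t_ne_zero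
  calc ∫⁻ p, ∫⁻ q, wedgeCount χ t b p q ^ 2
      ≤ ∫⁻ p, ∫⁻ q, ∫⁻ o', ∫⁻ o, Ψ o' ((1 - a' / t) • o' + (a' / t) • p)
          ((a / t) • p + (1 - a / t) • o) ((1 - a / b) • o + (a / b) • q) := by
        gcongr with p q
        exact wedgeCount_sq_le hχ h hφ hφ' p q
    _ = ENNReal.ofReal (|(a' / t)⁻¹ * (1 - a / t)⁻¹ * (a / b)⁻¹| ^ n) *
          ∫⁻ w, ∫⁻ u, ∫⁻ v, ∫⁻ o', Ψ o' w u v :=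
        lintegral_slice_points (by fun_prop) _ _ _ (div_ne_zero h.a'_ne_zero h.t_ne_zero) hta
          (div_ne_zero h.a_ne_zero h.b_ne_zero)
    _ ≤ ENNReal.ofReal (|(a' / t)⁻¹ * (1 - a / t)⁻¹ * (a / b)⁻¹| ^ n) *
          ∫⁻ w, ∫⁻ u, ∫⁻ v, φ u * φ v * φ' w * m := by
        gcongr with w u v
        exact integrate_o' w u v
    _ = _ := by
        have integrate_v (w u : Euc n) :
            ∫⁻ v, φ u * φ v * φ' w * m = φ u * ((∫⁻ z, φ z) * φ' w * m) := by
          rw [lintegral_mul_const _ (by fun_prop), lintegral_mul_const _ (by fun_prop),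
            lintegral_const_mul _ hφm]
          ring
        have integrate_u (w : Euc n) : ∫⁻ u, φ u * ((∫⁻ z, φ z) * φ' w * m) =
            φ' w * ((∫⁻ z, φ z) ^ 2 * m) := by
          rw [lintegral_mul_const _ hφm]
          ring
        simp only [integrate_v, integrate_u]
        rw [lintegral_mul_const _ hφ'm]
        ring

-- Two applications of Cauchy–Schwarz: over the points `o ∈ E₀`, then over the pairs
-- `(p, q) ∈ E₁ × E_b`.
lemma pow_four_lintegral_le_wedgeCount (hχ : Measurable (Function.uncurry χ)) (hb : b ≠ 0)
    (ht : t ≠ 0) {E₀ E₁ Eb : Set (Euc n)} (h₀ : ∀ o v, o ∉ E₀ → χ o v = 0)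
    (h₁ : ∀ o v, o + t • v ∉ E₁ → χ o v = 0) (hb' : ∀ o v, o + b • v ∉ Eb → χ o v = 0) :
    ENNReal.ofReal ((|t| * |b|) ^ n) ^ 2 * (∫⁻ o, ∫⁻ v, χ o v) ^ 4 ≤
      volume E₀ ^ 2 * (volume E₁ * volume Eb * ∫⁻ p, ∫⁻ q, wedgeCount χ t b p q ^ 2) := by
  have cs_points : (∫⁻ o, ∫⁻ v, χ o v) ^ 2 ≤ volume E₀ * ∫⁻ o, (∫⁻ v, χ o v) ^ 2 := by
    refine sq_lintegral_le_measure_mul (by fun_prop) (Function.support_subset_iff'.mpr ?_)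
    intro o ho
    simp [h₀ o _ ho]
  have wedge_support : (Function.uncurry (wedgeCount χ t b)).support ⊆ E₁ ×ˢ Eb := by
    refine Function.support_subset_iff'.mpr fun ⟨p, q⟩ hpq => ?_
    simp only [Set.mem_prod, not_and_or] at hpq
    simp only [Function.uncurry, wedgeCount]
    refine (lintegral_congr fun o => ?_).trans lintegral_zero
    rcases hpq with hp | hq
    · rw [h₁ o _ (by rwa [smul_inv_smul₀ ht, add_sub_cancel]), zero_mul]
    · rw [hb' o (b⁻¹ • (q - o)) (by rwa [smul_inv_smul₀ hb, add_sub_cancel]), mul_zero]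
  have cs_pairs : (∫⁻ p, ∫⁻ q, wedgeCount χ t b p q) ^ 2 ≤
      volume E₁ * volume Eb * ∫⁻ p, ∫⁻ q, wedgeCount χ t b p q ^ 2 := by
    have h := sq_lintegral_le_measure_mul (ν := volume.prod volume)
      (measurable_wedgeCount hχ t b).aemeasurable wedge_support
    rwa [lintegral_prod _ (by fun_prop), lintegral_prod _ (by fun_prop), Measure.prod_prod] at h
  calc ENNReal.ofReal ((|t| * |b|) ^ n) ^ 2 * (∫⁻ o, ∫⁻ v, χ o v) ^ 4
      = (ENNReal.ofReal ((|t| * |b|) ^ n) * (∫⁻ o, ∫⁻ v, χ o v) ^ 2) ^ 2 := by ring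
    _ ≤ (ENNReal.ofReal ((|t| * |b|) ^ n) * (volume E₀ * ∫⁻ o, (∫⁻ v, χ o v) ^ 2)) ^ 2 := by
        gcongr
    _ = volume E₀ ^ 2 * (∫⁻ p, ∫⁻ q, wedgeCount χ t b p q) ^ 2 := by
        rw [lintegral_wedgeCount hχ ht hb]
        ring
    _ ≤ _ := by gcongr

lemma pow_four_lintegral_le_of_five_slices (hχ : Measurable (Function.uncurry χ))
    {E₀ E₁ Eb Ea Ea' : Set (Euc n)} (hEa : MeasurableSet Ea) (hEa' : MeasurableSet Ea')
    (h : HomotheticTimes t b κ a a') (hχ1 : ∀ o v, χ o v ≤ 1)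
    (h₀ : ∀ o v, o ∉ E₀ → χ o v = 0) (h₁ : ∀ o v, o + t • v ∉ E₁ → χ o v = 0)
    (hb' : ∀ o v, o + b • v ∉ Eb → χ o v = 0) (hs : ∀ o v, o + a • v ∉ Ea → χ o v = 0)
    (hs' : ∀ o v, o + a' • v ∉ Ea' → χ o v = 0) {m : ℝ≥0∞} (hm : ∀ v, ∫⁻ o, χ o v ≤ m) :
    ENNReal.ofReal ((|b| * |a| * |t - a| * |a'|) ^ n) * (∫⁻ o, ∫⁻ v, χ o v) ^ 4 ≤
      volume E₀ ^ 2 * volume E₁ * volume Eb * volume Ea ^ 2 * volume Ea' * m := by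
  obtain ⟨ht, hb, ha, -⟩ := id h
  have hta := h.sub_a_ne_zero
  have ha' := h.a'_ne_zero
  have le_indicator {s : ℝ} {S : Set (Euc n)} (hS : ∀ o v, o + s • v ∉ S → χ o v = 0) (o v) :
      χ o v ≤ S.indicator 1 (o + s • v) := by
    by_cases mem : o + s • v ∈ S
    · simpa [mem] using hχ1 o v
    · simp [hS o v mem]
  have wedge_le := lintegral_wedgeCount_sq_le hχ (measurable_one.indicator hEa)
    (measurable_one.indicator hEa') h (le_indicator hs) (le_indicator hs') hm
  rw [lintegral_indicator_one hEa, lintegral_indicator_one hEa'] at wedge_le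
  set K := ENNReal.ofReal (|(a' / t)⁻¹ * (1 - a / t)⁻¹ * (a / b)⁻¹| ^ n) with hK
  set L := ENNReal.ofReal ((|t| * |b|) ^ n) with hL
  have jacobian : K * ENNReal.ofReal ((|b| * |a| * |t - a| * |a'|) ^ n) = L ^ 2 := by
    rw [hK, hL, ← ENNReal.ofReal_mul (by positivity), ← ENNReal.ofReal_pow (by positivity),
      ← mul_pow, ← pow_mul, mul_comm n 2, pow_mul, one_sub_div ht]
    congr 2
    simp only [abs_mul, abs_inv, abs_div]
    field_simp
  have hK0 : K ≠ 0 := by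
    have : 0 < |(a' / t)⁻¹ * (1 - a / t)⁻¹ * (a / b)⁻¹| := by
      rw [one_sub_div ht]
      positivity
    exact (ENNReal.ofReal_pos.mpr (by positivity)).ne'
  rw [← ENNReal.mul_le_mul_iff_right hK0 ENNReal.ofReal_ne_top, ← mul_assoc, jacobian]
  calc L ^ 2 * (∫⁻ o, ∫⁻ v, χ o v) ^ 4
      ≤ volume E₀ ^ 2 * (volume E₁ * volume Eb * ∫⁻ p, ∫⁻ q, wedgeCount χ t b p q ^ 2) :=
        pow_four_lintegral_le_wedgeCount hχ hb ht h₀ h₁ hb'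
    _ ≤ volume E₀ ^ 2 * (volume E₁ * volume Eb * (K * (volume Ea ^ 2 * volume Ea' * m))) := by
        gcongr
    _ = _ := by ring

-- Indexing a line `s ↦ z + s • v` of `G` by its point `o = z + t₀ • v` at time `t₀` instead of `z`
-- moves the base time from `0` to `t₀`.
lemma volume_pow_four_le_of_five_slices {G : Set (Euc n × Euc n)} (hG : MeasurableSet G)
    {t₀ t b κ a a' : ℝ} (h : HomotheticTimes (t - t₀) (b - t₀) κ (a - t₀) (a' - t₀))
    {E : ℝ → Set (Euc n)} (hEa : MeasurableSet (E a)) (hEa' : MeasurableSet (E a'))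
    (hE : ∀ s ∈ ({t₀, t, b, a, a'} : Set ℝ), ∀ l ∈ G, l.2 + s • l.1 ∈ E s) {m : ℝ≥0∞}
    (hm : ∀ v, volume {z | (v, z) ∈ G} ≤ m) :
    ENNReal.ofReal ((|b - t₀| * |a - t₀| * |t - a| * |a' - t₀|) ^ n) * volume G ^ 4 ≤
      volume (E t₀) ^ 2 * volume (E t) * volume (E b) * volume (E a) ^ 2 * volume (E a') * m := by
  set χ : Euc n → Euc n → ℝ≥0∞ := fun o v => G.indicator 1 (v, o - t₀ • v)
  have hχm : Measurable (Function.uncurry χ) :=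
    (measurable_one.indicator hG).comp
      (by fun_prop : Measurable fun p : Euc n × Euc n => (p.2, p.1 - t₀ • p.2))
  have fibre (v : Euc n) : ∫⁻ o, χ o v = volume {z | (v, z) ∈ G} :=
    (lintegral_sub_right_eq_self (fun z => G.indicator 1 (v, z)) (t₀ • v)).trans
      (lintegral_indicator_one (measurable_prodMk_left hG))
  have total : ∫⁻ o, ∫⁻ v, χ o v = volume G := by
    rw [lintegral_lintegral_swap hχm.aemeasurable, Measure.volume_eq_prod, Measure.prod_apply hG]
    exact lintegral_congr fibre
  have vanish {s : ℝ} (hs : s ∈ ({t₀, t, b, a, a'} : Set ℝ)) (o v : Euc n)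
      (hov : o + (s - t₀) • v ∉ E s) : χ o v = 0 := by
    refine Set.indicator_of_notMem (fun hmem => hov ?_) _
    convert hE s hs _ hmem using 1
    module
  have key := pow_four_lintegral_le_of_five_slices hχm (E₀ := E t₀) hEa hEa' h
    (fun o v => Set.indicator_le_self' (by simp) _)
    (fun o v ho => vanish (s := t₀) (by simp) o v (by simpa using ho))
    (vanish (by simp)) (vanish (by simp)) (vanish (by simp)) (vanish (by simp))
    (fun v => (fibre v).trans_le (hm v))
  rwa [total, sub_sub_sub_cancel_right] at key

end FiveSlices

section Energy

/-- The pairs `(κ, b)` with `b ∈ B` such that the homothety of ratio `κ` centred at `t` sends `b`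
into `A`. -/
def dilationPairs (A B : Set ℝ) (t : ℝ) : Set (ℝ × ℝ) :=
  {p | p.2 ∈ B ∧ t + p.1 * (p.2 - t) ∈ A}

/-- The triples `(κ, b, b')` such that both `(κ, b)` and `(κ, b')` are dilation pairs and `b`, `b'`
are `δ`-separated. -/
def farTriples (A B : Set ℝ) (δ t : ℝ) : Set (ℝ × ℝ × ℝ) :=
  {p | (p.1, p.2.1) ∈ dilationPairs A B t ∧ (p.1, p.2.2) ∈ dilationPairs A B t ∧
    δ ≤ |p.2.1 - p.2.2|}

/-- The quadruples `(t, κ, b, b')` with `t ∈ T` and `(κ, b, b')` a `δ`-separated triple of ratio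
and times for the centre `t`. -/
def farQuadruples (A B T : Set ℝ) (δ : ℝ) : Set (ℝ × ℝ × ℝ × ℝ) :=
  {p | p.1 ∈ T ∧ p.2 ∈ farTriples A B δ p.1}

variable {A B T : Set ℝ} {δ ℓ lam t : ℝ}

lemma measurableSet_dilationPairs (hA : MeasurableSet A) (hB : MeasurableSet B) (t : ℝ) :
    MeasurableSet (dilationPairs A B t) :=
  (measurable_snd hB).inter
    ((by fun_prop : Measurable fun p : ℝ × ℝ => t + p.1 * (p.2 - t)) hA)

lemma measurableSet_farTriples (hA : MeasurableSet A) (hB : MeasurableSet B) (δ t : ℝ) :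
    MeasurableSet (farTriples A B δ t) :=
  ((by fun_prop : Measurable fun p : ℝ × ℝ × ℝ => (p.1, p.2.1))
      (measurableSet_dilationPairs hA hB t)).inter
    (((by fun_prop : Measurable fun p : ℝ × ℝ × ℝ => (p.1, p.2.2))
      (measurableSet_dilationPairs hA hB t)).inter
    (measurableSet_le measurable_const
      (by fun_prop : Measurable fun p : ℝ × ℝ × ℝ => |p.2.1 - p.2.2|)))

lemma measurableSet_farQuadruples (hA : MeasurableSet A) (hB : MeasurableSet B)
    (hT : MeasurableSet T) (δ : ℝ) : MeasurableSet (farQuadruples A B T δ) := by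
  have dilation_mem {f : ℝ × ℝ × ℝ × ℝ → ℝ} (hf : Measurable f) :
      MeasurableSet {p : ℝ × ℝ × ℝ × ℝ | (p.2.1, f p) ∈ dilationPairs A B p.1} :=
    (hf hB).inter
      ((by fun_prop : Measurable fun p : ℝ × ℝ × ℝ × ℝ => p.1 + p.2.1 * (f p - p.1)) hA)
  exact (measurable_fst hT).inter ((dilation_mem (by fun_prop)).inter
    ((dilation_mem (by fun_prop)).inter (measurableSet_le measurable_const
      (by fun_prop : Measurable fun p : ℝ × ℝ × ℝ × ℝ => |p.2.2.1 - p.2.2.2|))))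

lemma sq_volume_le_near_add_far {S : Set ℝ} (hS : MeasurableSet S) (δ : ℝ) :
    volume S ^ 2 ≤ ENNReal.ofReal (2 * δ) * volume S +
      volume {p : ℝ × ℝ | p.1 ∈ S ∧ p.2 ∈ S ∧ δ ≤ |p.1 - p.2|} := by
  have near : MeasurableSet {p : ℝ × ℝ | p.1 ∈ S ∧ |p.1 - p.2| < δ} :=
    (measurable_fst hS).inter (measurableSet_lt
      (by fun_prop : Measurable fun p : ℝ × ℝ => |p.1 - p.2|) measurable_const)
  have volume_near : volume {p : ℝ × ℝ | p.1 ∈ S ∧ |p.1 - p.2| < δ} ≤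
      ENNReal.ofReal (2 * δ) * volume S := by
    rw [Measure.volume_eq_prod, Measure.prod_apply near, ← lintegral_indicator_const hS]
    refine lintegral_mono fun b => ?_
    by_cases hb : b ∈ S
    · rw [Set.indicator_of_mem hb, ← Real.volume_ball b δ]
      exact measure_mono fun b' hb' => Metric.mem_ball'.mpr hb'.2
    · simp [hb]
  calc volume S ^ 2 = volume (S ×ˢ S) := by
        rw [Measure.volume_eq_prod, Measure.prod_prod, sq]
    _ ≤ volume ({p : ℝ × ℝ | p.1 ∈ S ∧ |p.1 - p.2| < δ} ∪
          {p : ℝ × ℝ | p.1 ∈ S ∧ p.2 ∈ S ∧ δ ≤ |p.1 - p.2|}) :=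
        measure_mono fun p hp => (lt_or_ge |p.1 - p.2| δ).imp (⟨hp.1, ·⟩) (⟨hp.1, hp.2, ·⟩)
    _ ≤ _ := (measure_union_le _ _).trans (by gcongr)

lemma mul_volume_le_volume_dilationPairs (hA : MeasurableSet A) (hB : MeasurableSet B)
    (hBt : ∀ b ∈ B, b ≠ t ∧ |b - t| ≤ 1) :
    volume A * volume B ≤ volume (dilationPairs A B t) := by
  rw [Measure.volume_eq_prod, Measure.prod_apply_symm (measurableSet_dilationPairs hA hB t),
    ← lintegral_indicator_const hB]
  refine lintegral_mono fun b => ?_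
  by_cases hb : b ∈ B
  · obtain ⟨hne, hle⟩ := hBt b hb
    have hpos : 0 < |b - t| := abs_pos.mpr (sub_ne_zero.mpr hne)
    have fibre : (fun κ => (κ, b)) ⁻¹' dilationPairs A B t =
        (· * (b - t)) ⁻¹' ((t + ·) ⁻¹' A) := by
      ext κ; simp [dilationPairs, hb]
    rw [Set.indicator_of_mem hb, fibre, Real.volume_preimage_mul_right (sub_ne_zero.mpr hne),
      measure_preimage_add]
    refine le_mul_of_one_le_left' (ENNReal.one_le_ofReal.mpr ?_)
    rw [abs_inv]
    exact (one_le_inv₀ hpos).mpr hle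
  · simp [hb]

lemma abs_le_of_mem_dilationPairs (hA : ∀ a ∈ A, |a - t| ≤ 1) (hℓ : 0 < ℓ)
    (hB : ∀ b ∈ B, ℓ ≤ |b - t|) {p : ℝ × ℝ} (hp : p ∈ dilationPairs A B t) : |p.1| ≤ 1 / ℓ := by
  have hle := hA _ hp.2
  rw [add_sub_cancel_left, abs_mul] at hle
  rw [le_div_iff₀ hℓ]
  exact (mul_le_mul_of_nonneg_left (hB _ hp.1) (abs_nonneg _)).trans hle

lemma volume_dilationPairs_ne_top (hA : ∀ a ∈ A, |a - t| ≤ 1) (hℓ : 0 < ℓ)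
    (hB : ∀ b ∈ B, ℓ ≤ |b - t|) (hB' : ∀ b ∈ B, |b - t| ≤ 1) :
    volume (dilationPairs A B t) ≠ ⊤ := by
  have hsub : dilationPairs A B t ⊆ Metric.closedBall 0 (1 / ℓ) ×ˢ Metric.closedBall t 1 :=
    fun p hp => ⟨mem_closedBall_zero_iff.mpr (abs_le_of_mem_dilationPairs hA hℓ hB hp),
      hB' _ hp.1⟩
  refine ((measure_mono hsub).trans_lt ?_).ne
  rw [Measure.volume_eq_prod, Measure.prod_prod]
  exact ENNReal.mul_lt_top measure_closedBall_lt_top measure_closedBall_lt_top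

-- Cauchy–Schwarz in `κ`, which ranges over `[-1/ℓ, 1/ℓ]`.
lemma sq_volume_dilationPairs_le (hAm : MeasurableSet A) (hBm : MeasurableSet B)
    (hA : ∀ a ∈ A, |a - t| ≤ 1) (hℓ : 0 < ℓ) (hB : ∀ b ∈ B, ℓ ≤ |b - t|) (δ : ℝ) :
    volume (dilationPairs A B t) ^ 2 ≤ ENNReal.ofReal (2 / ℓ) *
      (ENNReal.ofReal (2 * δ) * volume (dilationPairs A B t) + volume (farTriples A B δ t)) := by
  have hD := measurableSet_dilationPairs hAm hBm t
  set S : ℝ → Set ℝ := fun κ => Prod.mk κ ⁻¹' dilationPairs A B t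
  have hSm : Measurable fun κ => volume (S κ) := measurable_measure_prodMk_left hD
  have hsupp : (fun κ => volume (S κ)).support ⊆ Metric.closedBall 0 (1 / ℓ) := by
    intro κ hκ
    obtain ⟨b, hb⟩ := nonempty_of_measure_ne_zero hκ
    exact mem_closedBall_zero_iff.mpr (abs_le_of_mem_dilationPairs hA hℓ hB hb)
  have vol_D : volume (dilationPairs A B t) = ∫⁻ κ, volume (S κ) := by
    rw [Measure.volume_eq_prod, Measure.prod_apply hD]
  have vol_far : volume (farTriples A B δ t) =
      ∫⁻ κ, volume {p : ℝ × ℝ | p.1 ∈ S κ ∧ p.2 ∈ S κ ∧ δ ≤ |p.1 - p.2|} := by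
    rw [Measure.volume_eq_prod, Measure.prod_apply (measurableSet_farTriples hAm hBm δ t)]
    rfl
  have cauchy_schwarz := sq_lintegral_le_measure_mul (ν := volume) hSm.aemeasurable hsupp
  rw [Real.volume_closedBall, mul_one_div] at cauchy_schwarz
  rw [vol_D, vol_far, ← lintegral_const_mul _ hSm, ← lintegral_add_left (by fun_prop)]
  refine cauchy_schwarz.trans ?_
  gcongr with κ
  exact sq_volume_le_near_add_far (measurable_prodMk_left hD) δ

lemma le_volume_farTriples (hAm : MeasurableSet A) (hBm : MeasurableSet B)
    (hA : ∀ a ∈ A, |a - t| ≤ 1) (hℓ : 0 < ℓ) (hB : ∀ b ∈ B, ℓ ≤ |b - t|)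
    (hB' : ∀ b ∈ B, |b - t| ≤ 1) (hlam : 0 < lam) (vA : ENNReal.ofReal lam ≤ volume A)
    (vB : ENNReal.ofReal lam ≤ volume B) :
    ENNReal.ofReal (lam ^ 4 * ℓ / 4) ≤ volume (farTriples A B (lam ^ 2 * ℓ / 8) t) := by
  set h := volume (dilationPairs A B t)
  set Y := volume (farTriples A B (lam ^ 2 * ℓ / 8) t)
  have hfin : h ≠ ⊤ := volume_dilationPairs_ne_top hA hℓ hB hB'
  have lam_sq_le : ENNReal.ofReal (lam ^ 2) ≤ h := by
    rw [sq, ENNReal.ofReal_mul hlam.le]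
    refine (mul_le_mul' vA vB).trans (mul_volume_le_volume_dilationPairs hAm hBm fun b hb => ?_)
    exact ⟨sub_ne_zero.mp (abs_pos.mp (hℓ.trans_le (hB b hb))), hB' b hb⟩
  -- `δ = lam² ℓ / 8` is chosen so that the near pairs account for at most half of `h²`.
  have near_le : ENNReal.ofReal (2 / ℓ) * (ENNReal.ofReal (2 * (lam ^ 2 * ℓ / 8)) * h) ≤
      h ^ 2 / 2 := by
    rw [← mul_assoc, ← ENNReal.ofReal_mul (by positivity), sq h, ENNReal.mul_div_right_comm]
    gcongr
    rw [show 2 / ℓ * (2 * (lam ^ 2 * ℓ / 8)) = lam ^ 2 / 2 by field_simp; norm_num,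
      ENNReal.ofReal_div_of_pos two_pos, ENNReal.ofReal_ofNat]
    exact ENNReal.div_le_div_right lam_sq_le 2
  have far_ge : h ^ 2 / 2 ≤ ENNReal.ofReal (2 / ℓ) * Y := by
    have split := sq_volume_dilationPairs_le hAm hBm hA hℓ hB (lam ^ 2 * ℓ / 8)
    rw [mul_add] at split
    refine ENNReal.le_of_add_le_add_left (a := h ^ 2 / 2) (by finiteness) ?_
    rw [ENNReal.add_halves]
    exact split.trans (by gcongr)
  calc ENNReal.ofReal (lam ^ 4 * ℓ / 4)
      = ENNReal.ofReal (ℓ / 2) * (ENNReal.ofReal (lam ^ 2) ^ 2 / 2) := by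
        rw [← ENNReal.ofReal_pow (by positivity), ← ENNReal.ofReal_ofNat 2,
          ← ENNReal.ofReal_div_of_pos two_pos, ← ENNReal.ofReal_mul (by positivity)]
        congr 1; ring
    _ ≤ ENNReal.ofReal (ℓ / 2) * (h ^ 2 / 2) := by gcongr
    _ ≤ ENNReal.ofReal (ℓ / 2) * (ENNReal.ofReal (2 / ℓ) * Y) := by gcongr
    _ = Y := by
        rw [← mul_assoc, ← ENNReal.ofReal_mul (by positivity), div_mul_div_cancel₀ two_ne_zero,
          div_self hℓ.ne', ENNReal.ofReal_one, one_mul]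

lemma le_volume_farQuadruples (hAm : MeasurableSet A) (hBm : MeasurableSet B)
    (hTm : MeasurableSet T) (hA : A ⊆ Set.Ico 0 1) (hB : B ⊆ Set.Ico 0 1) (hT : T ⊆ Set.Ico 0 1)
    (hℓ : 0 < ℓ) (hBT : ∀ b ∈ B, ∀ t ∈ T, ℓ ≤ |b - t|) (hlam : 0 < lam)
    (vA : ENNReal.ofReal lam ≤ volume A) (vB : ENNReal.ofReal lam ≤ volume B)
    (vT : ENNReal.ofReal lam ≤ volume T) :
    ENNReal.ofReal (lam ^ 5 * ℓ / 4) ≤ volume (farQuadruples A B T (lam ^ 2 * ℓ / 8)) := by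
  have dist_le {x y : ℝ} (hx : x ∈ Set.Ico (0 : ℝ) 1) (hy : y ∈ Set.Ico (0 : ℝ) 1) :
      |x - y| ≤ 1 :=
    (Real.dist_le_of_mem_Icc_01 (Set.Ico_subset_Icc_self hx) (Set.Ico_subset_Icc_self hy))
  calc ENNReal.ofReal (lam ^ 5 * ℓ / 4)
      = ENNReal.ofReal (lam ^ 4 * ℓ / 4) * ENNReal.ofReal lam := by
        rw [← ENNReal.ofReal_mul (by positivity)]; congr 1; ring
    _ ≤ ENNReal.ofReal (lam ^ 4 * ℓ / 4) * volume T := by gcongr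
    _ = ∫⁻ t, T.indicator (fun _ => ENNReal.ofReal (lam ^ 4 * ℓ / 4)) t :=
        (lintegral_indicator_const hTm _).symm
    _ ≤ ∫⁻ t, volume (Prod.mk t ⁻¹' farQuadruples A B T (lam ^ 2 * ℓ / 8)) := by
        refine lintegral_mono fun t => Set.indicator_apply_le' (fun ht => ?_) fun _ => zero_le
        refine (le_volume_farTriples hAm hBm (fun a ha => dist_le (hA ha) (hT ht)) hℓ
          (fun b hb => hBT b hb t ht) (fun b hb => dist_le (hB hb) (hT ht)) hlam vA vB).trans ?_
        exact measure_mono fun q hq => ⟨ht, hq⟩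
    _ = _ := (Measure.prod_apply (measurableSet_farQuadruples hAm hBm hTm _)).symm

end Energy

section Slices

variable {n : ℕ} {E : Set (Euc n × ℝ)}

/-- The times at which the line `t ↦ (z + t • v, t)`, encoded as the pair `(v, z)`, is in `E`. -/
def hitTimes (E : Set (Euc n × ℝ)) (l : Euc n × Euc n) : Set ℝ :=
  {t | (l.2 + t • l.1, t) ∈ E}

/-- The volume of the horizontal slice of `E` at height `t`. -/
def sliceVolume (E : Set (Euc n × ℝ)) (t : ℝ) : ℝ≥0∞ :=
  volume {w | (w, t) ∈ E}

lemma measurableSet_mem_hitTimes (hE : MeasurableSet E) :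
    MeasurableSet {p : (Euc n × Euc n) × ℝ | p.2 ∈ hitTimes E p.1} :=
  (by fun_prop :
    Measurable fun p : (Euc n × Euc n) × ℝ => (p.1.2 + p.2 • p.1.1, p.2)) hE

lemma measurableSet_hitTimes (hE : MeasurableSet E) (l : Euc n × Euc n) :
    MeasurableSet (hitTimes E l) :=
  measurable_prodMk_left (measurableSet_mem_hitTimes hE)

lemma measurable_sliceVolume (hE : MeasurableSet E) : Measurable (sliceVolume E) :=
  measurable_measure_prodMk_right hE

lemma lintegral_sliceVolume (hE : MeasurableSet E) : ∫⁻ t, sliceVolume E t = volume E := by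
  rw [Measure.volume_eq_prod, Measure.prod_apply_symm hE]
  rfl

lemma lintegral_rpow_le_rpow_lintegral {α : Type*} [MeasurableSpace α] {ν : Measure α}
    (hν : ν Set.univ ≤ 1) {f : α → ℝ≥0∞} (hf : AEMeasurable f ν) {s : ℝ} (hs : 0 < s)
    (hs' : s ≤ 1) : ∫⁻ x, f x ^ s ∂ν ≤ (∫⁻ x, f x ∂ν) ^ s := by
  have norm_le := eLpNorm'_le_eLpNorm'_mul_rpow_measure_univ hs hs' hf.aestronglyMeasurable
  simp only [eLpNorm', enorm_eq_self, ENNReal.rpow_one, div_one] at norm_le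
  rw [← ENNReal.rpow_le_rpow_iff (one_div_pos.mpr hs), ← ENNReal.rpow_mul,
    mul_one_div_cancel hs.ne', ENNReal.rpow_one]
  refine norm_le.trans (mul_le_of_le_one_right' (ENNReal.rpow_le_one hν ?_))
  exact sub_nonneg.mpr ((one_le_div₀ hs).mpr hs')

lemma setLIntegral_sliceVolume_rpow_le (hE : MeasurableSet E) {I : Set ℝ}
    (hI : I ⊆ Set.Ico 0 1) {s : ℝ} (hs : 0 < s) (hs' : s ≤ 1) :
    ∫⁻ t in I, sliceVolume E t ^ s ≤ volume E ^ s := by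
  have hI1 : volume.restrict I Set.univ ≤ 1 := by
    rw [Measure.restrict_apply_univ]
    exact (measure_mono hI).trans (by simp)
  refine (lintegral_rpow_le_rpow_lintegral hI1 (measurable_sliceVolume hE).aemeasurable
    hs hs').trans ?_
  rw [← lintegral_sliceVolume hE]
  gcongr
  exact Measure.restrict_le_self

end Slices

section SqrtKernel

/-- The singular kernel `|x|^(-1/2)`, cut off to `|x| < 1`. -/
def sqrtKernel : ℝ → ℝ≥0∞ :=
  (Metric.ball 0 1).indicator fun x => ENNReal.ofReal (|x| ^ (-(1 / 2) : ℝ))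

@[fun_prop]
lemma measurable_sqrtKernel : Measurable sqrtKernel :=
  Measurable.indicator (by fun_prop) measurableSet_ball

lemma lintegral_sqrtKernel_ne_top : ∫⁻ x, sqrtKernel x ≠ ⊤ := by
  have integrable : IntegrableOn (fun x : ℝ => |x| ^ (-(1 / 2) : ℝ)) (Metric.ball 0 1) := by
    refine integrableOn_ball_of_norm_le_rpow (C := 1) (α := 1 / 2) (by simp) (by norm_num)
      (Filter.Eventually.of_forall fun x => ?_) (by fun_prop : Measurable _).aestronglyMeasurable
    rw [one_mul, Real.norm_of_nonneg (by positivity), Real.norm_eq_abs]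
  rw [sqrtKernel, lintegral_indicator measurableSet_ball]
  exact ((hasFiniteIntegral_iff_ofReal
    (Filter.Eventually.of_forall fun x => by positivity)).mp integrable.2).ne

end SqrtKernel

section Trilinear

/-- Three sets of times in `[0, 1)` at mutual distance at least `ℓ`. -/
structure SeparatedTimes (ℓ : ℝ) (A B T : Set ℝ) : Prop where
  measurableSet_fst : MeasurableSet A
  measurableSet_snd : MeasurableSet B
  measurableSet_trd : MeasurableSet T
  fst_subset : A ⊆ Set.Ico 0 1
  snd_subset : B ⊆ Set.Ico 0 1
  trd_subset : T ⊆ Set.Ico 0 1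
  pos : 0 < ℓ
  le_fst_snd : ∀ a ∈ A, ∀ b ∈ B, ℓ ≤ |a - b|
  le_fst_trd : ∀ a ∈ A, ∀ t ∈ T, ℓ ≤ |a - t|
  le_snd_trd : ∀ b ∈ B, ∀ t ∈ T, ℓ ≤ |b - t|

variable {n : ℕ} {A B T : Set ℝ} {δ ℓ lam t κ b b' : ℝ} {E : Set (Euc n × ℝ)}
  {G : Set (Euc n × Euc n)} {m : ℝ≥0∞}

lemma ne_of_le_abs_sub {x y ℓ : ℝ} (hℓ : 0 < ℓ) (h : ℓ ≤ |x - y|) : x ≠ y :=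
  sub_ne_zero.mp (abs_pos.mp (hℓ.trans_le h))

lemma SeparatedTimes.homotheticTimes (h : SeparatedTimes ℓ A B T) (hδ : 0 < δ)
    (hp : (t, κ, b, b') ∈ farQuadruples A B T δ) :
    HomotheticTimes (t - b') (b - b') κ (t + κ * (b - t) - b') (t + κ * (b' - t) - b') := by
  obtain ⟨ht, ⟨hb, ha⟩, ⟨hb', -⟩, hbb'⟩ := hp
  have b_ne_t := ne_of_le_abs_sub h.pos (h.le_snd_trd b hb t ht)
  have b'_ne_t := ne_of_le_abs_sub h.pos (h.le_snd_trd b' hb' t ht)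
  have a_ne_t := ne_of_le_abs_sub h.pos (h.le_fst_trd _ ha t ht)
  have a_ne_b := ne_of_le_abs_sub h.pos (h.le_fst_snd _ ha b hb)
  have a_ne_b' := ne_of_le_abs_sub h.pos (h.le_fst_snd _ ha b' hb')
  refine ⟨sub_ne_zero.mpr b'_ne_t.symm, sub_ne_zero.mpr (ne_of_le_abs_sub hδ hbb'),
    sub_ne_zero.mpr a_ne_b', fun e => b_ne_t (by linarith), fun e => a_ne_t ?_,
    fun e => a_ne_b ?_, by ring, by ring⟩
  · simp [e]
  · simp [e]

lemma SeparatedTimes.jacobian_ge (h : SeparatedTimes ℓ A B T)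
    (hp : (t, κ, b, b') ∈ farQuadruples A B T δ) (n : ℕ) :
    (|b - b'| * ℓ ^ 3) ^ n ≤ (|b - b'| * |t + κ * (b - t) - b'| * |t - (t + κ * (b - t))| *
      |t + κ * (b' - t) - b'|) ^ n := by
  obtain ⟨ht, ⟨-, ha⟩, ⟨hb', ha'⟩, -⟩ := hp
  have hℓ := h.pos
  have ab' := h.le_fst_snd _ ha b' hb'
  have a'b' := h.le_fst_snd _ ha' b' hb'
  have ta := abs_sub_comm t _ ▸ h.le_fst_trd _ ha t ht
  rw [pow_succ, sq, ← mul_assoc, ← mul_assoc]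
  gcongr

lemma le_ofReal_rpow_mul_of_ofReal_mul_pow_four_le {V R : ℝ≥0∞} {x : ℝ} (hx : 0 < x)
    (h : ENNReal.ofReal x * V ^ 4 ≤ R) :
    V ≤ ENNReal.ofReal (x ^ (-(1 / 4) : ℝ)) * R ^ (1 / 4 : ℝ) := by
  have root : (V ^ 4) ^ (1 / 4 : ℝ) = V := by
    rw [← ENNReal.rpow_natCast, ← ENNReal.rpow_mul]; norm_num
  have cancel : ENNReal.ofReal (x ^ (-(1 / 4) : ℝ)) * ENNReal.ofReal (x ^ (1 / 4 : ℝ)) = 1 := by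
    rw [← ENNReal.ofReal_mul (by positivity), ← Real.rpow_add hx]; norm_num
  calc V = ENNReal.ofReal (x ^ (-(1 / 4) : ℝ)) * (ENNReal.ofReal x * V ^ 4) ^ (1 / 4 : ℝ) := by
        rw [ENNReal.mul_rpow_of_nonneg _ _ (by norm_num), root, ENNReal.ofReal_rpow_of_pos hx,
          ← mul_assoc, cancel, one_mul]
    _ ≤ _ := by gcongr

-- Of the factor `d^(-n/4)`, the part `d^(-1/2)` is kept: it is integrable in the separation `d`.
lemma rpow_neg_quarter_le {d : ℝ} (hn : 2 ≤ n) (hδ : 0 < δ) (hℓ : 0 < ℓ) (hd : δ ≤ d) :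
    ((d * ℓ ^ 3) ^ n) ^ (-(1 / 4) : ℝ) ≤
      δ ^ (1 / 2 - n / 4 : ℝ) * ℓ ^ (-(3 * n / 4) : ℝ) * d ^ (-(1 / 2) : ℝ) := by
  have hd0 : 0 < d := hδ.trans_le hd
  have exponent_nonpos : (1 / 2 - n / 4 : ℝ) ≤ 0 := by
    have : (2 : ℝ) ≤ n := by exact_mod_cast hn
    linarith
  calc ((d * ℓ ^ 3) ^ n) ^ (-(1 / 4) : ℝ)
      = d ^ (1 / 2 - n / 4 : ℝ) * ℓ ^ (-(3 * n / 4) : ℝ) * d ^ (-(1 / 2) : ℝ) := by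
        rw [← Real.rpow_natCast, ← Real.rpow_mul (by positivity), mul_right_comm,
          ← Real.rpow_add hd0, Real.mul_rpow hd0.le (by positivity), ← Real.rpow_natCast,
          ← Real.rpow_mul hℓ.le]
        congr 2 <;> push_cast <;> ring
    _ ≤ _ := by
        gcongr ?_ * _ * _
        exact Real.rpow_le_rpow_of_nonpos hδ hd exponent_nonpos

lemma volume_le_of_mem_farQuadruples (hn : 2 ≤ n) (hG : MeasurableSet G) (hE : MeasurableSet E)
    (hm : ∀ v, volume {z | (v, z) ∈ G} ≤ m) (h : SeparatedTimes ℓ A B T) (hδ : 0 < δ)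
    (hp : (t, κ, b, b') ∈ farQuadruples A B T δ)
    (hit : ∀ l ∈ G, (t, κ, b, b') ∈
      farQuadruples (hitTimes E l) (hitTimes E l) (hitTimes E l) δ) :
    volume G ≤ ENNReal.ofReal (δ ^ (1 / 2 - n / 4 : ℝ) * ℓ ^ (-(3 * n / 4) : ℝ)) *
      m ^ (1 / 4 : ℝ) * (sqrtKernel (b - b') * (sliceVolume E t ^ (1 / 4 : ℝ) *
        (sliceVolume E b' ^ (1 / 2 : ℝ) * sliceVolume E b ^ (1 / 4 : ℝ)) *
        (sliceVolume E (t + κ * (b - t)) ^ (1 / 2 : ℝ) *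
          sliceVolume E (t + κ * (b' - t)) ^ (1 / 4 : ℝ)))) := by
  have hom := h.homotheticTimes hδ hp
  have jacobian_ge := h.jacobian_ge hp n
  obtain ⟨-, ⟨hb, -⟩, ⟨hb', -⟩, hbb'⟩ := hp
  have slices := volume_pow_four_le_of_five_slices hG hom (E := fun s => {w | (w, s) ∈ E})
    (measurable_prodMk_right hE) (measurable_prodMk_right hE) (fun s hs l hl => by
      obtain ⟨hit_t, ⟨hit_b, hit_a⟩, ⟨hit_b', hit_a'⟩, -⟩ := hit l hl
      rcases hs with rfl | rfl | rfl | rfl | rfl <;> assumption) hm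
  have hd : 0 < |b - b'| := hδ.trans_le hbb'
  have kernel_eq : sqrtKernel (b - b') = ENNReal.ofReal (|b - b'| ^ (-(1 / 2) : ℝ)) := by
    obtain ⟨hb0, hb1⟩ := h.snd_subset hb
    obtain ⟨hb0', hb1'⟩ := h.snd_subset hb'
    exact Set.indicator_of_mem
      (mem_ball_zero_iff.mpr (abs_lt.mpr ⟨by linarith, by linarith⟩)) _
  have sq_rpow (x : ℝ≥0∞) : (x ^ 2) ^ (1 / 4 : ℝ) = x ^ (1 / 2 : ℝ) := by
    rw [← ENNReal.rpow_natCast, ← ENNReal.rpow_mul]; norm_num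
  have hpos : 0 < (|b - b'| * ℓ ^ 3) ^ n := by have := h.pos; positivity
  refine (le_ofReal_rpow_mul_of_ofReal_mul_pow_four_le hpos
    ((mul_le_mul_left (ENNReal.ofReal_le_ofReal jacobian_ge) _).trans slices)).trans ?_
  simp only [ENNReal.mul_rpow_of_nonneg _ _ (by norm_num : (0 : ℝ) ≤ 1 / 4), sq_rpow, kernel_eq]
  refine (mul_le_mul_left (ENNReal.ofReal_le_ofReal
    (rpow_neg_quarter_le hn hδ h.pos hbb')) _).trans_eq ?_
  rw [ENNReal.ofReal_mul (by have := h.pos; positivity)]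
  simp only [sliceVolume]
  ring

lemma lintegral_comp_homothety_le (g : ℝ → ℝ≥0∞) (hℓ : 0 < ℓ) (hb : ℓ ≤ |b - t|) :
    ∫⁻ κ, g (t + κ * (b - t)) ≤ ENNReal.ofReal (1 / ℓ) * ∫⁻ x, g x := by
  have change_var := lintegral_comp_add_smul volume g t
    (sub_ne_zero.mpr (ne_of_le_abs_sub hℓ hb))
  simp only [smul_eq_mul, mul_comm (b - t), Module.finrank_self, pow_one] at change_var
  rw [change_var, abs_inv, ← one_div]
  gcongr

lemma setLIntegral_kernel_mul_add_le {k g : ℝ → ℝ≥0∞} (hk : Measurable k) (hg : Measurable g) :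
    ∫⁻ q in B ×ˢ B, k (q.1 - q.2) * (g q.1 + g q.2) ≤
      2 * (∫⁻ x, k x) * ∫⁻ b in B, g b := by
  have inner_le (k' : ℝ → ℝ → ℝ≥0∞) (hk' : ∀ b, Measurable (k' b))
      (hk'_int : ∀ b, ∫⁻ b', k' b b' = ∫⁻ x, k x) :
      ∫⁻ b in B, ∫⁻ b' in B, k' b b' * g b ≤ (∫⁻ x, k x) * ∫⁻ b in B, g b := by
    rw [← lintegral_const_mul _ hg]
    refine lintegral_mono fun b => ?_
    rw [lintegral_mul_const _ (hk' b), ← hk'_int b]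
    gcongr
    exact Measure.restrict_le_self
  calc ∫⁻ q in B ×ˢ B, k (q.1 - q.2) * (g q.1 + g q.2)
      = (∫⁻ q in B ×ˢ B, k (q.1 - q.2) * g q.1) + ∫⁻ q in B ×ˢ B, k (q.1 - q.2) * g q.2 := by
        rw [← lintegral_add_left (by fun_prop)]
        simp only [mul_add]
    _ = (∫⁻ b in B, ∫⁻ b' in B, k (b - b') * g b) +
          ∫⁻ b in B, ∫⁻ b' in B, k (b' - b) * g b := by
        rw [Measure.volume_eq_prod, ← Measure.prod_restrict, lintegral_prod _ (by fun_prop),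
          lintegral_prod_symm' _ (by fun_prop)]
    _ ≤ (∫⁻ x, k x) * (∫⁻ b in B, g b) + (∫⁻ x, k x) * ∫⁻ b in B, g b :=
        add_le_add (inner_le _ (fun b => by fun_prop) (lintegral_sub_left_eq_self k))
          (inner_le _ (fun b => by fun_prop) (lintegral_sub_right_eq_self k))
    _ = _ := by ring

lemma lintegral_homotheties_le (hℓ : 0 < ℓ) (hB : ∀ b ∈ B, ℓ ≤ |b - t|) (hBm : MeasurableSet B)
    {k g₁ g₂ : ℝ → ℝ≥0∞} (hk : Measurable k) (hg₁ : Measurable g₁) (hg₂ : Measurable g₂) :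
    ∫⁻ q in (Set.univ : Set ℝ) ×ˢ B ×ˢ B, k (q.2.1 - q.2.2) * (g₂ q.2.1 + g₂ q.2.2) *
        (g₁ (t + q.1 * (q.2.1 - t)) + g₁ (t + q.1 * (q.2.2 - t))) ≤
      4 * ENNReal.ofReal (1 / ℓ) * (∫⁻ x, k x) * ((∫⁻ b in B, g₂ b) * ∫⁻ a, g₁ a) := by
  rw [Measure.volume_eq_prod, ← Measure.prod_restrict, lintegral_prod_symm' _ (by fun_prop),
    Measure.restrict_univ]
  set R := ENNReal.ofReal (1 / ℓ)
  calc _ ≤ ∫⁻ q in B ×ˢ B, k (q.1 - q.2) * (g₂ q.1 + g₂ q.2) * (2 * R * ∫⁻ a, g₁ a) := by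
        refine setLIntegral_mono' (hBm.prod hBm) fun q hq => ?_
        refine (lintegral_const_mul (k (q.1 - q.2) * (g₂ q.1 + g₂ q.2)) (by fun_prop :
          Measurable fun κ => g₁ (t + κ * (q.1 - t)) + g₁ (t + κ * (q.2 - t)))).trans_le ?_
        rw [lintegral_add_left (by fun_prop), mul_assoc 2, two_mul]
        gcongr
        · exact lintegral_comp_homothety_le g₁ hℓ (hB _ hq.1)
        · exact lintegral_comp_homothety_le g₁ hℓ (hB _ hq.2)
    _ = (∫⁻ q in B ×ˢ B, k (q.1 - q.2) * (g₂ q.1 + g₂ q.2)) * (2 * R * ∫⁻ a, g₁ a) :=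
        lintegral_mul_const _ (by fun_prop)
    _ ≤ (2 * (∫⁻ x, k x) * ∫⁻ b in B, g₂ b) * (2 * R * ∫⁻ a, g₁ a) := by
        gcongr
        exact setLIntegral_kernel_mul_add_le hk hg₂
    _ = _ := by ring

lemma setLIntegral_farQuadruples_le (h : SeparatedTimes ℓ A B T) (δ : ℝ)
    {k g₁ g₂ g₃ : ℝ → ℝ≥0∞} (hk : Measurable k) (hg₁ : Measurable g₁) (hg₂ : Measurable g₂)
    (hg₃ : Measurable g₃) :
    ∫⁻ p in farQuadruples A B T δ, g₃ p.1 * (k (p.2.2.1 - p.2.2.2) * (g₂ p.2.2.1 + g₂ p.2.2.2) *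
        (g₁ (p.1 + p.2.1 * (p.2.2.1 - p.1)) + g₁ (p.1 + p.2.1 * (p.2.2.2 - p.1)))) ≤
      4 * ENNReal.ofReal (1 / ℓ) * (∫⁻ x, k x) *
        ((∫⁻ t in T, g₃ t) * ((∫⁻ b in B, g₂ b) * ∫⁻ a in A, g₁ a)) := by
  have hA := h.measurableSet_fst
  have hB := h.measurableSet_snd
  have hg₁A : Measurable (A.indicator g₁) := hg₁.indicator hA
  set Φ : ℝ × ℝ × ℝ × ℝ → ℝ≥0∞ := fun p =>
    k (p.2.2.1 - p.2.2.2) * (g₂ p.2.2.1 + g₂ p.2.2.2) *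
      (A.indicator g₁ (p.1 + p.2.1 * (p.2.2.1 - p.1)) +
        A.indicator g₁ (p.1 + p.2.1 * (p.2.2.2 - p.1)))
  have hΦ : Measurable Φ := by fun_prop
  calc _ = ∫⁻ p in farQuadruples A B T δ, g₃ p.1 * Φ p := by
        refine setLIntegral_congr_fun
          (measurableSet_farQuadruples hA hB h.measurableSet_trd δ) fun p hp => ?_
        simp only [Φ, Set.indicator_of_mem hp.2.1.2, Set.indicator_of_mem hp.2.2.1.2]
    _ ≤ ∫⁻ p in T ×ˢ Set.univ ×ˢ B ×ˢ B, g₃ p.1 * Φ p :=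
        lintegral_mono_set fun p hp => ⟨hp.1, trivial, hp.2.1.1, hp.2.2.1.1⟩
    _ = ∫⁻ t in T, g₃ t * ∫⁻ q in Set.univ ×ˢ B ×ˢ B, Φ (t, q) := by
        rw [Measure.volume_eq_prod, setLIntegral_prod _ (by fun_prop)]
        exact lintegral_congr fun t =>
          lintegral_const_mul (g₃ t) (by fun_prop : Measurable fun q => Φ (t, q))
    _ ≤ ∫⁻ t in T, g₃ t * (4 * ENNReal.ofReal (1 / ℓ) * (∫⁻ x, k x) *
          ((∫⁻ b in B, g₂ b) * ∫⁻ a in A, g₁ a)) := by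
        refine setLIntegral_mono' h.measurableSet_trd fun t ht => ?_
        rw [← lintegral_indicator hA]
        gcongr
        exact lintegral_homotheties_le h.pos (fun b hb => h.le_snd_trd b hb t ht) hB hk hg₁A hg₂
    _ = _ := by rw [lintegral_mul_const _ hg₃]; ring

lemma rpow_half_mul_rpow_quarter_le (x y : ℝ≥0∞) :
    x ^ (1 / 2 : ℝ) * y ^ (1 / 4 : ℝ) ≤ x ^ (3 / 4 : ℝ) + y ^ (3 / 4 : ℝ) := by
  have rpow_add (z : ℝ≥0∞) : z ^ (1 / 2 : ℝ) * z ^ (1 / 4 : ℝ) = z ^ (3 / 4 : ℝ) := by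
    rw [← ENNReal.rpow_add_of_nonneg _ _ (by norm_num) (by norm_num)]; norm_num
  rcases le_total x y with h | h
  · exact (by gcongr : _ ≤ y ^ (1 / 2 : ℝ) * y ^ (1 / 4 : ℝ)).trans
      ((rpow_add y).trans_le le_add_self)
  · exact (by gcongr : _ ≤ x ^ (1 / 2 : ℝ) * x ^ (1 / 4 : ℝ)).trans
      ((rpow_add x).trans_le le_self_add)

lemma farQuadruples_inter (A A' B B' T T' : Set ℝ) (δ : ℝ) :
    farQuadruples (A ∩ A') (B ∩ B') (T ∩ T') δ =
      farQuadruples A B T δ ∩ farQuadruples A' B' T' δ := by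
  ext p
  simp only [farQuadruples, farTriples, dilationPairs, Set.mem_ofPred_eq, Set.mem_inter_iff]
  tauto

lemma measurableSet_mem_farQuadruples_hitTimes (hE : MeasurableSet E) (δ : ℝ) :
    MeasurableSet {x : (Euc n × Euc n) × ℝ × ℝ × ℝ × ℝ |
      x.2 ∈ farQuadruples (hitTimes E x.1) (hitTimes E x.1) (hitTimes E x.1) δ} := by
  have hit {f : (Euc n × Euc n) × ℝ × ℝ × ℝ × ℝ → ℝ} (hf : Measurable f) :
      MeasurableSet {x | f x ∈ hitTimes E x.1} :=
    (measurable_fst.prodMk hf) (measurableSet_mem_hitTimes hE)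
  exact (hit (by fun_prop)).inter (((hit (by fun_prop)).inter (hit (by fun_prop))).inter
    (((hit (by fun_prop)).inter (hit (by fun_prop))).inter (measurableSet_le measurable_const
      (by fun_prop : Measurable fun x : (Euc n × Euc n) × ℝ × ℝ × ℝ × ℝ =>
        |x.2.2.2.1 - x.2.2.2.2|))))

lemma setLIntegral_volume_farQuadruples_hitTimes_le (hn : 2 ≤ n) (hG : MeasurableSet G)
    (hE : MeasurableSet E) (hm : ∀ v, volume {z | (v, z) ∈ G} ≤ m) (h : SeparatedTimes ℓ A B T)
    (hδ : 0 < δ) :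
    ∫⁻ p in farQuadruples A B T δ, volume {l | l ∈ G ∧
        p ∈ farQuadruples (hitTimes E l) (hitTimes E l) (hitTimes E l) δ} ≤
      ENNReal.ofReal (δ ^ (1 / 2 - n / 4 : ℝ) * ℓ ^ (-(3 * n / 4) : ℝ)) *
        (4 * ENNReal.ofReal (1 / ℓ) * ∫⁻ x, sqrtKernel x) * m ^ (1 / 4 : ℝ) *
          volume E ^ (7 / 4 : ℝ) := by
  set c := ENNReal.ofReal (δ ^ (1 / 2 - n / 4 : ℝ) * ℓ ^ (-(3 * n / 4) : ℝ))
  set σ := sliceVolume E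
  have hσ : Measurable σ := measurable_sliceVolume hE
  have power_seven_quarters : volume E ^ (1 / 4 : ℝ) * (volume E ^ (3 / 4 : ℝ) *
      volume E ^ (3 / 4 : ℝ)) = volume E ^ (7 / 4 : ℝ) := by
    rw [← ENNReal.rpow_add_of_nonneg _ _ (by norm_num) (by norm_num),
      ← ENNReal.rpow_add_of_nonneg _ _ (by norm_num) (by norm_num)]
    norm_num
  calc _ ≤ ∫⁻ p in farQuadruples A B T δ, c * m ^ (1 / 4 : ℝ) * (σ p.1 ^ (1 / 4 : ℝ) *
          (sqrtKernel (p.2.2.1 - p.2.2.2) * (σ p.2.2.1 ^ (3 / 4 : ℝ) + σ p.2.2.2 ^ (3 / 4 : ℝ)) *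
            (σ (p.1 + p.2.1 * (p.2.2.1 - p.1)) ^ (3 / 4 : ℝ) +
              σ (p.1 + p.2.1 * (p.2.2.2 - p.1)) ^ (3 / 4 : ℝ)))) := by
        refine setLIntegral_mono' (measurableSet_farQuadruples h.measurableSet_fst
          h.measurableSet_snd h.measurableSet_trd δ) fun ⟨t, κ, b, b'⟩ hp => ?_
        have hfibre (v : Euc n) : volume {z | (v, z) ∈ {l | l ∈ G ∧ (t, κ, b, b') ∈
            farQuadruples (hitTimes E l) (hitTimes E l) (hitTimes E l) δ}} ≤ m :=
          (measure_mono fun z hz => hz.1).trans (hm v)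
        refine (volume_le_of_mem_farQuadruples hn (hG.inter (measurable_prodMk_right
          (measurableSet_mem_farQuadruples_hitTimes hE δ))) hE hfibre h hδ hp
            fun l hl => hl.2).trans ?_
        rw [add_comm (σ b ^ _)]
        refine mul_le_mul_right ((mul_le_mul_right (mul_le_mul' (mul_le_mul_right
          (rpow_half_mul_rpow_quarter_le _ _) _) (rpow_half_mul_rpow_quarter_le _ _)) _).trans_eq
            ?_) _
        ring
    _ ≤ c * m ^ (1 / 4 : ℝ) * (4 * ENNReal.ofReal (1 / ℓ) * (∫⁻ x, sqrtKernel x) *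
          (volume E ^ (1 / 4 : ℝ) * (volume E ^ (3 / 4 : ℝ) * volume E ^ (3 / 4 : ℝ)))) := by
        rw [lintegral_const_mul _ (by fun_prop)]
        gcongr
        refine (setLIntegral_farQuadruples_le h δ measurable_sqrtKernel (hσ.pow_const _)
          (hσ.pow_const _) (hσ.pow_const _)).trans ?_
        gcongr
        · exact setLIntegral_sliceVolume_rpow_le hE h.trd_subset (by norm_num) (by norm_num)
        · exact setLIntegral_sliceVolume_rpow_le hE h.snd_subset (by norm_num) (by norm_num)
        · exact setLIntegral_sliceVolume_rpow_le hE h.fst_subset (by norm_num) (by norm_num)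
    _ = _ := by rw [power_seven_quarters]; ring

lemma ofReal_mul_volume_le_setLIntegral (hG : MeasurableSet G) (hE : MeasurableSet E)
    (h : SeparatedTimes ℓ A B T) (hlam : 0 < lam)
    (hA : ∀ l ∈ G, ENNReal.ofReal lam ≤ volume (A ∩ hitTimes E l))
    (hB : ∀ l ∈ G, ENNReal.ofReal lam ≤ volume (B ∩ hitTimes E l))
    (hT : ∀ l ∈ G, ENNReal.ofReal lam ≤ volume (T ∩ hitTimes E l)) :
    ENNReal.ofReal (lam ^ 5 * ℓ / 4) * volume G ≤
      ∫⁻ p in farQuadruples A B T (lam ^ 2 * ℓ / 8), volume {l | l ∈ G ∧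
        p ∈ farQuadruples (hitTimes E l) (hitTimes E l) (hitTimes E l) (lam ^ 2 * ℓ / 8)} := by
  set δ := lam ^ 2 * ℓ / 8
  have hQ := measurableSet_farQuadruples h.measurableSet_fst h.measurableSet_snd
    h.measurableSet_trd δ
  set S : Set ((Euc n × Euc n) × ℝ × ℝ × ℝ × ℝ) := {x | x.1 ∈ G ∧ x.2 ∈ farQuadruples A B T δ ∧
    x.2 ∈ farQuadruples (hitTimes E x.1) (hitTimes E x.1) (hitTimes E x.1) δ}
  have hS : MeasurableSet S := (measurable_fst hG).inter ((measurable_snd hQ).inter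
    (measurableSet_mem_farQuadruples_hitTimes hE δ))
  calc ENNReal.ofReal (lam ^ 5 * ℓ / 4) * volume G
      = ∫⁻ l, G.indicator (fun _ => ENNReal.ofReal (lam ^ 5 * ℓ / 4)) l :=
        (lintegral_indicator_const hG _).symm
    _ ≤ ∫⁻ l, volume (Prod.mk l ⁻¹' S) := by
        refine lintegral_mono fun l => Set.indicator_apply_le' (fun hl => ?_) fun _ => zero_le
        have hτ := measurableSet_hitTimes hE l
        refine (le_volume_farQuadruples (h.measurableSet_fst.inter hτ)
          (h.measurableSet_snd.inter hτ) (h.measurableSet_trd.inter hτ)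
          (Set.inter_subset_left.trans h.fst_subset) (Set.inter_subset_left.trans h.snd_subset)
          (Set.inter_subset_left.trans h.trd_subset) h.pos
          (fun b hb t ht => h.le_snd_trd b hb.1 t ht.1) hlam (hA l hl) (hB l hl)
          (hT l hl)).trans ?_
        rw [farQuadruples_inter]
        exact measure_mono fun p hp => ⟨hl, hp⟩
    _ = ∫⁻ p, volume ((·, p) ⁻¹' S) := by
        rw [← Measure.prod_apply hS, ← Measure.prod_apply_symm hS]
    _ ≤ _ := by
        rw [← lintegral_indicator hQ]
        refine lintegral_mono fun p => ?_
        by_cases hp : p ∈ farQuadruples A B T δ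
        · rw [Set.indicator_of_mem hp]
          exact measure_mono fun l hl => ⟨hl.1, hl.2.2⟩
        · simp [S, hp]

lemma exists_volume_le_of_separatedTimes (hn : 2 ≤ n) (hℓ : 0 < ℓ) : ∃ K : ℝ, 0 < K ∧
    ∀ {A B T : Set ℝ} {E : Set (Euc n × ℝ)} {G : Set (Euc n × Euc n)} {m : ℝ≥0∞} {lam : ℝ},
      SeparatedTimes ℓ A B T → MeasurableSet E → MeasurableSet G → 0 < lam →
      (∀ v, volume {z | (v, z) ∈ G} ≤ m) →
      (∀ l ∈ G, ENNReal.ofReal lam ≤ volume (A ∩ hitTimes E l)) →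
      (∀ l ∈ G, ENNReal.ofReal lam ≤ volume (B ∩ hitTimes E l)) →
      (∀ l ∈ G, ENNReal.ofReal lam ≤ volume (T ∩ hitTimes E l)) →
      volume G ≤ ENNReal.ofReal (K * lam ^ (-(n / 2 + 4) : ℝ)) *
        (m ^ (1 / 4 : ℝ) * volume E ^ (7 / 4 : ℝ)) := by
  set W := (∫⁻ x, sqrtKernel x).toReal with hW
  have : 0 ≤ W := ENNReal.toReal_nonneg
  set K₀ := 4 / ℓ * ((ℓ / 8) ^ (1 / 2 - n / 4 : ℝ) * ℓ ^ (-(3 * n / 4) : ℝ) * (4 * (1 / ℓ) * W))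
    with hK₀
  refine ⟨K₀ + 1, by positivity, fun {A B T E G m lam} h hE hG hlam hm hA hB hT => ?_⟩
  have hδ : 0 < lam ^ 2 * ℓ / 8 := by positivity
  have hc : 0 < lam ^ 5 * ℓ / 4 := by positivity
  have delta_rpow : (lam ^ 2 * ℓ / 8) ^ (1 / 2 - n / 4 : ℝ) =
      lam ^ 5 * lam ^ (-(n / 2 + 4) : ℝ) * (ℓ / 8) ^ (1 / 2 - n / 4 : ℝ) := by
    rw [mul_div_assoc, Real.mul_rpow (by positivity) (by positivity), ← Real.rpow_natCast,
      ← Real.rpow_natCast, ← Real.rpow_mul hlam.le, ← Real.rpow_add hlam]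
    congr 2
    push_cast
    ring
  have constant_eq : (lam ^ 2 * ℓ / 8) ^ (1 / 2 - n / 4 : ℝ) * ℓ ^ (-(3 * n / 4) : ℝ) *
      (4 * (1 / ℓ) * W) = lam ^ 5 * ℓ / 4 * (K₀ * lam ^ (-(n / 2 + 4) : ℝ)) := by
    rw [delta_rpow, hK₀]
    generalize (ℓ / 8) ^ (1 / 2 - n / 4 : ℝ) = x
    generalize ℓ ^ (-(3 * n / 4) : ℝ) = y
    field_simp
  rw [← ENNReal.mul_le_mul_iff_right (ENNReal.ofReal_pos.mpr hc).ne' ofReal_ne_top]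
  calc _ ≤ _ := (ofReal_mul_volume_le_setLIntegral hG hE h hlam hA hB hT).trans
        (setLIntegral_volume_farQuadruples_hitTimes_le hn hG hE hm h hδ)
    _ = ENNReal.ofReal ((lam ^ 2 * ℓ / 8) ^ (1 / 2 - n / 4 : ℝ) * ℓ ^ (-(3 * n / 4) : ℝ) *
          (4 * (1 / ℓ) * W)) * (m ^ (1 / 4 : ℝ) * volume E ^ (7 / 4 : ℝ)) := by
        rw [← ENNReal.ofReal_toReal lintegral_sqrtKernel_ne_top, ← hW, mul_assoc (_ * _),
          ← ENNReal.ofReal_ofNat 4, ← ENNReal.ofReal_mul (by norm_num),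
          ← ENNReal.ofReal_mul (by positivity), ← ENNReal.ofReal_mul (by positivity)]
    _ ≤ _ := by
        rw [constant_eq, ENNReal.ofReal_mul hc.le, mul_assoc]
        gcongr
        linarith

end Trilinear

section Pigeonhole

-- At least five terms are heavy; the first, third and fifth are pairwise non-adjacent.
lemma exists_separated_or_exists_large {N : ℕ} (a : ℕ → ℝ) {lam : ℝ} (hlam : 0 < lam)
    (h : lam ≤ ∑ j ∈ Finset.range N, a j) :
    (∃ j < N, lam / 12 ≤ a j) ∨ ∃ i j k, i + 2 ≤ j ∧ j + 2 ≤ k ∧ k < N ∧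
      lam / (2 * N) ≤ a i ∧ lam / (2 * N) ≤ a j ∧ lam / (2 * N) ≤ a k := by
  by_cases large : ∃ j < N, lam / 12 ≤ a j
  · exact Or.inl large
  push Not at large
  set heavy := {j ∈ Finset.range N | lam / (2 * N) ≤ a j} with heavy_def
  have sum_heavy_le : ∑ j ∈ heavy, a j ≤ heavy.card * (lam / 12) := by
    rw [← nsmul_eq_mul]
    exact Finset.sum_le_card_nsmul _ _ _ fun j hj =>
      (large j (Finset.mem_range.mp (Finset.mem_filter.mp hj).1)).le
  have sum_light_le : ∑ j ∈ Finset.range N with ¬lam / (2 * N) ≤ a j, a j ≤ lam / 2 := by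
    rcases N.eq_zero_or_pos with rfl | hN
    · simpa using (half_pos hlam).le
    calc _ ≤ _ * (lam / (2 * N)) := by
          rw [← nsmul_eq_mul]
          exact Finset.sum_le_card_nsmul _ _ _ fun j hj =>
            (not_le.mp (Finset.mem_filter.mp hj).2).le
      _ ≤ N * (lam / (2 * N)) := by
          gcongr
          exact (Finset.card_filter_le _ _).trans_eq (Finset.card_range N)
      _ = lam / 2 := by field_simp
  have five_le_card : 5 ≤ heavy.card := by
    by_contra! hcard
    have : (heavy.card : ℝ) ≤ 4 := by exact_mod_cast Nat.le_of_lt_succ hcard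
    have := Finset.sum_filter_add_sum_filter_not (Finset.range N) (lam / (2 * N) ≤ a ·) a
    nlinarith
  obtain ⟨s, hs, card_s⟩ := Finset.exists_subset_card_eq five_le_card
  set f := s.orderEmbOfFin card_s
  have mem_heavy (i : Fin 5) : f i < N ∧ lam / (2 * N) ≤ a (f i) := by
    simpa [heavy_def] using hs (s.orderEmbOfFin_mem card_s i)
  have lt {i j : Fin 5} (hij : i < j) : f i < f j := f.strictMono hij
  refine Or.inr ⟨f 0, f 2, f 4, ?_, ?_, (mem_heavy 4).1, (mem_heavy 0).2, (mem_heavy 2).2,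
    (mem_heavy 4).2⟩
  · have := lt (show (0 : Fin 5) < 1 by decide); have := lt (show (1 : Fin 5) < 2 by decide); omega
  · have := lt (show (2 : Fin 5) < 3 by decide); have := lt (show (3 : Fin 5) < 4 by decide); omega

lemma sum_rpow_le_rpow_sum {ι : Type*} (s : Finset ι) (f : ι → ℝ≥0∞) {p : ℝ} (hp : 1 ≤ p) :
    ∑ i ∈ s, f i ^ p ≤ (∑ i ∈ s, f i) ^ p := by
  classical
  induction s using Finset.induction_on with
  | empty => simp
  | insert i s hi ih =>
    rw [Finset.sum_insert hi, Finset.sum_insert hi]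
    exact (add_le_add_right ih _).trans (ENNReal.add_rpow_le_rpow_add _ _ hp)

end Pigeonhole

section TimeSlabs

/-- The `j`-th of the `N` intervals of length `1 / N` that partition `[0, 1)`. -/
def timeSlab (N j : ℕ) : Set ℝ :=
  Set.Ico (j / N) ((j + 1 : ℕ) / N)

variable {n N : ℕ} {E : Set (Euc n × ℝ)}

lemma measurableSet_timeSlab (N j : ℕ) : MeasurableSet (timeSlab N j) :=
  measurableSet_Ico

lemma pairwise_disjoint_timeSlab (N : ℕ) :
    Pairwise (Function.onFun Disjoint (timeSlab N)) :=
  Monotone.pairwise_disjoint_on_Ico_succ (f := fun j : ℕ => (j / N : ℝ))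
    fun _ _ hij => div_le_div_of_nonneg_right (Nat.cast_le.mpr hij) N.cast_nonneg

lemma exists_mem_timeSlab (hN : 0 < N) {t : ℝ} (ht : t ∈ Set.Ico (0 : ℝ) 1) :
    ∃ j < N, t ∈ timeSlab N j := by
  have hN' : (0 : ℝ) < N := Nat.cast_pos.mpr hN
  have h0 : 0 ≤ t * N := mul_nonneg ht.1 hN'.le
  refine ⟨⌊t * N⌋₊, (Nat.floor_lt h0).mpr (mul_lt_of_lt_one_left hN' ht.2),
    (div_le_iff₀ hN').mpr (Nat.floor_le h0), (lt_div_iff₀ hN').mpr ?_⟩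
  exact_mod_cast Nat.lt_floor_add_one (t * N)

lemma timeSlab_subset_Ico {j : ℕ} (hj : j < N) : timeSlab N j ⊆ Set.Ico 0 1 :=
  Set.Ico_subset_Ico (by positivity) (div_le_one_of_le₀ (Nat.cast_le.mpr hj) N.cast_nonneg)

lemma one_div_le_abs_sub_of_mem_timeSlab {i j : ℕ} (hij : i + 2 ≤ j) :
    ∀ x ∈ timeSlab N i, ∀ y ∈ timeSlab N j, 1 / (N : ℝ) ≤ |x - y| := by
  intro x hx y hy
  have gap : ((i + 1 : ℕ) : ℝ) / N + 1 / N ≤ j / N := by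
    rw [← add_div]
    gcongr
    exact_mod_cast hij
  rw [abs_sub_comm]
  exact le_trans (by linarith [hx.2, hy.1]) (le_abs_self _)

lemma separatedTimes_timeSlab {i j k : ℕ} (hij : i + 2 ≤ j) (hjk : j + 2 ≤ k) (hk : k < N) :
    SeparatedTimes (1 / N) (timeSlab N i) (timeSlab N j) (timeSlab N k) where
  measurableSet_fst := measurableSet_timeSlab N i
  measurableSet_snd := measurableSet_timeSlab N j
  measurableSet_trd := measurableSet_timeSlab N k
  fst_subset := timeSlab_subset_Ico (by omega)
  snd_subset := timeSlab_subset_Ico (by omega)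
  trd_subset := timeSlab_subset_Ico hk
  pos := one_div_pos.mpr (Nat.cast_pos.mpr (by omega))
  le_fst_snd := one_div_le_abs_sub_of_mem_timeSlab hij
  le_fst_trd := one_div_le_abs_sub_of_mem_timeSlab (by omega)
  le_snd_trd := one_div_le_abs_sub_of_mem_timeSlab hjk

lemma volume_timeSlab_inter_ne_top (N j : ℕ) (S : Set ℝ) :
    volume (timeSlab N j ∩ S) ≠ ⊤ :=
  ((measure_mono Set.inter_subset_left).trans_lt measure_Ico_lt_top).ne

lemma sum_volume_inter_timeSlab_rpow_le (hE : MeasurableSet E) {p : ℝ} (hp : 1 ≤ p) (N : ℕ) :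
    ∑ j ∈ Finset.range N, volume (E ∩ Set.univ ×ˢ timeSlab N j) ^ p ≤ volume E ^ p := by
  refine (sum_rpow_le_rpow_sum _ _ hp).trans ?_
  gcongr
  rw [← measure_biUnion_finset]
  · exact measure_mono (Set.iUnion₂_subset fun j _ => Set.inter_subset_left)
  · exact fun i _ j _ hij => (Set.disjoint_prod.mpr (Or.inr
      (pairwise_disjoint_timeSlab N hij))).mono Set.inter_subset_right Set.inter_subset_right
  · exact fun j _ => hE.inter (MeasurableSet.univ.prod (measurableSet_timeSlab N j))

lemma exists_separated_or_exists_large_timeSlab (hN : 0 < N) {lam : ℝ} (hlam : 0 < lam)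
    {S : Set ℝ} (h : ENNReal.ofReal lam ≤ volume (Set.Ico 0 1 ∩ S)) :
    (∃ j < N, ENNReal.ofReal (lam / 12) ≤ volume (timeSlab N j ∩ S)) ∨
      ∃ i j k, i + 2 ≤ j ∧ j + 2 ≤ k ∧ k < N ∧
        ENNReal.ofReal (lam / (2 * N)) ≤ volume (timeSlab N i ∩ S) ∧
        ENNReal.ofReal (lam / (2 * N)) ≤ volume (timeSlab N j ∩ S) ∧
        ENNReal.ofReal (lam / (2 * N)) ≤ volume (timeSlab N k ∩ S) := by
  have ne_top (j : ℕ) := volume_timeSlab_inter_ne_top N j S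
  simp only [ENNReal.ofReal_le_iff_le_toReal (ne_top _)]
  refine exists_separated_or_exists_large _ hlam ?_
  rw [← ENNReal.toReal_sum fun j _ => ne_top j,
    ← ENNReal.ofReal_le_iff_le_toReal (ENNReal.sum_ne_top.mpr fun j _ => ne_top j)]
  refine h.trans ((measure_mono fun t ht => ?_).trans (measure_biUnion_finset_le _ _))
  obtain ⟨j, hj, htj⟩ := exists_mem_timeSlab hN ht.1
  exact Set.mem_biUnion (Finset.mem_range.mpr hj) ⟨htj, ht.2⟩

end TimeSlabs

section RestrictedWeakType

variable {n : ℕ} {E : Set (Euc n × ℝ)} {G : Set (Euc n × Euc n)} {m K : ℝ≥0∞} {lam : ℝ}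

/-- The restricted weak-type estimate at density `lam` with constant `K`: it bounds every set `G` of
lines `(v, z)` that spend at least time `lam` in `E`, in terms of the volume of `E` and a bound `m`
for the fibres of `G` in a fixed direction. -/
def RestrictedWeakType (n : ℕ) (K : ℝ≥0∞) (lam : ℝ) : Prop :=
  ∀ {E : Set (Euc n × ℝ)} {G : Set (Euc n × Euc n)} {m : ℝ≥0∞},
    MeasurableSet E → MeasurableSet G → (∀ v, volume {z | (v, z) ∈ G} ≤ m) →
    (∀ l ∈ G, ENNReal.ofReal lam ≤ volume (Set.Ico 0 1 ∩ hitTimes E l)) →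
    volume G ≤ K * (m ^ (1 / 4 : ℝ) * volume E ^ (7 / 4 : ℝ))

lemma restrictedWeakType_of_one_lt (h : 1 < lam) : RestrictedWeakType n K lam := by
  intro E G m _ _ _ hit
  have : G = ∅ := Set.eq_empty_of_forall_notMem fun l hl => h.not_ge <| by
    rw [← ENNReal.ofReal_le_one]
    exact (hit l hl).trans ((measure_mono Set.inter_subset_left).trans (by simp))
  simp [this]

lemma volume_setOf_mem_sub (S : Set (Euc n)) (a : Euc n) : volume {z | z - a ∈ S} = volume S := by
  simp only [sub_eq_add_neg]
  exact measure_preimage_add_right volume (-a) S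

lemma volume_preimage_fst_smul_snd_sub (hG : MeasurableSet G) {c : ℝ} (hc : 0 < c) (τ : ℝ) :
    volume ((fun l : Euc n × Euc n => (c • l.1, l.2 - τ • l.1)) ⁻¹' G) =
      ENNReal.ofReal (c⁻¹ ^ n) * volume G := by
  have hG' : MeasurableSet ((fun l : Euc n × Euc n => (c • l.1, l.2 - τ • l.1)) ⁻¹' G) :=
    (by fun_prop : Measurable fun l : Euc n × Euc n => (c • l.1, l.2 - τ • l.1)) hG
  rw [Measure.volume_eq_prod, Measure.prod_apply hG', Measure.prod_apply hG]
  calc _ = ∫⁻ v, volume (Prod.mk (0 + c • v) ⁻¹' G) := lintegral_congr fun v => by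
        rw [zero_add]
        exact volume_setOf_mem_sub (Prod.mk (c • v) ⁻¹' G) (τ • v)
    _ = _ := by
        rw [lintegral_comp_add_smul volume (fun v => volume (Prod.mk v ⁻¹' G)) 0 hc.ne',
          abs_of_pos (inv_pos.mpr hc), finrank_euclideanSpace_fin]

lemma volume_preimage_add_mul {a c : ℝ} (hc : 0 < c) (S : Set ℝ) :
    volume ((fun s => a + c * s) ⁻¹' S) = ENNReal.ofReal c⁻¹ * volume S := by
  rw [show (fun s => a + c * s) ⁻¹' S = (c * ·) ⁻¹' ((a + ·) ⁻¹' S) from rfl,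
    Real.volume_preimage_mul_left hc.ne', measure_preimage_add, abs_of_pos (inv_pos.mpr hc)]

lemma volume_preimage_snd_add_mul (hE : MeasurableSet E) {a c : ℝ} (hc : 0 < c) :
    volume ((fun p : Euc n × ℝ => (p.1, a + c * p.2)) ⁻¹' E) =
      ENNReal.ofReal c⁻¹ * volume E := by
  have hE' : MeasurableSet ((fun p : Euc n × ℝ => (p.1, a + c * p.2)) ⁻¹' E) :=
    (by fun_prop : Measurable fun p : Euc n × ℝ => (p.1, a + c * p.2)) hE
  rw [Measure.volume_eq_prod, Measure.prod_apply hE', Measure.prod_apply hE,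
    ← lintegral_const_mul _ (measurable_measure_prodMk_left hE)]
  exact lintegral_congr fun w => volume_preimage_add_mul hc (Prod.mk w ⁻¹' E)

lemma preimage_add_mul_timeSlab {N : ℕ} (hN : 0 < N) (j : ℕ) :
    (fun s : ℝ => j / N + (N : ℝ)⁻¹ * s) ⁻¹' timeSlab N j = Set.Ico 0 1 := by
  have hN' : (0 : ℝ) < (N : ℝ)⁻¹ := inv_pos.mpr (Nat.cast_pos.mpr hN)
  ext s
  simp only [timeSlab, Set.mem_preimage, Set.mem_Ico, Nat.cast_succ, add_div, one_div,
    le_add_iff_nonneg_right, add_lt_add_iff_left, mul_nonneg_iff_of_pos_left hN',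
    mul_lt_iff_lt_one_right hN']

lemma volume_Ico_inter_hitTimes_preimage {N : ℕ} (hN : 0 < N) (j : ℕ) (E : Set (Euc n × ℝ))
    (l : Euc n × Euc n) :
    volume (Set.Ico 0 1 ∩ hitTimes ((fun p : Euc n × ℝ => (p.1, j / N + (N : ℝ)⁻¹ * p.2)) ⁻¹'
        (E ∩ Set.univ ×ˢ timeSlab N j)) l) =
      ENNReal.ofReal N * volume (timeSlab N j ∩
        hitTimes E ((N : ℝ) • l.1, l.2 - (j : ℝ) • l.1)) := by
  have hN' : (0 : ℝ) < N := Nat.cast_pos.mpr hN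
  have point_eq (s : ℝ) : l.2 - (j : ℝ) • l.1 + (j / N + (N : ℝ)⁻¹ * s) • (N : ℝ) • l.1 =
      l.2 + s • l.1 := by
    rw [smul_smul, show (j / N + (N : ℝ)⁻¹ * s) * N = j + s by field_simp]
    module
  have rescaled := volume_preimage_add_mul (inv_pos.mpr hN') (a := j / N)
    (timeSlab N j ∩ hitTimes E ((N : ℝ) • l.1, l.2 - (j : ℝ) • l.1))
  rw [inv_inv] at rescaled
  rw [← rescaled]
  congr 1
  ext s
  rw [← preimage_add_mul_timeSlab hN j]
  simp only [hitTimes, Set.mem_inter_iff, Set.mem_preimage, Set.mem_ofPred_eq, Set.mem_prod,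
    Set.mem_univ, true_and, point_eq]
  tauto

-- Stretching a slab of thickness `1 / N` to unit thickness multiplies the density by `N`.
lemma RestrictedWeakType.volume_le_of_timeSlab {N j : ℕ} (hN : 0 < N)
    (h : RestrictedWeakType n K (N * lam)) (hE : MeasurableSet E) (hG : MeasurableSet G)
    (hm : ∀ v, volume {z | (v, z) ∈ G} ≤ m)
    (hit : ∀ l ∈ G, ENNReal.ofReal lam ≤ volume (timeSlab N j ∩ hitTimes E l)) :
    volume G ≤ ENNReal.ofReal ((N : ℝ) ^ n) * (K * (m ^ (1 / 4 : ℝ) *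
      (ENNReal.ofReal N * volume (E ∩ Set.univ ×ˢ timeSlab N j)) ^ (7 / 4 : ℝ))) := by
  have hN' : (0 : ℝ) < N := Nat.cast_pos.mpr hN
  have hEj : MeasurableSet (E ∩ Set.univ ×ˢ timeSlab N j) :=
    hE.inter (MeasurableSet.univ.prod (measurableSet_timeSlab N j))
  have stretched := h
    ((by fun_prop : Measurable fun p : Euc n × ℝ => (p.1, j / N + (N : ℝ)⁻¹ * p.2)) hEj)
    ((by fun_prop : Measurable fun l : Euc n × Euc n =>
      ((N : ℝ) • l.1, l.2 - (j : ℝ) • l.1)) hG)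
    (fun v => (volume_setOf_mem_sub {z | ((N : ℝ) • v, z) ∈ G} ((j : ℝ) • v)).trans_le (hm _))
    (fun l hl => by
      rw [volume_Ico_inter_hitTimes_preimage hN, ENNReal.ofReal_mul hN'.le]
      gcongr
      exact hit _ hl)
  rw [volume_preimage_snd_add_mul hEj (inv_pos.mpr hN'), inv_inv,
    volume_preimage_fst_smul_snd_sub hG hN'] at stretched
  calc volume G = ENNReal.ofReal ((N : ℝ) ^ n) *
        (ENNReal.ofReal ((N : ℝ)⁻¹ ^ n) * volume G) := by
        rw [← mul_assoc, ← ENNReal.ofReal_mul (by positivity), ← mul_pow,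
          mul_inv_cancel₀ hN'.ne', one_pow, ENNReal.ofReal_one, one_mul]
    _ ≤ _ := by gcongr

/-- The lines that spend at least time `c` in the part of `E` above the `j`-th time slab. -/
def heavyLines (E : Set (Euc n × ℝ)) (N j : ℕ) (c : ℝ) : Set (Euc n × Euc n) :=
  {l | ENNReal.ofReal c ≤ volume (timeSlab N j ∩ hitTimes E l)}

lemma measurableSet_heavyLines (hE : MeasurableSet E) (N j : ℕ) (c : ℝ) :
    MeasurableSet (heavyLines E N j c) :=
  measurableSet_le measurable_const (measurable_measure_prodMk_left
    ((measurable_snd (measurableSet_timeSlab N j)).inter (measurableSet_mem_hitTimes hE)))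

lemma volume_fibre_inter_le (hm : ∀ v, volume {z | (v, z) ∈ G} ≤ m) (S : Set (Euc n × Euc n))
    (v : Euc n) : volume {z | (v, z) ∈ G ∩ S} ≤ m :=
  (measure_mono fun _ hz => hz.1).trans (hm v)

lemma subset_heavyLines {N : ℕ} (hN : 0 < N) (hlam : 0 < lam)
    (hit : ∀ l ∈ G, ENNReal.ofReal lam ≤ volume (Set.Ico 0 1 ∩ hitTimes E l)) :
    G ⊆ (⋃ j ∈ Finset.range N, G ∩ heavyLines E N j (lam / 12)) ∪
      ⋃ x ∈ {x ∈ Finset.range N ×ˢ Finset.range N ×ˢ Finset.range N |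
          x.1 + 2 ≤ x.2.1 ∧ x.2.1 + 2 ≤ x.2.2},
        G ∩ (heavyLines E N x.1 (lam / (2 * N)) ∩ heavyLines E N x.2.1 (lam / (2 * N)) ∩
          heavyLines E N x.2.2 (lam / (2 * N))) := by
  intro l hl
  rcases exists_separated_or_exists_large_timeSlab hN hlam (hit l hl) with
    ⟨j, hj, heavy⟩ | ⟨i, j, k, hij, hjk, hk, hi', hj', hk'⟩
  · exact Or.inl (Set.mem_biUnion (Finset.mem_range.mpr hj) ⟨hl, heavy⟩)
  · refine Or.inr (Set.mem_biUnion (x := (i, j, k)) ?_ ⟨hl, ⟨hi', hj'⟩, hk'⟩)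
    simp only [SetLike.mem_coe, Finset.mem_filter, Finset.mem_product, Finset.mem_range]
    omega

lemma RestrictedWeakType.volume_biUnion_heavyLines_le {N : ℕ} (hN : 0 < N)
    (h : RestrictedWeakType n K (N * lam)) (hE : MeasurableSet E) (hG : MeasurableSet G)
    (hm : ∀ v, volume {z | (v, z) ∈ G} ≤ m) :
    volume (⋃ j ∈ Finset.range N, G ∩ heavyLines E N j lam) ≤
      ENNReal.ofReal ((N : ℝ) ^ (n + 7 / 4 : ℝ)) * K *
        (m ^ (1 / 4 : ℝ) * volume E ^ (7 / 4 : ℝ)) := by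
  have hN' : (0 : ℝ) < N := Nat.cast_pos.mpr hN
  calc _ ≤ ∑ j ∈ Finset.range N, ENNReal.ofReal ((N : ℝ) ^ (n + 7 / 4 : ℝ)) * K *
          (m ^ (1 / 4 : ℝ) * volume (E ∩ Set.univ ×ˢ timeSlab N j) ^ (7 / 4 : ℝ)) := by
        refine (measure_biUnion_finset_le _ _).trans (Finset.sum_le_sum fun j _ => ?_)
        refine (h.volume_le_of_timeSlab hN hE (hG.inter (measurableSet_heavyLines hE N j lam))
          (volume_fibre_inter_le hm _) fun l hl => hl.2).trans_eq ?_
        rw [ENNReal.mul_rpow_of_nonneg _ _ (by norm_num), ENNReal.ofReal_rpow_of_pos hN',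
          Real.rpow_add hN', Real.rpow_natCast, ENNReal.ofReal_mul (by positivity)]
        ring
    _ ≤ _ := by
        rw [← Finset.mul_sum, ← Finset.mul_sum]
        gcongr
        exact sum_volume_inter_timeSlab_rpow_le hE (by norm_num) N

lemma exists_volume_biUnion_heavyLines_inter_le (hn : 2 ≤ n) {N : ℕ} (hN : 0 < N) :
    ∃ C : ℝ, 0 < C ∧ ∀ {E : Set (Euc n × ℝ)} {G : Set (Euc n × Euc n)} {m : ℝ≥0∞} {lam : ℝ},
      MeasurableSet E → MeasurableSet G → 0 < lam → (∀ v, volume {z | (v, z) ∈ G} ≤ m) →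
      volume (⋃ x ∈ {x ∈ Finset.range N ×ˢ Finset.range N ×ˢ Finset.range N |
          x.1 + 2 ≤ x.2.1 ∧ x.2.1 + 2 ≤ x.2.2},
        G ∩ (heavyLines E N x.1 (lam / (2 * N)) ∩ heavyLines E N x.2.1 (lam / (2 * N)) ∩
          heavyLines E N x.2.2 (lam / (2 * N)))) ≤
      ENNReal.ofReal (C * lam ^ (-(n / 2 + 4) : ℝ)) *
        (m ^ (1 / 4 : ℝ) * volume E ^ (7 / 4 : ℝ)) := by
  have hN' : (0 : ℝ) < N := Nat.cast_pos.mpr hN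
  obtain ⟨K, hK, trilinear⟩ := exists_volume_le_of_separatedTimes hn (one_div_pos.mpr hN')
  refine ⟨N ^ 3 * (K * (1 / (2 * N)) ^ (-(n / 2 + 4) : ℝ)), by positivity,
    fun {E G m lam} hE hG hlam hm => ?_⟩
  have rpow_eq : (lam / (2 * N)) ^ (-(n / 2 + 4) : ℝ) =
      (1 / (2 * N)) ^ (-(n / 2 + 4) : ℝ) * lam ^ (-(n / 2 + 4) : ℝ) := by
    rw [← Real.mul_rpow (by positivity) hlam.le, one_div_mul_eq_div]
  refine (measure_biUnion_finset_le _ _).trans ((Finset.sum_le_card_nsmul _ _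
    (ENNReal.ofReal (K * (lam / (2 * N)) ^ (-(n / 2 + 4) : ℝ)) *
      (m ^ (1 / 4 : ℝ) * volume E ^ (7 / 4 : ℝ))) fun x hx => ?_).trans ?_)
  · simp only [Finset.mem_filter, Finset.mem_product, Finset.mem_range] at hx
    have measurable_heavy (j : ℕ) := measurableSet_heavyLines hE N j (lam / (2 * N))
    exact trilinear (separatedTimes_timeSlab hx.2.1 hx.2.2 hx.1.2.2) hE
      (hG.inter (((measurable_heavy _).inter (measurable_heavy _)).inter (measurable_heavy _)))
      (by positivity) (volume_fibre_inter_le hm _)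
      (fun l hl => hl.2.1.1) (fun l hl => hl.2.1.2) (fun l hl => hl.2.2)
  · rw [nsmul_eq_mul, ← mul_assoc, ← ENNReal.ofReal_natCast, ← ENNReal.ofReal_mul (by positivity),
      rpow_eq, mul_assoc, mul_assoc]
    gcongr
    refine (Nat.cast_le.mpr (Finset.card_filter_le _ _)).trans_eq ?_
    rw [Finset.card_product, Finset.card_product, Finset.card_range]
    push_cast
    ring

-- Passing from density `lam` to density `(N / 12) * lam` gains a factor `12 ^ s * N ^ (-η)`.
lemma exists_restrictedWeakType_of_restrictedWeakType_mul (hn : 5 ≤ n) {η : ℝ} (hη : 0 < η)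
    {N : ℕ} (hN : 0 < N) (gain : (12 : ℝ) ^ (n + 7 / 4 + η : ℝ) * (N : ℝ) ^ (-η) ≤ 1 / 2) :
    ∃ M : ℝ, 0 < M ∧ ∀ lam : ℝ, 0 < lam → lam ≤ 1 →
      RestrictedWeakType n (ENNReal.ofReal (M * (N * (lam / 12)) ^ (-(n + 7 / 4 + η) : ℝ)))
        (N * (lam / 12)) →
      RestrictedWeakType n (ENNReal.ofReal (M * lam ^ (-(n + 7 / 4 + η) : ℝ))) lam := by
  have hN' : (0 : ℝ) < N := Nat.cast_pos.mpr hN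
  obtain ⟨C, hC, three_slabs⟩ := exists_volume_biUnion_heavyLines_inter_le (by omega : 2 ≤ n) hN
  refine ⟨2 * C, by positivity, fun lam hlam hlam1 h {E G m} hE hG hm hit => ?_⟩
  set s : ℝ := n + 7 / 4 + η with hs
  have one_slab_constant : (N : ℝ) ^ (n + 7 / 4 : ℝ) * (2 * C * (N * (lam / 12)) ^ (-s)) ≤
      C * lam ^ (-s) := by
    calc _ = 2 * C * (12 ^ s * ((N : ℝ) ^ (n + 7 / 4 : ℝ) * (N : ℝ) ^ (-s))) * lam ^ (-s) := by
          rw [Real.mul_rpow hN'.le (by positivity), Real.div_rpow hlam.le (by norm_num),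
            Real.rpow_neg (by norm_num : (0 : ℝ) ≤ 12)]
          field_simp
      _ = 2 * C * (12 ^ s * (N : ℝ) ^ (-η)) * lam ^ (-s) := by
          rw [← Real.rpow_add hN', hs]
          ring_nf
      _ ≤ 2 * C * (1 / 2) * lam ^ (-s) := by gcongr
      _ = C * lam ^ (-s) := by ring
  have three_slabs_constant : C * lam ^ (-(n / 2 + 4) : ℝ) ≤ C * lam ^ (-s) := by
    have : (5 : ℝ) ≤ n := by exact_mod_cast hn
    exact mul_le_mul_of_nonneg_left
      (Real.rpow_le_rpow_of_exponent_ge hlam hlam1 (by linarith)) hC.le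
  refine (measure_mono (subset_heavyLines hN hlam hit)).trans ((measure_union_le _ _).trans
    ((add_le_add (h.volume_biUnion_heavyLines_le hN hE hG hm)
      (three_slabs hE hG hlam hm)).trans ?_))
  rw [← ENNReal.ofReal_mul (by positivity), ← add_mul,
    ← ENNReal.ofReal_add (by positivity) (by positivity)]
  gcongr
  linarith

theorem exists_restrictedWeakType (hn : 5 ≤ n) {η : ℝ} (hη : 0 < η) :
    ∃ M : ℝ, 0 < M ∧ ∀ lam : ℝ, 0 < lam →
      RestrictedWeakType n (ENNReal.ofReal (M * lam ^ (-(n + 7 / 4 + η) : ℝ))) lam := by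
  have gain_tendsto : Filter.Tendsto
      (fun N : ℕ => (12 : ℝ) ^ (n + 7 / 4 + η : ℝ) * (N : ℝ) ^ (-η)) Filter.atTop (nhds 0) := by
    simpa using ((tendsto_rpow_neg_atTop hη).comp tendsto_natCast_atTop_atTop).const_mul
      ((12 : ℝ) ^ (n + 7 / 4 + η : ℝ))
  obtain ⟨N, gain, hN⟩ := ((gain_tendsto.eventually_le_const
    (by norm_num : (0 : ℝ) < 1 / 2)).and (Filter.eventually_ge_atTop 13)).exists
  obtain ⟨M, hM, step⟩ :=
    exists_restrictedWeakType_of_restrictedWeakType_mul hn hη (by omega) gain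
  have one_lt_ratio : (1 : ℝ) < N / 12 := by
    rw [one_lt_div (by norm_num)]
    exact_mod_cast hN
  have induction_on_scales (k : ℕ) : ∀ lam : ℝ, 0 < lam → 1 < lam * ((N : ℝ) / 12) ^ k →
      RestrictedWeakType n (ENNReal.ofReal (M * lam ^ (-(n + 7 / 4 + η) : ℝ))) lam := by
    induction k with
    | zero => exact fun lam _ h => restrictedWeakType_of_one_lt (by simpa using h)
    | succ k ih =>
      intro lam hlam h
      rcases lt_or_ge 1 lam with one_lt | le_one
      · exact restrictedWeakType_of_one_lt one_lt
      · exact step lam hlam le_one (ih _ (by positivity) (h.trans_eq (by ring)))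
  refine ⟨M, hM, fun lam hlam => ?_⟩
  obtain ⟨k, hk⟩ := pow_unbounded_of_one_lt (1 / lam) one_lt_ratio
  exact induction_on_scales k lam hlam ((div_lt_iff₀' hlam).mp hk)

end RestrictedWeakType

section ProjectiveXray

variable {n : ℕ} {E : Set (Euc n × ℝ)} {G : Set (Euc n × Euc n)} {g : Euc n × ℝ → ℝ≥0∞}
  {m K : ℝ≥0∞} {lam : ℝ}

/-- The x-ray transform in projective coordinates. With `t = 1 / (1 + s)` the integrand is evaluated
at `z + (1 + s) • v = t⁻¹ • (v + t • z)`, so `v` is the position of the original line and `z` its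
direction. -/
def projXray (g : Euc n × ℝ → ℝ≥0∞) (v z : Euc n) : ℝ≥0∞ :=
  ∫⁻ s in Set.Ico (0 : ℝ) 1, g (z + (1 + s) • v, s)

lemma measurable_projXray (hg : Measurable g) :
    Measurable fun l : Euc n × Euc n => projXray g l.1 l.2 := by
  unfold projXray
  fun_prop

lemma projXray_mono {g' : Euc n × ℝ → ℝ≥0∞} (h : ∀ x, g x ≤ g' x) (v z : Euc n) :
    projXray g v z ≤ projXray g' v z :=
  lintegral_mono fun _ => h _

lemma projXray_const_mul (hg : Measurable g) (c : ℝ≥0∞) (v z : Euc n) :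
    projXray (fun x => c * g x) v z = c * projXray g v z :=
  lintegral_const_mul c (hg.comp (by fun_prop))

lemma projXray_tsum {g : ℕ → Euc n × ℝ → ℝ≥0∞} (hg : ∀ k, Measurable (g k)) (v z : Euc n) :
    projXray (fun x => ∑' k, g k x) v z = ∑' k, projXray (g k) v z :=
  lintegral_tsum fun k => ((hg k).comp (by fun_prop)).aemeasurable

lemma projXray_indicator_one (hE : MeasurableSet E) (v z : Euc n) :
    projXray (E.indicator 1) v z = volume (Set.Ico 0 1 ∩ hitTimes E (v, z + v)) := by
  rw [Set.inter_comm, ← Measure.restrict_apply (measurableSet_hitTimes hE _),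
    ← lintegral_indicator_one (measurableSet_hitTimes hE _)]
  refine lintegral_congr fun s => ?_
  rw [show z + (1 + s) • v = z + v + s • v by module]
  rfl

lemma projXray_indicator_one_le_one (hE : MeasurableSet E) (v z : Euc n) :
    projXray (E.indicator 1) v z ≤ 1 := by
  rw [projXray_indicator_one hE]
  exact (measure_mono Set.inter_subset_left).trans (by simp)

lemma lintegral_projXray_le (hg : Measurable g) (v : Euc n) :
    ∫⁻ z, projXray g v z ≤ ∫⁻ x, g x := by
  unfold projXray
  rw [lintegral_lintegral_swap (by fun_prop), Measure.volume_eq_prod, lintegral_prod_symm' _ hg]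
  calc _ = ∫⁻ s in Set.Ico (0 : ℝ) 1, ∫⁻ z, g (z, s) :=
        lintegral_congr fun s => lintegral_add_right_eq_self (fun z => g (z, s)) _
    _ ≤ _ := setLIntegral_le_lintegral _ _

-- The shear `(v, z) ↦ (v, z - v)` turns the model lines into the lines counted by `hitTimes`.
lemma RestrictedWeakType.volume_le_of_le_projXray (h : RestrictedWeakType n K lam)
    (hE : MeasurableSet E) (hG : MeasurableSet G) (hm : ∀ v, volume {z | (v, z) ∈ G} ≤ m)
    (hit : ∀ l ∈ G, ENNReal.ofReal lam ≤ projXray (E.indicator 1) l.1 l.2) :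
    volume G ≤ K * (m ^ (1 / 4 : ℝ) * volume E ^ (7 / 4 : ℝ)) := by
  have volume_shear := volume_preimage_fst_smul_snd_sub hG one_pos 1
  rw [inv_one, one_pow, ENNReal.ofReal_one, one_mul] at volume_shear
  simp only [one_smul] at volume_shear
  rw [← volume_shear]
  refine h hE ((by fun_prop : Measurable fun l : Euc n × Euc n => (l.1, l.2 - l.1)) hG)
    (fun v => (volume_setOf_mem_sub (Prod.mk v ⁻¹' G) v).trans_le (hm v)) fun l hl => ?_
  simpa [projXray_indicator_one hE] using hit _ hl

end ProjectiveXray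

section DyadicSums

lemma rpow_le_tsum_dyadic {x c : ℝ≥0∞} (hc : c ≠ ⊤) (hx : x ≤ 2 * c) {s : ℝ} (hs : 0 < s) :
    x ^ s ≤ ∑' k : ℕ, (2 * (c * 2⁻¹ ^ k)) ^ s *
      (Set.Ioc (c * 2⁻¹ ^ k) (2 * (c * 2⁻¹ ^ k))).indicator 1 x := by
  rcases eq_or_ne x 0 with rfl | hx0
  · simp [ENNReal.zero_rpow_of_pos hs]
  have exists_lt : ∃ k : ℕ, c * 2⁻¹ ^ k < x := by
    have tendsto_zero : Filter.Tendsto (fun k : ℕ => c * 2⁻¹ ^ k) Filter.atTop (nhds (c * 0)) :=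
      ENNReal.Tendsto.const_mul
        (ENNReal.tendsto_pow_atTop_nhds_zero_of_lt_one (by simp)) (Or.inr hc)
    rw [mul_zero] at tendsto_zero
    exact (tendsto_zero.eventually_lt_const (pos_iff_ne_zero.mpr hx0)).exists
  classical
  obtain ⟨k, lt, le⟩ : ∃ k : ℕ, c * 2⁻¹ ^ k < x ∧ x ≤ 2 * (c * 2⁻¹ ^ k) := by
    refine ⟨Nat.find exists_lt, Nat.find_spec exists_lt, ?_⟩
    rcases h : Nat.find exists_lt with _ | k
    · simpa using hx
    · calc x ≤ c * 2⁻¹ ^ k := not_lt.mp (Nat.find_min exists_lt (by omega))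
        _ = 2 * (c * 2⁻¹ ^ (k + 1)) := by
          rw [mul_left_comm, pow_succ', ENNReal.mul_inv_cancel_left two_ne_zero ofNat_ne_top]
  refine le_trans ?_ (ENNReal.le_tsum k)
  rw [Set.indicator_of_mem (Set.mem_Ioc.mpr ⟨lt, le⟩), Pi.one_apply, mul_one]
  exact ENNReal.rpow_le_rpow le hs.le

lemma rpow_tsum_le_tsum_rpow {ι : Type*} (f : ι → ℝ≥0∞) {p : ℝ} (hp : 0 < p) (hp1 : p ≤ 1) :
    (∑' i, f i) ^ p ≤ ∑' i, f i ^ p := by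
  have finite_sum (s : Finset ι) : (∑ i ∈ s, f i) ^ p ≤ ∑ i ∈ s, f i ^ p := by
    classical
    induction s using Finset.induction_on with
    | empty => simp [hp]
    | insert a s ha ih =>
      rw [Finset.sum_insert ha, Finset.sum_insert ha]
      exact (ENNReal.rpow_add_le_add_rpow _ _ hp.le hp1).trans (add_le_add le_rfl ih)
  exact le_of_tendsto' ((ENNReal.continuous_rpow_const.tendsto _).comp ENNReal.summable.hasSum)
    fun s => (finite_sum s).trans (ENNReal.sum_le_tsum s)

lemma tsum_geometric_ne_top {x : ℝ≥0∞} (hx : x < 1) : ∑' k : ℕ, x ^ k ≠ ⊤ := by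
  rw [ENNReal.tsum_geometric, ENNReal.inv_ne_top]
  exact (tsub_pos_of_lt hx).ne'

lemma pow_rpow_comm (x : ℝ≥0∞) (k : ℕ) (s : ℝ) : (x ^ k) ^ s = (x ^ s) ^ k := by
  rw [← ENNReal.rpow_natCast, ← ENNReal.rpow_natCast, ← ENNReal.rpow_mul, ← ENNReal.rpow_mul,
    mul_comm]

lemma tsum_mul_half_pow_rpow_ne_top {c : ℝ≥0∞} (hc : c ≠ ⊤) {s : ℝ} (hs : 0 < s) :
    ∑' k : ℕ, (c * 2⁻¹ ^ k) ^ s ≠ ⊤ := by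
  simp_rw [ENNReal.mul_rpow_of_nonneg _ _ hs.le, pow_rpow_comm, ENNReal.tsum_mul_left]
  exact ENNReal.mul_ne_top (ENNReal.rpow_ne_top_of_nonneg hs.le hc)
    (tsum_geometric_ne_top (ENNReal.rpow_lt_one (by simp) hs))

lemma tsum_rpow_le_rpow_tsum_mul (f : ℕ → ℝ≥0∞) {w : ℕ → ℝ≥0∞} (hw0 : ∀ k, w k ≠ 0)
    (hw : ∀ k, w k ≠ ⊤) {r : ℝ} (hr : 0 < r) :
    (∑' k, f k) ^ r ≤ (∑' k, w k) ^ r * ∑' k, ((w k)⁻¹ * f k) ^ r := by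
  set S := (∑' k, ((w k)⁻¹ * f k) ^ r) ^ (1 / r) with hS
  have weighted_le (k : ℕ) : (w k)⁻¹ * f k ≤ S := by
    rw [hS, one_div, ENNReal.le_rpow_inv_iff hr]
    exact ENNReal.le_tsum k
  have tsum_le : ∑' k, f k ≤ (∑' k, w k) * S := by
    rw [← ENNReal.tsum_mul_right]
    refine ENNReal.tsum_le_tsum fun k => ?_
    calc f k = w k * ((w k)⁻¹ * f k) := (ENNReal.mul_inv_cancel_left (hw0 k) (hw k)).symm
      _ ≤ _ := by gcongr; exact weighted_le k
  calc _ ≤ ((∑' k, w k) * S) ^ r := ENNReal.rpow_le_rpow tsum_le hr.le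
    _ = _ := by
      rw [ENNReal.mul_rpow_of_nonneg _ _ hr.le, hS, ← ENNReal.rpow_mul,
        one_div_mul_cancel hr.ne', ENNReal.rpow_one]

end DyadicSums

section MixedNorm

variable {α β : Type*} [MeasurableSpace α] [MeasurableSpace β] {μ : Measure α} {ν : Measure β}
  {q r : ℝ}

/-- The `q`-th power of the norm of `F` in `L^q(μ; L^r(ν))`. -/
def mixedLIntegral (μ : Measure α) (ν : Measure β) (q r : ℝ) (F : α → β → ℝ≥0∞) : ℝ≥0∞ :=
  ∫⁻ a, (∫⁻ b, F a b ^ r ∂ν) ^ (q / r) ∂μ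

lemma rpow_rpow_div (hr : r ≠ 0) (x : ℝ≥0∞) : (x ^ r) ^ (q / r) = x ^ q := by
  rw [← ENNReal.rpow_mul, mul_div_cancel₀ _ hr]

lemma mixedLIntegral_mono (hq : 0 ≤ q) (hr : 0 ≤ r) {F F' : α → β → ℝ≥0∞}
    (h : ∀ a b, F a b ≤ F' a b) : mixedLIntegral μ ν q r F ≤ mixedLIntegral μ ν q r F' := by
  unfold mixedLIntegral
  gcongr with a b
  exact h a b

lemma measurable_rpow_lintegral_rpow [SFinite ν] {F : α → β → ℝ≥0∞}
    (hF : Measurable (Function.uncurry F)) :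
    Measurable fun a => (∫⁻ b, F a b ^ r ∂ν) ^ (q / r) :=
  (hF.pow_const r).lintegral_prod_right'.pow_const _

lemma mixedLIntegral_const_mul [SFinite ν] (hq : 0 ≤ q) (hr : 0 < r) {F : α → β → ℝ≥0∞}
    (hF : Measurable (Function.uncurry F)) (c : ℝ≥0∞) :
    mixedLIntegral μ ν q r (fun a b => c * F a b) = c ^ q * mixedLIntegral μ ν q r F := by
  unfold mixedLIntegral
  rw [← lintegral_const_mul _ (measurable_rpow_lintegral_rpow hF)]
  refine lintegral_congr fun a => ?_
  simp_rw [ENNReal.mul_rpow_of_nonneg _ _ hr.le]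
  rw [lintegral_const_mul _ (hF.of_uncurry_left.pow_const r),
    ENNReal.mul_rpow_of_nonneg _ _ (by positivity), rpow_rpow_div hr.ne']

lemma mixedLIntegral_tsum_le [SFinite ν] (hq : 0 < q) (hr : 0 < r) (hqr : q ≤ r)
    {F : ℕ → α → β → ℝ≥0∞} (hF : ∀ k, Measurable (Function.uncurry (F k))) {w : ℕ → ℝ≥0∞}
    (hw0 : ∀ k, w k ≠ 0) (hw : ∀ k, w k ≠ ⊤) :
    mixedLIntegral μ ν q r (fun a b => ∑' k, F k a b) ≤
      (∑' k, w k) ^ q * ∑' k, (w k)⁻¹ ^ q * mixedLIntegral μ ν q r (F k) := by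
  have hqr0 : 0 < q / r := by positivity
  have measurable_weighted (k : ℕ) (a : α) : Measurable fun b => ((w k)⁻¹ * F k a b) ^ r :=
    ((hF k).of_uncurry_left.const_mul _).pow_const r
  have inner_le (a : α) : (∫⁻ b, (∑' k, F k a b) ^ r ∂ν) ^ (q / r) ≤
      (∑' k, w k) ^ q * ∑' k, (w k)⁻¹ ^ q * (∫⁻ b, F k a b ^ r ∂ν) ^ (q / r) := by
    calc _ ≤ (∫⁻ b, (∑' k, w k) ^ r * ∑' k, ((w k)⁻¹ * F k a b) ^ r ∂ν) ^ (q / r) :=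
          ENNReal.rpow_le_rpow
            (lintegral_mono fun b => tsum_rpow_le_rpow_tsum_mul _ hw0 hw hr) hqr0.le
      _ = ((∑' k, w k) ^ r * ∑' k, (w k)⁻¹ ^ r * ∫⁻ b, F k a b ^ r ∂ν) ^ (q / r) := by
          rw [lintegral_const_mul _ (Measurable.tsum fun k => measurable_weighted k a),
            lintegral_tsum fun k => (measurable_weighted k a).aemeasurable]
          simp_rw [ENNReal.mul_rpow_of_nonneg _ _ hr.le,
            lintegral_const_mul _ ((hF _).of_uncurry_left.pow_const r)]
      _ ≤ (∑' k, w k) ^ q * ∑' k, ((w k)⁻¹ ^ r * ∫⁻ b, F k a b ^ r ∂ν) ^ (q / r) := by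
          rw [ENNReal.mul_rpow_of_nonneg _ _ hqr0.le, rpow_rpow_div hr.ne']
          gcongr
          exact rpow_tsum_le_tsum_rpow _ hqr0 ((div_le_one hr).mpr hqr)
      _ = _ := by simp_rw [ENNReal.mul_rpow_of_nonneg _ _ hqr0.le, rpow_rpow_div hr.ne']
  have measurable_inner (k : ℕ) : Measurable fun a => (∫⁻ b, F k a b ^ r ∂ν) ^ (q / r) :=
    measurable_rpow_lintegral_rpow (hF k)
  refine (lintegral_mono inner_le).trans_eq ?_
  rw [lintegral_const_mul _ (Measurable.tsum fun k => (measurable_inner k).const_mul _),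
    lintegral_tsum fun k => ((measurable_inner k).const_mul _).aemeasurable]
  simp_rw [lintegral_const_mul _ (measurable_inner _)]
  rfl

-- The weights `τ ^ (k / (2 * q))` spend half of the geometric decay on making the weights summable.
lemma exists_mixedLIntegral_tsum_le_of_geometric (hq : 0 < q) (hr : 0 < r) (hqr : q ≤ r)
    {τ : ℝ≥0∞} (hτ0 : τ ≠ 0) (hτ1 : τ < 1) :
    ∃ A : ℝ≥0∞, A ≠ ⊤ ∧ ∀ {α β : Type*} [MeasurableSpace α] [MeasurableSpace β] {μ : Measure α}
      {ν : Measure β} [SFinite ν] {F : ℕ → α → β → ℝ≥0∞} {B : ℝ≥0∞},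
      (∀ k, Measurable (Function.uncurry (F k))) →
      (∀ k, mixedLIntegral μ ν q r (F k) ≤ B * τ ^ k) →
      mixedLIntegral μ ν q r (fun a b => ∑' k, F k a b) ≤ A * B := by
  set ρ : ℝ≥0∞ := τ ^ (1 / (2 * q))
  have hρ0 : ρ ≠ 0 := (ENNReal.rpow_pos (pos_iff_ne_zero.mpr hτ0) hτ1.ne_top).ne'
  have hρ1 : ρ < 1 := ENNReal.rpow_lt_one hτ1 (by positivity)
  have hρq0 : ρ ^ q ≠ 0 := (ENNReal.rpow_pos (pos_iff_ne_zero.mpr hρ0) hρ1.ne_top).ne'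
  have hρq1 : ρ ^ q < 1 := ENNReal.rpow_lt_one hρ1 hq
  have τ_eq : τ = ρ ^ q * ρ ^ q := by
    rw [← ENNReal.rpow_mul, ← ENNReal.rpow_add _ _ hτ0 hτ1.ne_top]
    field_simp
    norm_num
  refine ⟨(∑' k : ℕ, ρ ^ k) ^ q * ∑' k : ℕ, (ρ ^ q) ^ k,
    ENNReal.mul_ne_top (ENNReal.rpow_ne_top_of_nonneg hq.le (tsum_geometric_ne_top hρ1))
      (tsum_geometric_ne_top hρq1), fun {α β} _ _ {μ ν} _ {F B} hF bound => ?_⟩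
  refine (mixedLIntegral_tsum_le hq hr hqr hF (fun k => pow_ne_zero k hρ0)
    fun k => ENNReal.pow_ne_top hρ1.ne_top).trans ?_
  rw [mul_assoc, ← ENNReal.tsum_mul_right]
  refine mul_le_mul' le_rfl (ENNReal.tsum_le_tsum fun k => ?_)
  calc (ρ ^ k)⁻¹ ^ q * mixedLIntegral μ ν q r (F k) ≤ (ρ ^ k)⁻¹ ^ q * (B * τ ^ k) := by
        gcongr; exact bound k
    _ = ((ρ ^ q) ^ k)⁻¹ * (ρ ^ q) ^ k * ((ρ ^ q) ^ k * B) := by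
        rw [ENNReal.inv_rpow, pow_rpow_comm, τ_eq, mul_pow]
        ring
    _ = (ρ ^ q) ^ k * B := by
        rw [ENNReal.inv_mul_cancel (pow_ne_zero k hρq0) (ENNReal.pow_ne_top hρq1.ne_top), one_mul]

end MixedNorm

section RichLines

variable {n : ℕ} {C M a b c s : ℝ} {E : Set (Euc n × ℝ)} {K lam h : ℝ≥0∞}

/-- The lines, in the coordinates of `projXray`, with direction in `B(0, C)` and along which `E` has
density more than `lam`. -/
def richLines (C : ℝ) (E : Set (Euc n × ℝ)) (lam : ℝ≥0∞) : Set (Euc n × Euc n) :=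
  {l | l.2 ∈ Metric.ball 0 C ∧ lam < projXray (E.indicator 1) l.1 l.2}

/-- The measure of the set of directions of the rich lines with position `v`. -/
def richVolume (C : ℝ) (E : Set (Euc n × ℝ)) (lam : ℝ≥0∞) (v : Euc n) : ℝ≥0∞ :=
  volume {z | (v, z) ∈ richLines C E lam}

/-- The positions in the unit ball whose rich lines have a set of directions of measure between `h`
and `2 * h`. -/
def dyadicPositions (C : ℝ) (E : Set (Euc n × ℝ)) (lam h : ℝ≥0∞) : Set (Euc n) :=
  Metric.ball 0 1 ∩ richVolume C E lam ⁻¹' Set.Ioc h (2 * h)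

lemma measurableSet_richLines (hE : MeasurableSet E) : MeasurableSet (richLines C E lam) :=
  (measurable_snd measurableSet_ball).inter
    (measurableSet_lt measurable_const (measurable_projXray (measurable_one.indicator hE)))

lemma measurable_richVolume (hE : MeasurableSet E) : Measurable (richVolume C E lam) :=
  measurable_measure_prodMk_left (measurableSet_richLines hE)

lemma measurableSet_dyadicPositions (hE : MeasurableSet E) :
    MeasurableSet (dyadicPositions C E lam h) :=
  measurableSet_ball.inter (measurable_richVolume hE measurableSet_Ioc)

lemma volume_dyadicPositions_le :
    volume (dyadicPositions C E lam h) ≤ volume (Metric.ball (0 : Euc n) 1) :=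
  measure_mono Set.inter_subset_left

lemma mul_volume_dyadicPositions_le_of_restrictedWeakType (hE : MeasurableSet E) (hlam : lam ≠ ⊤)
    (hweak : RestrictedWeakType n K lam.toReal) :
    h * volume (dyadicPositions C E lam h) ≤
      K * ((2 * h) ^ (1 / 4 : ℝ) * volume E ^ (7 / 4 : ℝ)) := by
  set X := dyadicPositions C E lam h
  have measurable_X : MeasurableSet X := measurableSet_dyadicPositions hE
  set G := richLines C E lam ∩ Prod.fst ⁻¹' X with hG
  have measurable_G : MeasurableSet G :=
    (measurableSet_richLines hE).inter (measurable_fst measurable_X)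
  have volume_fibre (v : Euc n) : volume {z | (v, z) ∈ G} = X.indicator (richVolume C E lam) v := by
    by_cases hv : v ∈ X <;> simp [hG, hv, richVolume]
  calc h * volume X = ∫⁻ _ in X, h := (setLIntegral_const _ _).symm
    _ ≤ ∫⁻ v in X, richVolume C E lam v := setLIntegral_mono' measurable_X fun v hv => hv.2.1.le
    _ = volume G := by
      rw [← lintegral_indicator measurable_X, Measure.volume_eq_prod,
        Measure.prod_apply measurable_G]
      exact lintegral_congr fun v => (volume_fibre v).symm
    _ ≤ _ := by
      refine hweak.volume_le_of_le_projXray hE measurable_G (fun _ => ?_) fun l hl => ?_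
      · rw [volume_fibre]
        exact Set.indicator_apply_le' (fun hv => hv.2.2) fun _ => zero_le
      · rw [ENNReal.ofReal_toReal hlam]
        exact hl.1.2.le

lemma mul_richVolume_le_volume (hE : MeasurableSet E) (v : Euc n) :
    lam * richVolume C E lam v ≤ volume E := by
  have measurable_fibre : MeasurableSet {z | (v, z) ∈ richLines C E lam} :=
    measurable_prodMk_left (measurableSet_richLines hE)
  calc lam * richVolume C E lam v
    _ = ∫⁻ _ in {z | (v, z) ∈ richLines C E lam}, lam := (setLIntegral_const _ _).symm
    _ ≤ ∫⁻ z in {z | (v, z) ∈ richLines C E lam}, projXray (E.indicator 1) v z :=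
      setLIntegral_mono' measurable_fibre fun _ hz => hz.2.le
    _ ≤ ∫⁻ z, projXray (E.indicator 1) v z := setLIntegral_le_lintegral _ _
    _ ≤ ∫⁻ x, E.indicator 1 x := lintegral_projXray_le (measurable_one.indicator hE) v
    _ = volume E := lintegral_indicator_one hE

lemma mul_volume_dyadicPositions_le (hE : MeasurableSet E) :
    lam * (h * volume (dyadicPositions C E lam h)) ≤
      volume (Metric.ball (0 : Euc n) 1) * volume E := by
  calc lam * (h * volume (dyadicPositions C E lam h))
    _ = ∫⁻ _ in dyadicPositions C E lam h, lam * h := by rw [setLIntegral_const, mul_assoc]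
    _ ≤ ∫⁻ _ in dyadicPositions C E lam h, volume E := by
      refine setLIntegral_mono' (measurableSet_dyadicPositions hE) fun v hv => ?_
      exact (mul_le_mul' le_rfl hv.2.1.le).trans (mul_richVolume_le_volume hE v)
    _ ≤ _ := by
      rw [setLIntegral_const, mul_comm]
      exact mul_le_mul' volume_dyadicPositions_le le_rfl

lemma le_interpolated_of_le {x y k₁ k₂ k₃ : ℝ≥0∞} {s : ℝ} (hs : 0 ≤ s) (ha : 0 ≤ a) (hb : 0 ≤ b)
    (hc : 0 ≤ c) (habc : a + b + c = 1) (h₁ : x ≤ k₁ * y ^ s) (h₂ : x ≤ k₂ * y) (h₃ : x ≤ k₃) :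
    x ≤ k₁ ^ a * k₂ ^ b * k₃ ^ c * y ^ (s * a + b) := by
  calc x = x ^ a * x ^ b * x ^ c := by
        rw [← ENNReal.rpow_add_of_nonneg _ _ ha hb,
          ← ENNReal.rpow_add_of_nonneg _ _ (by positivity) hc, habc, ENNReal.rpow_one]
    _ ≤ (k₁ * y ^ s) ^ a * (k₂ * y) ^ b * k₃ ^ c := by gcongr
    _ = _ := by
      rw [ENNReal.mul_rpow_of_nonneg _ _ ha, ENNReal.mul_rpow_of_nonneg _ _ hb,
        ← ENNReal.rpow_mul, ENNReal.rpow_add_of_nonneg _ _ (by positivity) hb]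
      ring

lemma ofReal_mul_toReal_rpow (hM : 0 ≤ M) (h0 : lam ≠ 0) (htop : lam ≠ ⊤) :
    ENNReal.ofReal (M * lam.toReal ^ s) = ENNReal.ofReal M * lam ^ s := by
  rw [ENNReal.ofReal_mul hM, ← ENNReal.ofReal_rpow_of_pos (ENNReal.toReal_pos h0 htop),
    ENNReal.ofReal_toReal htop]

lemma rpow_neg_mul_add (h0 : lam ≠ 0) (htop : lam ≠ ⊤) :
    lam ^ (-(s * a + b)) = (lam ^ (-s)) ^ a * lam⁻¹ ^ b := by
  rw [← ENNReal.rpow_mul, ENNReal.inv_rpow, ← ENNReal.rpow_neg, ← ENNReal.rpow_add _ _ h0 htop]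
  ring_nf

lemma volume_dyadicPositions_le_interpolated (hE : MeasurableSet E) (ha : 0 ≤ a) (hb : 0 ≤ b)
    (hc : 0 ≤ c) (habc : a + b + c = 1) (hM : 0 ≤ M) (hlam0 : lam ≠ 0) (hlam : lam ≠ ⊤)
    (hh0 : h ≠ 0) (hh : h ≠ ⊤)
    (hweak : RestrictedWeakType n (ENNReal.ofReal (M * lam.toReal ^ (-s))) lam.toReal) :
    volume (dyadicPositions C E lam h) ≤
      ((ENNReal.ofReal M * 2 ^ (1 / 4 : ℝ)) ^ a * volume (Metric.ball (0 : Euc n) 1) ^ b *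
        volume (Metric.ball (0 : Euc n) 1) ^ c) *
        (lam ^ (-(s * a + b)) * h ^ (-(3 / 4 * a + b))) * volume E ^ (7 / 4 * a + b) := by
  set ω := volume (Metric.ball (0 : Euc n) 1)
  set x := volume (dyadicPositions C E lam h)
  have weak_bound : x ≤ ENNReal.ofReal M * 2 ^ (1 / 4 : ℝ) * (lam ^ (-s) * h ^ (-(3 / 4) : ℝ)) *
      volume E ^ (7 / 4 : ℝ) := by
    have weak := mul_volume_dyadicPositions_le_of_restrictedWeakType (C := C) (h := h) hE hlam hweak
    rw [ofReal_mul_toReal_rpow hM hlam0 hlam, mul_comm h,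
      ← ENNReal.le_div_iff_mul_le (Or.inl hh0) (Or.inl hh), ENNReal.div_eq_inv_mul,
      ENNReal.mul_rpow_of_nonneg _ _ (by norm_num)] at weak
    refine weak.trans_eq ?_
    rw [show (-(3 / 4) : ℝ) = -1 + 1 / 4 by norm_num, ENNReal.rpow_add _ _ hh0 hh,
      ENNReal.rpow_neg_one]
    ring
  have fubini_bound : x ≤ ω * (lam⁻¹ * h⁻¹) * volume E := by
    have fubini := mul_volume_dyadicPositions_le (C := C) (lam := lam) (h := h) hE
    rw [mul_comm lam, ← ENNReal.le_div_iff_mul_le (Or.inl hlam0) (Or.inl hlam), mul_comm h,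
      ← ENNReal.le_div_iff_mul_le (Or.inl hh0) (Or.inl hh)] at fubini
    refine fubini.trans_eq ?_
    simp only [div_eq_mul_inv]
    ring
  refine (le_interpolated_of_le (by norm_num) ha hb hc habc weak_bound fubini_bound
    (volume_dyadicPositions_le : x ≤ ω)).trans_eq ?_
  rw [rpow_neg_mul_add hlam0 hlam, rpow_neg_mul_add hh0 hh, ENNReal.mul_rpow_of_nonneg _ _ ha,
    ENNReal.mul_rpow_of_nonneg _ _ ha, ENNReal.mul_rpow_of_nonneg _ _ ha,
    ENNReal.mul_rpow_of_nonneg _ _ hb, ENNReal.mul_rpow_of_nonneg _ _ hb]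
  ring

end RichLines

section StrongTypeSets

variable {n : ℕ} {C q r a b c s : ℝ} {E : Set (Euc n × ℝ)}

/-- The `q`-th power of the mixed norm of `projXray g`, for positions in the unit ball and
directions in `B(0, C)`. -/
def localNikodym (C q r : ℝ) (g : Euc n × ℝ → ℝ≥0∞) : ℝ≥0∞ :=
  mixedLIntegral (volume.restrict (Metric.ball 0 1)) (volume.restrict (Metric.ball 0 C)) q r
    (projXray g)

lemma setLIntegral_projXray_indicator_rpow_le (hr : 0 < r) (hE : MeasurableSet E) (v : Euc n) :
    ∫⁻ z in Metric.ball 0 C, projXray (E.indicator 1) v z ^ r ≤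
      ∑' i : ℕ, (2 * (2⁻¹ * 2⁻¹ ^ i)) ^ r * richVolume C E (2⁻¹ * 2⁻¹ ^ i) v := by
  have measurable_fibre (i : ℕ) : MeasurableSet {z | (v, z) ∈ richLines C E (2⁻¹ * 2⁻¹ ^ i)} :=
    measurable_prodMk_left (measurableSet_richLines hE)
  have pointwise (z : Euc n) (hz : z ∈ Metric.ball 0 C) : projXray (E.indicator 1) v z ^ r ≤
      ∑' i : ℕ, (2 * (2⁻¹ * 2⁻¹ ^ i)) ^ r *
        {z | (v, z) ∈ richLines C E (2⁻¹ * 2⁻¹ ^ i)}.indicator 1 z := by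
    have projXray_le : projXray (E.indicator 1) v z ≤ 2 * 2⁻¹ := by
      rw [ENNReal.mul_inv_cancel two_ne_zero ofNat_ne_top]
      exact projXray_indicator_one_le_one hE v z
    refine (rpow_le_tsum_dyadic (by simp) projXray_le hr).trans
      (ENNReal.tsum_le_tsum fun i => mul_le_mul' le_rfl ?_)
    refine Set.indicator_apply_le' (fun h => ?_) fun _ => zero_le
    rw [Set.indicator_of_mem (show z ∈ {z | (v, z) ∈ richLines C E _} from ⟨hz, h.1⟩)]
    rfl
  calc _ ≤ ∫⁻ z, ∑' i : ℕ, (2 * (2⁻¹ * 2⁻¹ ^ i)) ^ r *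
        {z | (v, z) ∈ richLines C E (2⁻¹ * 2⁻¹ ^ i)}.indicator 1 z :=
        (setLIntegral_mono' measurableSet_ball pointwise).trans (setLIntegral_le_lintegral _ _)
    _ = _ := by
      rw [lintegral_tsum fun i =>
        ((measurable_one.indicator (measurable_fibre i)).const_mul _).aemeasurable]
      simp_rw [lintegral_const_mul _ (measurable_one.indicator (measurable_fibre _)),
        lintegral_indicator_one (measurable_fibre _), richVolume]

lemma richVolume_rpow_le (hs : 0 < s) (lam : ℝ≥0∞) {v : Euc n} (hv : v ∈ Metric.ball 0 1) :
    richVolume C E lam v ^ s ≤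
      ∑' m : ℕ, (2 * (volume (Metric.ball (0 : Euc n) C) / 2 * 2⁻¹ ^ m)) ^ s *
        (dyadicPositions C E lam
          (volume (Metric.ball (0 : Euc n) C) / 2 * 2⁻¹ ^ m)).indicator 1 v := by
  have richVolume_le : richVolume C E lam v ≤ 2 * (volume (Metric.ball (0 : Euc n) C) / 2) := by
    rw [ENNReal.mul_div_cancel two_ne_zero ofNat_ne_top]
    exact measure_mono fun z hz => hz.1
  refine (rpow_le_tsum_dyadic (ENNReal.div_ne_top measure_ball_lt_top.ne two_ne_zero)
    richVolume_le hs).trans (ENNReal.tsum_le_tsum fun m => mul_le_mul' le_rfl ?_)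
  refine Set.indicator_apply_le' (fun h => ?_) fun _ => zero_le
  rw [Set.indicator_of_mem (show v ∈ dyadicPositions C E lam _ from ⟨hv, h⟩)]
  rfl

lemma localNikodym_indicator_le_tsum (hq : 0 < q) (hr : 0 < r) (hqr : q ≤ r)
    (hE : MeasurableSet E) :
    localNikodym C q r (E.indicator 1) ≤ ∑' (i : ℕ) (m : ℕ), (2 * (2⁻¹ * 2⁻¹ ^ i)) ^ q *
      (2 * (volume (Metric.ball (0 : Euc n) C) / 2 * 2⁻¹ ^ m)) ^ (q / r) *
        volume (dyadicPositions C E (2⁻¹ * 2⁻¹ ^ i)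
          (volume (Metric.ball (0 : Euc n) C) / 2 * 2⁻¹ ^ m)) := by
  have hqr0 : 0 < q / r := by positivity
  set lev : ℕ → ℝ≥0∞ := fun i => 2⁻¹ * 2⁻¹ ^ i
  set ht : ℕ → ℝ≥0∞ := fun m => volume (Metric.ball (0 : Euc n) C) / 2 * 2⁻¹ ^ m
  have measurable_indicator (i m : ℕ) :
      Measurable ((dyadicPositions C E (lev i) (ht m)).indicator (1 : Euc n → ℝ≥0∞)) :=
    measurable_one.indicator (measurableSet_dyadicPositions hE)
  have pointwise (v : Euc n) (hv : v ∈ Metric.ball 0 1) :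
      (∫⁻ z in Metric.ball 0 C, projXray (E.indicator 1) v z ^ r) ^ (q / r) ≤
        ∑' (i : ℕ) (m : ℕ), (2 * lev i) ^ q * (2 * ht m) ^ (q / r) *
          (dyadicPositions C E (lev i) (ht m)).indicator 1 v := by
    calc _ ≤ ∑' i : ℕ, ((2 * lev i) ^ r * richVolume C E (lev i) v) ^ (q / r) :=
          (ENNReal.rpow_le_rpow (setLIntegral_projXray_indicator_rpow_le hr hE v) hqr0.le).trans
            (rpow_tsum_le_tsum_rpow _ hqr0 ((div_le_one hr).mpr hqr))
      _ ≤ _ := ENNReal.tsum_le_tsum fun i => by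
          rw [ENNReal.mul_rpow_of_nonneg _ _ hqr0.le, rpow_rpow_div hr.ne']
          simp_rw [mul_assoc, ENNReal.tsum_mul_left]
          exact mul_le_mul' le_rfl (richVolume_rpow_le hqr0 _ hv)
  refine (setLIntegral_mono' measurableSet_ball pointwise).trans
    ((setLIntegral_le_lintegral _ _).trans_eq ?_)
  rw [lintegral_tsum fun i =>
    (Measurable.tsum fun m => (measurable_indicator i m).const_mul _).aemeasurable]
  refine tsum_congr fun i => ?_
  rw [lintegral_tsum fun m => ((measurable_indicator i m).const_mul _).aemeasurable]
  simp_rw [lintegral_const_mul _ (measurable_indicator _ _),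
    lintegral_indicator_one (measurableSet_dyadicPositions hE)]
  rfl

lemma two_mul_rpow_mul_rpow_neg {x : ℝ≥0∞} (hx0 : x ≠ 0) (hx : x ≠ ⊤) {u : ℝ} (hu : 0 ≤ u)
    (w : ℝ) : (2 * x) ^ u * x ^ (-w) = 2 ^ u * x ^ (u - w) := by
  rw [ENNReal.mul_rpow_of_nonneg _ _ hu, sub_eq_add_neg, ENNReal.rpow_add _ _ hx0 hx, mul_assoc]

lemma exists_localNikodym_indicator_le_of_volume_dyadicPositions_le (hC : 0 < C) (hq : 0 < q)
    (hr : 0 < r) (hqr : q ≤ r) {D : ℝ≥0∞} (hD : D ≠ ⊤) {w₁ w₂ e : ℝ} (hw₁ : w₁ < q)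
    (hw₂ : w₂ < q / r)
    (bound : ∀ E : Set (Euc n × ℝ), MeasurableSet E → ∀ lam h : ℝ≥0∞, lam ≠ 0 → lam ≠ ⊤ → h ≠ 0 →
      h ≠ ⊤ → volume (dyadicPositions C E lam h) ≤ D * (lam ^ (-w₁) * h ^ (-w₂)) * volume E ^ e) :
    ∃ A : ℝ≥0∞, A ≠ ⊤ ∧ ∀ E : Set (Euc n × ℝ), MeasurableSet E →
      localNikodym C q r (E.indicator 1) ≤ A * volume E ^ e := by
  set κ := volume (Metric.ball (0 : Euc n) C) / 2
  have hκ0 : κ ≠ 0 := (ENNReal.half_pos (Metric.measure_ball_pos _ _ hC).ne').ne'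
  have hκ : κ ≠ ⊤ := ENNReal.div_ne_top measure_ball_lt_top.ne two_ne_zero
  have hqr0 : 0 ≤ q / r := by positivity
  have half_pow_ne_zero (k : ℕ) : (2⁻¹ : ℝ≥0∞) ^ k ≠ 0 := pow_ne_zero k (by simp)
  have half_pow_ne_top (k : ℕ) : (2⁻¹ : ℝ≥0∞) ^ k ≠ ⊤ := ENNReal.pow_ne_top (by simp)
  refine ⟨2 ^ q * 2 ^ (q / r) * D * ((∑' i : ℕ, (2⁻¹ * 2⁻¹ ^ i) ^ (q - w₁)) *
      ∑' m : ℕ, (κ * 2⁻¹ ^ m) ^ (q / r - w₂)), ?_, fun E hE => ?_⟩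
  · refine ENNReal.mul_ne_top (ENNReal.mul_ne_top (ENNReal.mul_ne_top ?_ ?_) hD)
      (ENNReal.mul_ne_top (tsum_mul_half_pow_rpow_ne_top (by simp) (sub_pos.mpr hw₁))
        (tsum_mul_half_pow_rpow_ne_top hκ (sub_pos.mpr hw₂)))
    all_goals exact ENNReal.rpow_ne_top_of_nonneg (by positivity) ofNat_ne_top
  calc localNikodym C q r (E.indicator 1)
    _ ≤ ∑' (i : ℕ) (m : ℕ), 2 ^ q * 2 ^ (q / r) * D * ((2⁻¹ * 2⁻¹ ^ i) ^ (q - w₁) *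
        (κ * 2⁻¹ ^ m) ^ (q / r - w₂)) * volume E ^ e := by
      refine (localNikodym_indicator_le_tsum hq hr hqr hE).trans
        (ENNReal.tsum_le_tsum fun i => ENNReal.tsum_le_tsum fun m => ?_)
      have hi0 : (2⁻¹ * 2⁻¹ ^ i : ℝ≥0∞) ≠ 0 := mul_ne_zero (by simp) (half_pow_ne_zero i)
      have hi : (2⁻¹ * 2⁻¹ ^ i : ℝ≥0∞) ≠ ⊤ := ENNReal.mul_ne_top (by simp) (half_pow_ne_top i)
      have hm0 : κ * 2⁻¹ ^ m ≠ 0 := mul_ne_zero hκ0 (half_pow_ne_zero m)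
      have hm : κ * 2⁻¹ ^ m ≠ ⊤ := ENNReal.mul_ne_top hκ (half_pow_ne_top m)
      refine (mul_le_mul' le_rfl (bound E hE _ _ hi0 hi hm0 hm)).trans_eq ?_
      calc _ = D * ((2 * (2⁻¹ * 2⁻¹ ^ i)) ^ q * (2⁻¹ * 2⁻¹ ^ i) ^ (-w₁)) *
            ((2 * (κ * 2⁻¹ ^ m)) ^ (q / r) * (κ * 2⁻¹ ^ m) ^ (-w₂)) * volume E ^ e := by ring
        _ = _ := by
          rw [two_mul_rpow_mul_rpow_neg hi0 hi hq.le, two_mul_rpow_mul_rpow_neg hm0 hm hqr0]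
          ring
    _ = _ := by simp_rw [ENNReal.tsum_mul_right, ENNReal.tsum_mul_left, ENNReal.tsum_mul_right]

-- The trivial bound by the volume of the unit ball, with weight `c`, absorbs the slack in `a + b`.
lemma exists_localNikodym_indicator_le (hn : 5 ≤ n) (hC : 0 < C) (hq : 0 < q) (hr : 0 < r)
    (hqr : q ≤ r) (ha : 0 ≤ a) (hb : 0 ≤ b) (hc : 0 ≤ c) (habc : a + b + c = 1) {η : ℝ}
    (hη : 0 < η) (hlev : (n + 7 / 4 + η) * a + b < q) (hht : 3 / 4 * a + b < q / r) :
    ∃ A : ℝ≥0∞, A ≠ ⊤ ∧ ∀ E : Set (Euc n × ℝ), MeasurableSet E →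
      localNikodym C q r (E.indicator 1) ≤ A * volume E ^ (7 / 4 * a + b) := by
  obtain ⟨M, hM, weak⟩ := exists_restrictedWeakType hn hη
  set ω := volume (Metric.ball (0 : Euc n) 1)
  have hω : ω ≠ ⊤ := measure_ball_lt_top.ne
  have const_ne_top : (ENNReal.ofReal M * 2 ^ (1 / 4 : ℝ)) ^ a * ω ^ b * ω ^ c ≠ ⊤ := by
    have hM2 : ENNReal.ofReal M * 2 ^ (1 / 4 : ℝ) ≠ ⊤ :=
      ENNReal.mul_ne_top ofReal_ne_top (ENNReal.rpow_ne_top_of_nonneg (by norm_num) ofNat_ne_top)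
    exact ENNReal.mul_ne_top (ENNReal.mul_ne_top (ENNReal.rpow_ne_top_of_nonneg ha hM2)
      (ENNReal.rpow_ne_top_of_nonneg hb hω)) (ENNReal.rpow_ne_top_of_nonneg hc hω)
  exact exists_localNikodym_indicator_le_of_volume_dyadicPositions_le hC hq hr hqr const_ne_top
    hlev hht fun E hE lam h hlam0 hlam hh0 hh =>
      volume_dyadicPositions_le_interpolated hE ha hb hc habc hM.le hlam0 hlam hh0 hh
        (weak _ (ENNReal.toReal_pos hlam0 hlam))

end StrongTypeSets

section SuperlevelSets

variable {α : Type*} {S : Set α} {g : α → ℝ≥0∞} {N : ℝ≥0∞}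

/-- The dyadic superlevel sets of a function vanishing outside `S`, starting from `S` itself, which
accounts for the values at most `N`. -/
def superlevelSets (S : Set α) (g : α → ℝ≥0∞) (N : ℝ≥0∞) : ℕ → Set α
  | 0 => S
  | k + 1 => {x | N * 2 ^ k < g x}

lemma le_tsum_mul_indicator_superlevelSets (hg : ∀ x ∉ S, g x = 0) (hN : N ≠ 0) (x : α) :
    g x ≤ ∑' k : ℕ, N * 2 ^ k * (superlevelSets S g N k).indicator 1 x := by
  by_cases hx : x ∉ S
  · simp [hg x hx]
  rw [not_not] at hx
  have truncated_le (k : ℕ) : min (g x) (N * 2 ^ k) ≤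
      ∑ j ∈ Finset.range (k + 1), N * 2 ^ j * (superlevelSets S g N j).indicator 1 x := by
    induction k with
    | zero => simp [superlevelSets, hx]
    | succ k ih =>
      rw [Finset.sum_range_succ]
      by_cases hk : N * 2 ^ k < g x
      · rw [min_eq_right hk.le] at ih
        rw [Set.indicator_of_mem (show x ∈ superlevelSets S g N (k + 1) from hk)]
        calc min (g x) (N * 2 ^ (k + 1)) ≤ N * 2 ^ (k + 1) := min_le_right _ _
          _ ≤ _ := by simp
      · rw [min_eq_left (not_lt.mp hk)] at ih
        exact (min_le_left _ _).trans (ih.trans le_self_add)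
  have tendsto_top : Filter.Tendsto (fun k : ℕ => N * 2 ^ k) Filter.atTop (nhds (N * ⊤)) :=
    ENNReal.Tendsto.const_mul (ENNReal.tendsto_pow_atTop_nhds_top_iff.mpr one_lt_two)
      (Or.inl top_ne_zero)
  rw [ENNReal.mul_top hN] at tendsto_top
  have tendsto_min := (tendsto_const_nhds (x := g x)).min tendsto_top
  rw [min_eq_left le_top] at tendsto_min
  exact le_of_tendsto' tendsto_min fun k => (truncated_le k).trans (ENNReal.sum_le_tsum _)

variable [MeasurableSpace α] {μ : Measure α} {p : ℝ}

lemma measurableSet_superlevelSets (hS : MeasurableSet S) (hg : Measurable g) (k : ℕ) :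
    MeasurableSet (superlevelSets S g N k) := by
  cases k with
  | zero => exact hS
  | succ k => exact measurableSet_lt measurable_const hg

lemma measure_superlevelSets_le (hg : Measurable g) (hp : 0 < p) (hN0 : N ≠ 0) (hN : N ≠ ⊤)
    (hgN : ∫⁻ x, g x ^ p ∂μ ≤ N ^ p) (k : ℕ) :
    μ (superlevelSets S g N k) ≤ (2 ^ p + μ S) * (2 ^ (-p)) ^ k := by
  cases k with
  | zero => simp [superlevelSets]
  | succ k =>
    have level_ne_zero : N * 2 ^ k ≠ 0 := mul_ne_zero hN0 (by simp)
    have level_ne_top : N * 2 ^ k ≠ ⊤ := ENNReal.mul_ne_top hN (by simp)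
    have pow_eq : (2 : ℝ≥0∞) ^ p * (2 ^ (-p)) ^ (k + 1) = (2 ^ (-p)) ^ k := by
      rw [pow_succ', ← mul_assoc, ← ENNReal.rpow_add _ _ two_ne_zero ofNat_ne_top, add_neg_cancel,
        ENNReal.rpow_zero, one_mul]
    calc μ (superlevelSets S g N (k + 1)) ≤ μ {x | (N * 2 ^ k) ^ p ≤ g x ^ p} :=
          measure_mono fun x hx => ENNReal.rpow_le_rpow (le_of_lt hx) hp.le
      _ ≤ (∫⁻ x, g x ^ p ∂μ) / (N * 2 ^ k) ^ p :=
          meas_ge_le_lintegral_div (hg.pow_const p).aemeasurable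
            (ENNReal.rpow_pos (pos_iff_ne_zero.mpr level_ne_zero) level_ne_top).ne'
            (ENNReal.rpow_ne_top_of_nonneg hp.le level_ne_top)
      _ ≤ N ^ p / (N * 2 ^ k) ^ p := by gcongr
      _ = (2 ^ (-p)) ^ k := by
          rw [← ENNReal.div_rpow_of_nonneg _ _ hp.le, ENNReal.rpow_neg, ← ENNReal.inv_rpow,
            ← pow_rpow_comm, ← ENNReal.inv_pow]
          congr 1
          rw [ENNReal.div_eq_inv_mul, ENNReal.mul_inv (Or.inl hN0) (Or.inl hN), mul_right_comm,
            ENNReal.inv_mul_cancel hN0 hN, one_mul]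
      _ ≤ _ := by
          rw [add_mul, pow_eq]
          exact le_self_add

end SuperlevelSets

section StrongTypeFunctions

variable {n : ℕ} {C p q r e : ℝ} {g : Euc n × ℝ → ℝ≥0∞}

lemma localNikodym_mono (hq : 0 ≤ q) (hr : 0 ≤ r) {g' : Euc n × ℝ → ℝ≥0∞} (h : ∀ x, g x ≤ g' x) :
    localNikodym C q r g ≤ localNikodym C q r g' :=
  mixedLIntegral_mono hq hr (projXray_mono h)

lemma localNikodym_const_mul (hq : 0 ≤ q) (hr : 0 < r) (hg : Measurable g) (c : ℝ≥0∞) :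
    localNikodym C q r (fun x => c * g x) = c ^ q * localNikodym C q r g := by
  unfold localNikodym
  rw [← mixedLIntegral_const_mul hq hr (measurable_projXray hg)]
  congr 1
  ext v z
  exact projXray_const_mul hg c v z

lemma exists_localNikodym_tsum_le_of_geometric (hq : 0 < q) (hr : 0 < r) (hqr : q ≤ r) {τ : ℝ≥0∞}
    (hτ0 : τ ≠ 0) (hτ1 : τ < 1) :
    ∃ A : ℝ≥0∞, A ≠ ⊤ ∧ ∀ {g : ℕ → Euc n × ℝ → ℝ≥0∞} {B : ℝ≥0∞}, (∀ k, Measurable (g k)) →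
      (∀ k, localNikodym C q r (g k) ≤ B * τ ^ k) →
      localNikodym C q r (fun x => ∑' k, g k x) ≤ A * B := by
  obtain ⟨A, hA, sum_le⟩ := exists_mixedLIntegral_tsum_le_of_geometric hq hr hqr hτ0 hτ1
  refine ⟨A, hA, fun {g B} hg bound => ?_⟩
  unfold localNikodym
  rw [show projXray (fun x => ∑' k, g k x) = fun v z => ∑' k, projXray (g k) v z from
    funext₂ (projXray_tsum hg)]
  exact sum_le (fun k => measurable_projXray (hg k)) bound

lemma exists_localNikodym_le_of_lintegral_le (hq : 0 < q) (hr : 0 < r) (hqr : q ≤ r) (hp : 0 < p)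
    (hqe : q < p * e) {A : ℝ≥0∞} (hA : A ≠ ⊤)
    (bound : ∀ E : Set (Euc n × ℝ), MeasurableSet E →
      localNikodym C q r (E.indicator 1) ≤ A * volume E ^ e)
    {S : Set (Euc n × ℝ)} (hS : MeasurableSet S) (hS_top : volume S ≠ ⊤) :
    ∃ A' : ℝ≥0∞, A' ≠ ⊤ ∧ ∀ g : Euc n × ℝ → ℝ≥0∞, Measurable g → (∀ x ∉ S, g x = 0) →
      ∀ N : ℝ≥0∞, N ≠ 0 → N ≠ ⊤ → ∫⁻ x, g x ^ p ≤ N ^ p → localNikodym C q r g ≤ A' * N ^ q := by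
  have he : 0 < e := pos_of_mul_pos_right (hq.trans hqe) hp.le
  set τ : ℝ≥0∞ := 2 ^ (q - p * e)
  have hτ0 : τ ≠ 0 := (ENNReal.rpow_pos two_pos ofNat_ne_top).ne'
  have hτ1 : τ < 1 := ENNReal.rpow_lt_one_of_one_lt_of_neg one_lt_two (sub_neg.mpr hqe)
  have two_rpow_ne_top : (2 : ℝ≥0∞) ^ p ≠ ⊤ := ENNReal.rpow_ne_top_of_nonneg hp.le ofNat_ne_top
  obtain ⟨A₁, hA₁, sum_le⟩ :=
    exists_localNikodym_tsum_le_of_geometric (n := n) (C := C) hq hr hqr hτ0 hτ1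
  refine ⟨A₁ * (A * (2 ^ p + volume S) ^ e), ENNReal.mul_ne_top hA₁ (ENNReal.mul_ne_top hA
    (ENNReal.rpow_ne_top_of_nonneg he.le (ENNReal.add_ne_top.mpr ⟨two_rpow_ne_top, hS_top⟩))),
    fun g hg hgS N hN0 hN hgN => ?_⟩
  have measurable_level (k : ℕ) := measurableSet_superlevelSets (N := N) hS hg k
  have level_bound (k : ℕ) : localNikodym C q r
      (fun x => N * 2 ^ k * (superlevelSets S g N k).indicator 1 x) ≤
        A * (2 ^ p + volume S) ^ e * N ^ q * τ ^ k := by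
    rw [localNikodym_const_mul hq.le hr (measurable_one.indicator (measurable_level k))]
    calc _ ≤ (N * 2 ^ k) ^ q * (A * ((2 ^ p + volume S) * (2 ^ (-p)) ^ k) ^ e) := by
          gcongr
          exact (bound _ (measurable_level k)).trans
            (by gcongr; exact measure_superlevelSets_le hg hp hN0 hN hgN k)
      _ = A * (2 ^ p + volume S) ^ e * N ^ q * (2 ^ q * (2 ^ (-p)) ^ e) ^ k := by
          rw [ENNReal.mul_rpow_of_nonneg _ _ hq.le, ENNReal.mul_rpow_of_nonneg _ _ he.le,
            pow_rpow_comm, pow_rpow_comm, mul_pow]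
          ring
      _ = _ := by
          rw [← ENNReal.rpow_mul, ← ENNReal.rpow_add _ _ two_ne_zero ofNat_ne_top, neg_mul,
            ← sub_eq_add_neg]
  refine (localNikodym_mono hq.le hr.le (le_tsum_mul_indicator_superlevelSets hgS hN0)).trans ?_
  rw [mul_assoc]
  exact sum_le (fun k => (measurable_one.indicator (measurable_level k)).const_mul _) level_bound

lemma exists_localNikodym_le (hq : 0 < q) (hr : 0 < r) (hqr : q ≤ r) (hp : 0 < p)
    (hqe : q < p * e) {A : ℝ≥0∞} (hA : A ≠ ⊤)
    (bound : ∀ E : Set (Euc n × ℝ), MeasurableSet E →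
      localNikodym C q r (E.indicator 1) ≤ A * volume E ^ e)
    {S : Set (Euc n × ℝ)} (hS : MeasurableSet S) (hS_top : volume S ≠ ⊤) :
    ∃ A' : ℝ≥0∞, A' ≠ ⊤ ∧ ∀ g : Euc n × ℝ → ℝ≥0∞, Measurable g → (∀ x ∉ S, g x = 0) →
      localNikodym C q r g ≤ A' * (∫⁻ x, g x ^ p) ^ (q / p) := by
  obtain ⟨A', hA', normalised⟩ :=
    exists_localNikodym_le_of_lintegral_le hq hr hqr hp hqe hA bound hS hS_top
  refine ⟨A' + 1, by simp [hA'], fun g hg hgS => ?_⟩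
  set I := ∫⁻ x, g x ^ p
  rcases eq_or_ne I ⊤ with hI | hI
  · simp [hI, ENNReal.top_rpow_of_pos (div_pos hq hp)]
  have hN_top : I ^ (1 / p) < ⊤ := (ENNReal.rpow_ne_top_of_nonneg (by positivity) hI).lt_top
  have limit : Filter.Tendsto (fun N : ℝ≥0∞ => A' * N ^ q)
      (nhdsWithin (I ^ (1 / p)) (Set.Ioi (I ^ (1 / p)))) (nhds (A' * (I ^ (1 / p)) ^ q)) :=
    (ENNReal.Tendsto.const_mul (ENNReal.continuous_rpow_const.tendsto _)
      (Or.inr hA')).mono_left nhdsWithin_le_nhds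
  have : (nhdsWithin (I ^ (1 / p)) (Set.Ioi (I ^ (1 / p)))).NeBot :=
    nhdsGT_neBot_of_exists_gt ⟨⊤, hN_top⟩
  calc localNikodym C q r g ≤ A' * (I ^ (1 / p)) ^ q := by
        refine ge_of_tendsto limit ?_
        filter_upwards [Ioo_mem_nhdsGT hN_top] with N hN
        refine normalised g hg hgS N (pos_of_gt hN.1).ne' hN.2.ne ?_
        rw [← ENNReal.rpow_inv_le_iff hp, ← one_div]
        exact hN.1.le
    _ = A' * I ^ (q / p) := by rw [← ENNReal.rpow_mul, one_div_mul_eq_div]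
    _ ≤ _ := by gcongr; exact le_self_add

end StrongTypeFunctions

lemma measure_mul_lintegral_eq_lintegral_translates {G : Type*} [AddGroup G] [MeasurableSpace G]
    [MeasurableAdd₂ G] {μ : Measure G} [SFinite μ] [μ.IsAddLeftInvariant] {U : Set G}
    {H : G → ℝ≥0∞} (hH : Measurable H) :
    μ U * ∫⁻ x, H x ∂μ = ∫⁻ y, ∫⁻ x in U, H (x + y) ∂μ ∂μ := by
  rw [lintegral_lintegral_swap (by fun_prop)]
  simp_rw [lintegral_add_left_eq_self H, setLIntegral_const, mul_comm]

section Globalisation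

variable {n : ℕ} {C p q r : ℝ} {g : Euc n × ℝ → ℝ≥0∞} {B : Set (Euc n)}

/-- The cylinder over `B` with the time coordinate of the lines in `projXray`. -/
def unitCylinder (B : Set (Euc n)) : Set (Euc n × ℝ) := B ×ˢ Set.Ico 0 1

lemma measurableSet_unitCylinder (hB : MeasurableSet B) : MeasurableSet (unitCylinder B) :=
  hB.prod measurableSet_Ico

lemma volume_unitCylinder (B : Set (Euc n)) : volume (unitCylinder B) = volume B := by
  simp [unitCylinder, Measure.volume_eq_prod, Measure.prod_prod]

/-- The function `g` seen from a frame moving with velocity `c`, cut off to the cylinder over `B`.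
Moving frames translate the positions of lines and preserve their directions, so they reduce an
estimate over all positions to one over bounded positions. -/
def galileanShift (B : Set (Euc n)) (g : Euc n × ℝ → ℝ≥0∞) (c : Euc n) : Euc n × ℝ → ℝ≥0∞ :=
  (unitCylinder B).indicator fun x => g (x.1 + (1 + x.2) • c, x.2)

lemma measurable_galileanShift (hB : MeasurableSet B) (hg : Measurable g) :
    Measurable fun y : Euc n × (Euc n × ℝ) => galileanShift B g y.1 y.2 :=
  (hg.comp (by fun_prop : Measurable fun y : Euc n × (Euc n × ℝ) =>
    (y.2.1 + (1 + y.2.2) • y.1, y.2.2))).indicator (measurable_snd (measurableSet_unitCylinder hB))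

lemma galileanShift_eq_zero {x : Euc n × ℝ} (hx : x ∉ unitCylinder B) (c : Euc n) :
    galileanShift B g c x = 0 :=
  Set.indicator_of_notMem hx _

lemma galileanShift_le (c : Euc n) (x : Euc n × ℝ) :
    galileanShift B g c x ≤ g (x.1 + (1 + x.2) • c, x.2) :=
  Set.indicator_le_self _ _ x

lemma projXray_galileanShift {c v z : Euc n} (hv : v ∈ Metric.ball 0 1)
    (hz : z ∈ Metric.ball 0 C) :
    projXray (galileanShift (Metric.ball 0 (C + 2)) g c) v z = projXray g (v + c) z := by
  refine setLIntegral_congr_fun measurableSet_Ico fun s hs => ?_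
  have line_mem : (z + (1 + s) • v, s) ∈ unitCylinder (Metric.ball (0 : Euc n) (C + 2)) := by
    refine ⟨?_, hs⟩
    rw [mem_ball_zero_iff] at hv hz ⊢
    have speed_pos : 0 < 1 + s := by linarith [hs.1]
    calc ‖z + (1 + s) • v‖ ≤ ‖z‖ + ‖(1 + s) • v‖ := norm_add_le _ _
      _ = ‖z‖ + (1 + s) * ‖v‖ := by rw [norm_smul, Real.norm_of_nonneg speed_pos.le]
      _ < C + 2 := by nlinarith [norm_nonneg v, hs.2]
  simp only [galileanShift, Set.indicator_of_mem line_mem]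
  congr 2
  module

lemma lintegral_galileanShift_rpow_le (hB : MeasurableSet B) (hg : Measurable g) (hp : 0 ≤ p)
    (c : Euc n) : ∫⁻ x, galileanShift B g c x ^ p ≤ ∫⁻ x, g x ^ p := by
  have measurable_shift : Measurable (galileanShift B g c) :=
    (measurable_galileanShift hB hg).of_uncurry_left
  rw [Measure.volume_eq_prod, lintegral_prod_symm' _ (measurable_shift.pow_const p),
    lintegral_prod_symm' _ (hg.pow_const p)]
  refine lintegral_mono fun s => ?_
  calc ∫⁻ w, galileanShift B g c (w, s) ^ p ≤ ∫⁻ w, g (w + (1 + s) • c, s) ^ p := by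
        gcongr with w
        exact galileanShift_le c (w, s)
    _ = ∫⁻ w, g (w, s) ^ p := lintegral_add_right_eq_self (fun w => g (w, s) ^ p) _

lemma lintegral_shift_galileanShift_rpow_le (hp : 0 < p) (x : Euc n × ℝ) :
    ∫⁻ c, galileanShift B g c x ^ p ≤ B.indicator 1 x.1 * ∫⁻ w, g (w, x.2) ^ p := by
  by_cases hx : x ∈ unitCylinder B
  · have one_le_speed : 1 ≤ 1 + x.2 := by linarith [hx.2.1]
    have jacobian_le_one : ENNReal.ofReal (|(1 + x.2)⁻¹| ^ Module.finrank ℝ (Euc n)) ≤ 1 := by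
      rw [ENNReal.ofReal_le_one, abs_of_pos (by positivity)]
      exact pow_le_one₀ (by positivity) (inv_le_one_of_one_le₀ one_le_speed)
    calc ∫⁻ c, galileanShift B g c x ^ p ≤ ∫⁻ c, g (x.1 + (1 + x.2) • c, x.2) ^ p := by
          gcongr with c
          exact galileanShift_le c x
      _ = ENNReal.ofReal (|(1 + x.2)⁻¹| ^ Module.finrank ℝ (Euc n)) * ∫⁻ w, g (w, x.2) ^ p :=
          lintegral_comp_add_smul volume (fun w => g (w, x.2) ^ p) x.1 (by positivity)
      _ ≤ B.indicator 1 x.1 * ∫⁻ w, g (w, x.2) ^ p := by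
          rw [Set.indicator_of_mem hx.1]
          exact mul_le_mul' jacobian_le_one le_rfl
  · simp [galileanShift_eq_zero hx, hp]

lemma lintegral_lintegral_galileanShift_rpow_le (hB : MeasurableSet B) (hg : Measurable g)
    (hp : 0 < p) :
    ∫⁻ c, ∫⁻ x, galileanShift B g c x ^ p ≤ volume B * ∫⁻ x, g x ^ p := by
  have measurable_slice : Measurable fun s : ℝ => ∫⁻ w, g (w, s) ^ p :=
    (hg.pow_const p).lintegral_prod_left'
  calc ∫⁻ c, ∫⁻ x, galileanShift B g c x ^ p = ∫⁻ x, ∫⁻ c, galileanShift B g c x ^ p :=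
        lintegral_lintegral_swap ((measurable_galileanShift hB hg).pow_const p).aemeasurable
    _ ≤ ∫⁻ x : Euc n × ℝ, B.indicator 1 x.1 * ∫⁻ w, g (w, x.2) ^ p :=
        lintegral_mono fun x => lintegral_shift_galileanShift_rpow_le hp x
    _ = (∫⁻ w, B.indicator 1 w) * ∫⁻ s, ∫⁻ w, g (w, s) ^ p :=
        lintegral_prod_mul (measurable_one.indicator hB).aemeasurable
          measurable_slice.aemeasurable
    _ = volume B * ∫⁻ x, g x ^ p := by
        rw [lintegral_indicator_one hB, Measure.volume_eq_prod (Euc n) ℝ,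
          lintegral_prod_symm' _ (hg.pow_const p)]

lemma localNikodym_galileanShift (c : Euc n) :
    localNikodym C q r (galileanShift (Metric.ball 0 (C + 2)) g c) =
      ∫⁻ v in Metric.ball 0 1, (∫⁻ z in Metric.ball 0 C, projXray g (v + c) z ^ r) ^ (q / r) := by
  refine setLIntegral_congr_fun measurableSet_ball fun v hv => ?_
  congr 1
  refine setLIntegral_congr_fun measurableSet_ball fun z hz => ?_
  simp only [projXray_galileanShift hv hz]

-- Here `p ≤ q` lets the `q / p`-th powers of the local norms be summed over all frames.
lemma mixedLIntegral_projXray_le_of_localNikodym_le (hp : 0 < p) (hpq : p ≤ q)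
    {A : ℝ≥0∞} (bound : ∀ g : Euc n × ℝ → ℝ≥0∞, Measurable g →
      (∀ x ∉ unitCylinder (Metric.ball 0 (C + 2)), g x = 0) →
      localNikodym C q r g ≤ A * (∫⁻ x, g x ^ p) ^ (q / p)) (hg : Measurable g) :
    volume (Metric.ball (0 : Euc n) 1) *
        mixedLIntegral volume (volume.restrict (Metric.ball 0 C)) q r (projXray g) ≤
      A * volume (Metric.ball (0 : Euc n) (C + 2)) * (∫⁻ x, g x ^ p) ^ (q / p) := by
  set I := ∫⁻ x, g x ^ p
  set shift := galileanShift (Metric.ball 0 (C + 2)) g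
  have measurable_shift := measurable_galileanShift (measurableSet_ball (x := 0) (ε := C + 2)) hg
  have rpow_split (x : ℝ≥0∞) : x ^ (q / p) = x ^ (q / p - 1) * x := by
    nth_rw 1 [← sub_add_cancel (q / p) 1]
    rw [ENNReal.rpow_add_of_nonneg _ _ (sub_nonneg.mpr ((one_le_div hp).mpr hpq)) zero_le_one,
      ENNReal.rpow_one]
  have frame_bound (c : Euc n) :
      localNikodym C q r (shift c) ≤ A * I ^ (q / p - 1) * ∫⁻ x, shift c x ^ p := by
    refine (bound _ measurable_shift.of_uncurry_left
      fun x hx => galileanShift_eq_zero hx c).trans ?_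
    rw [rpow_split, mul_assoc]
    gcongr
    · exact sub_nonneg.mpr ((one_le_div hp).mpr hpq)
    · exact lintegral_galileanShift_rpow_le measurableSet_ball hg hp.le c
  calc _ = ∫⁻ c, localNikodym C q r (shift c) := by
        simp_rw [shift, localNikodym_galileanShift]
        exact measure_mul_lintegral_eq_lintegral_translates
          (measurable_rpow_lintegral_rpow (measurable_projXray hg))
    _ ≤ ∫⁻ c, A * I ^ (q / p - 1) * ∫⁻ x, shift c x ^ p := lintegral_mono frame_bound
    _ = A * I ^ (q / p - 1) * ∫⁻ c, ∫⁻ x, shift c x ^ p :=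
        lintegral_const_mul _ (measurable_shift.pow_const p).lintegral_prod_right'
    _ ≤ A * I ^ (q / p - 1) * (volume (Metric.ball (0 : Euc n) (C + 2)) * I) := by
        gcongr
        exact lintegral_lintegral_galileanShift_rpow_le measurableSet_ball hg hp
    _ = _ := by rw [rpow_split I]; ring

lemma exists_mixedLIntegral_projXray_le (hp : 0 < p) (hpq : p ≤ q) {A : ℝ≥0∞} (hA : A ≠ ⊤)
    (bound : ∀ g : Euc n × ℝ → ℝ≥0∞, Measurable g →
      (∀ x ∉ unitCylinder (Metric.ball 0 (C + 2)), g x = 0) →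
      localNikodym C q r g ≤ A * (∫⁻ x, g x ^ p) ^ (q / p)) :
    ∃ A' : ℝ≥0∞, A' ≠ ⊤ ∧ ∀ g : Euc n × ℝ → ℝ≥0∞, Measurable g →
      mixedLIntegral volume (volume.restrict (Metric.ball 0 C)) q r (projXray g) ≤
        A' * (∫⁻ x, g x ^ p) ^ (q / p) := by
  have ball_ne_zero : volume (Metric.ball (0 : Euc n) 1) ≠ 0 :=
    (Metric.measure_ball_pos _ _ one_pos).ne'
  refine ⟨(volume (Metric.ball (0 : Euc n) 1))⁻¹ *
    (A * volume (Metric.ball (0 : Euc n) (C + 2))), ENNReal.mul_ne_top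
      (ENNReal.inv_ne_top.mpr ball_ne_zero) (ENNReal.mul_ne_top hA measure_ball_lt_top.ne),
    fun g hg => ?_⟩
  rw [mul_assoc, ← ENNReal.mul_le_iff_le_inv ball_ne_zero measure_ball_lt_top.ne]
  exact mixedLIntegral_projXray_le_of_localNikodym_le hp hpq bound hg

end Globalisation

section ProjectivePullback

variable {n : ℕ} {C p q r h : ℝ} {f : Euc n × ℝ → ℝ≥0∞}

lemma image_div_one_add_Ico (hh : 0 < h) :
    (fun s => h / (1 + s)) '' Set.Ico 0 1 = Set.Ioc (h / 2) h := by
  ext t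
  constructor
  · rintro ⟨s, ⟨hs0, hs1⟩, rfl⟩
    exact ⟨div_lt_div_of_pos_left hh (by linarith) (by linarith),
      div_le_self hh.le (by linarith)⟩
  · rintro ⟨ht0, ht1⟩
    have t_pos : 0 < t := by linarith
    refine ⟨h / t - 1, ⟨?_, ?_⟩, by simp [hh.ne']⟩
    · rwa [sub_nonneg, one_le_div t_pos]
    · rw [sub_lt_iff_lt_add, div_lt_iff₀ t_pos]
      linarith

lemma setLIntegral_Ioc_half_eq (φ : ℝ → ℝ≥0∞) (hh : 0 < h) :
    ∫⁻ t in Set.Ioc (h / 2) h, φ t =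
      ∫⁻ s in Set.Ico 0 1, ENNReal.ofReal (h / (1 + s) ^ 2) * φ (h / (1 + s)) := by
  have hasDeriv {s : ℝ} (hs : s ∈ Set.Ico 0 1) :
      HasDerivWithinAt (fun s => h / (1 + s)) (-(h / (1 + s) ^ 2)) (Set.Ico 0 1) s := by
    have one_add_ne_zero : 1 + s ≠ 0 := by linarith [hs.1]
    rw [← neg_div, ← mul_neg_one, mul_div_assoc]
    exact (((hasDerivAt_id s).const_add 1).inv one_add_ne_zero |>.const_mul h).hasDerivWithinAt
  have injOn : Set.InjOn (fun s => h / (1 + s)) (Set.Ico 0 1) := fun s _ s' _ heq => by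
    simpa [div_eq_mul_inv, hh.ne'] using heq
  rw [← image_div_one_add_Ico hh, lintegral_image_eq_lintegral_abs_deriv_mul measurableSet_Ico
    (fun s => hasDeriv) injOn]
  refine setLIntegral_congr_fun measurableSet_Ico fun s _ => ?_
  simp only [abs_neg, abs_of_nonneg (show 0 ≤ h / (1 + s) ^ 2 by positivity)]

/-- The pullback of `f`, restricted to `h / 2 < t ≤ h`, under the projective map
`(z, s) ↦ (t • z, t)` with `t = h / (1 + s)`. It carries the Jacobian of `s ↦ t` as a weight, so
that integrals along lines are preserved. -/
def projectivePullback (h : ℝ) (f : Euc n × ℝ → ℝ≥0∞) : Euc n × ℝ → ℝ≥0∞ :=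
  {x | x.2 ∈ Set.Ico 0 1}.indicator fun x =>
    ENNReal.ofReal (h / (1 + x.2) ^ 2) * f ((h / (1 + x.2)) • x.1, h / (1 + x.2))

lemma measurable_projectivePullback (hf : Measurable f) (h : ℝ) :
    Measurable (projectivePullback h f) :=
  (Measurable.mul (by fun_prop) (hf.comp (by fun_prop))).indicator
    (measurable_snd measurableSet_Ico)

lemma projectivePullback_of_mem {s : ℝ} (hs : s ∈ Set.Ico 0 1) (f : Euc n × ℝ → ℝ≥0∞)
    (w : Euc n) : projectivePullback h f (w, s) =
      ENNReal.ofReal (h / (1 + s) ^ 2) * f ((h / (1 + s)) • w, h / (1 + s)) :=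
  Set.indicator_of_mem (show (w, s) ∈ {x : Euc n × ℝ | x.2 ∈ Set.Ico 0 1} from hs) _

lemma projectivePullback_of_notMem {s : ℝ} (hs : s ∉ Set.Ico 0 1) (f : Euc n × ℝ → ℝ≥0∞)
    (w : Euc n) : projectivePullback h f (w, s) = 0 :=
  Set.indicator_of_notMem (show (w, s) ∉ {x : Euc n × ℝ | x.2 ∈ Set.Ico 0 1} from hs) _

/-- The part of the x-ray transform coming from heights `h / 2 < t ≤ h`. The position of the line
comes first, in the order in which `nikodymMixedNorm` integrates. -/
def xraySlab (h : ℝ) (f : Euc n × ℝ → ℝ≥0∞) (x ξ : Euc n) : ℝ≥0∞ :=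
  ∫⁻ t in Set.Ioc (h / 2) h, f (x + t • ξ, t)

lemma measurable_xraySlab (hf : Measurable f) (h : ℝ) :
    Measurable (Function.uncurry (xraySlab h f)) := by
  unfold xraySlab Function.uncurry
  fun_prop

lemma xraySlab_eq_projXray (hh : 0 < h) (f : Euc n × ℝ → ℝ≥0∞) (x ξ : Euc n) :
    xraySlab h f x ξ = projXray (projectivePullback h f) (h⁻¹ • x) ξ := by
  rw [xraySlab, setLIntegral_Ioc_half_eq _ hh]
  refine setLIntegral_congr_fun measurableSet_Ico fun s hs => ?_
  have one_add_ne_zero : 1 + s ≠ 0 := by linarith [hs.1]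
  have point_eq : x + (h / (1 + s)) • ξ = (h / (1 + s)) • (ξ + (1 + s) • h⁻¹ • x) := by
    rw [smul_add, smul_smul, smul_smul, add_comm,
      show h / (1 + s) * (1 + s) * h⁻¹ = 1 by field_simp, one_smul]
  simp only [projectivePullback_of_mem hs, point_eq]

lemma xrayT_le_tsum_xraySlab (f : Euc n × ℝ → ℝ≥0∞) (ξ x : Euc n) :
    xrayT f ξ x ≤ ∑' k : ℕ, xraySlab ((1 / 2) ^ k) f x ξ := by
  have Ioc_subset : Set.Ioc (0 : ℝ) 1 ⊆ ⋃ k : ℕ, Set.Ioc ((1 / 2) ^ k / 2) ((1 / 2) ^ k) := by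
    rintro t ⟨ht0, ht1⟩
    obtain ⟨k, lt_t, t_le⟩ := exists_nat_pow_near_of_lt_one ht0 ht1 (one_half_pos (α := ℝ))
      one_half_lt_one
    refine Set.mem_iUnion.mpr ⟨k, ?_, t_le⟩
    rwa [pow_succ, mul_one_div] at lt_t
  exact (lintegral_mono_set Ioc_subset).trans (lintegral_iUnion_le _ _)

lemma rpow_mul_inv_pow_le (n : ℕ) (hh : 0 < h) (hp : 1 ≤ p) {s : ℝ} (hs : s ∈ Set.Ico 0 1) :
    (h / (1 + s) ^ 2) ^ p * (h / (1 + s))⁻¹ ^ n ≤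
      2 ^ n * h ^ (p - 1 - n) * (h / (1 + s) ^ 2) := by
  have one_le : 1 ≤ 1 + s := by linarith [hs.1]
  have weight_pos : 0 < h / (1 + s) ^ 2 := by positivity
  have weight_rpow : (h / (1 + s) ^ 2) ^ p = (h / (1 + s) ^ 2) ^ (p - 1) * (h / (1 + s) ^ 2) := by
    rw [← Real.rpow_add_one weight_pos.ne', sub_add_cancel]
  have height_inv_le : (h / (1 + s))⁻¹ ≤ 2 * h⁻¹ := by
    rw [inv_div, div_eq_mul_inv]
    gcongr
    linarith [hs.2]
  calc (h / (1 + s) ^ 2) ^ p * (h / (1 + s))⁻¹ ^ n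
      ≤ h ^ (p - 1) * (h / (1 + s) ^ 2) * (2 * h⁻¹) ^ n := by
        rw [weight_rpow]
        gcongr
        exact div_le_self hh.le (one_le_pow₀ one_le)
    _ = 2 ^ n * h ^ (p - 1 - n) * (h / (1 + s) ^ 2) := by
        rw [Real.rpow_sub hh (p - 1), Real.rpow_natCast, mul_pow, inv_pow]
        ring

lemma lintegral_slice_projectivePullback_rpow_le (hf : Measurable f) (hh : 0 < h) (hp : 1 ≤ p)
    {s : ℝ} (hs : s ∈ Set.Ico 0 1) :
    ∫⁻ w, projectivePullback h f (w, s) ^ p ≤ ENNReal.ofReal (2 ^ n * h ^ (p - 1 - n)) *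
      (ENNReal.ofReal (h / (1 + s) ^ 2) * ∫⁻ w, f (w, h / (1 + s)) ^ p) := by
  have one_add_pos : 0 < 1 + s := by linarith [hs.1]
  have p_nonneg : 0 ≤ p := by linarith
  calc ∫⁻ w, projectivePullback h f (w, s) ^ p
      = ∫⁻ w : Euc n, ENNReal.ofReal (h / (1 + s) ^ 2) ^ p *
          f (0 + (h / (1 + s)) • w, h / (1 + s)) ^ p := by
        refine lintegral_congr fun w => ?_
        rw [projectivePullback_of_mem hs, ENNReal.mul_rpow_of_nonneg _ _ p_nonneg, zero_add]
    _ = ENNReal.ofReal ((h / (1 + s) ^ 2) ^ p * (h / (1 + s))⁻¹ ^ n) *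
          ∫⁻ w, f (w, h / (1 + s)) ^ p := by
        rw [lintegral_const_mul _ (by fun_prop),
          lintegral_comp_add_smul volume (fun w => f (w, h / (1 + s)) ^ p) 0 (by positivity),
          abs_of_pos (by positivity), finrank_euclideanSpace_fin, ← mul_assoc,
          ENNReal.ofReal_rpow_of_pos (by positivity), ← ENNReal.ofReal_mul (by positivity)]
    _ ≤ _ := by
        rw [← mul_assoc, ← ENNReal.ofReal_mul (by positivity)]
        exact mul_le_mul' (ENNReal.ofReal_le_ofReal (rpow_mul_inv_pow_le n hh hp hs)) le_rfl

lemma lintegral_projectivePullback_rpow_le (hf : Measurable f) (hh : 0 < h) (hp : 1 ≤ p) :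
    ∫⁻ x, projectivePullback h f x ^ p ≤
      ENNReal.ofReal (2 ^ n * h ^ (p - 1 - n)) * ∫⁻ x, f x ^ p := by
  have slice_eq_zero {s : ℝ} (hs : s ∉ Set.Ico 0 1) :
      ∫⁻ w, projectivePullback h f (w, s) ^ p = 0 := by
    simp [projectivePullback_of_notMem hs, one_pos.trans_le hp]
  calc ∫⁻ x, projectivePullback h f x ^ p
      = ∫⁻ s, ∫⁻ w, projectivePullback h f (w, s) ^ p :=
        lintegral_prod_symm' _ ((measurable_projectivePullback hf h).pow_const p)
    _ = ∫⁻ s in Set.Ico 0 1, ∫⁻ w, projectivePullback h f (w, s) ^ p :=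
        (setLIntegral_eq_of_support_subset
          (Function.support_subset_iff'.mpr fun _ => slice_eq_zero)).symm
    _ ≤ ∫⁻ s in Set.Ico 0 1, ENNReal.ofReal (2 ^ n * h ^ (p - 1 - n)) *
          (ENNReal.ofReal (h / (1 + s) ^ 2) * ∫⁻ w, f (w, h / (1 + s)) ^ p) :=
        setLIntegral_mono' measurableSet_Ico fun s hs =>
          lintegral_slice_projectivePullback_rpow_le hf hh hp hs
    _ = ENNReal.ofReal (2 ^ n * h ^ (p - 1 - n)) *
          ∫⁻ t in Set.Ioc (h / 2) h, ∫⁻ w, f (w, t) ^ p := by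
        rw [lintegral_const_mul _ (by fun_prop), setLIntegral_Ioc_half_eq _ hh]
    _ ≤ ENNReal.ofReal (2 ^ n * h ^ (p - 1 - n)) * ∫⁻ t, ∫⁻ w, f (w, t) ^ p := by
        gcongr
        exact Measure.restrict_le_self
    _ = _ := by rw [Measure.volume_eq_prod (Euc n) ℝ, lintegral_prod_symm' _ (hf.pow_const p)]

end ProjectivePullback

section DyadicHeights

variable {n : ℕ} {C p q r h : ℝ} {f : Euc n × ℝ → ℝ≥0∞}

lemma ofReal_pow_mul_rpow_eq (n : ℕ) (hh : 0 < h) {c : ℝ} (hc : 0 ≤ c) {e κ : ℝ} (hκ : 0 ≤ κ)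
    (x : ℝ≥0∞) :
    ENNReal.ofReal (h ^ n) * (ENNReal.ofReal (c * h ^ e) * x) ^ κ =
      (ENNReal.ofReal c * x) ^ κ * ENNReal.ofReal (h ^ (n + e * κ)) := by
  rw [ENNReal.ofReal_mul hc, mul_right_comm, ENNReal.mul_rpow_of_nonneg _ (ENNReal.ofReal _) hκ,
    ENNReal.ofReal_rpow_of_pos (Real.rpow_pos_of_pos hh e), ← Real.rpow_mul hh.le,
    Real.rpow_add hh, Real.rpow_natCast, ENNReal.ofReal_mul (by positivity)]
  ring

lemma mixedLIntegral_xraySlab_le (hq : 0 ≤ q) (hp : 1 ≤ p) {A : ℝ≥0∞}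
    (bound : ∀ g : Euc n × ℝ → ℝ≥0∞, Measurable g →
      mixedLIntegral volume (volume.restrict (Metric.ball 0 C)) q r (projXray g) ≤
        A * (∫⁻ x, g x ^ p) ^ (q / p)) (hf : Measurable f) (hh : 0 < h) :
    mixedLIntegral volume (volume.restrict (Metric.ball 0 C)) q r (xraySlab h f) ≤
      A * (ENNReal.ofReal (2 ^ n) * ∫⁻ x, f x ^ p) ^ (q / p) *
        ENNReal.ofReal (h ^ (n + (p - 1 - n) * (q / p))) := by
  have hqp : 0 ≤ q / p := by positivity
  set H : Euc n → ℝ≥0∞ := fun v =>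
    (∫⁻ z in Metric.ball 0 C, projXray (projectivePullback h f) v z ^ r) ^ (q / r)
  calc _ = ∫⁻ x, H (0 + h⁻¹ • x) := by
        simp only [mixedLIntegral, xraySlab_eq_projXray hh, H, zero_add]
    _ = ENNReal.ofReal (h ^ n) * mixedLIntegral volume (volume.restrict (Metric.ball 0 C)) q r
          (projXray (projectivePullback h f)) := by
        rw [lintegral_comp_add_smul volume H 0 (by positivity), inv_inv, abs_of_pos hh,
          finrank_euclideanSpace_fin]
        rfl
    _ ≤ ENNReal.ofReal (h ^ n) *
          (A * (ENNReal.ofReal (2 ^ n * h ^ (p - 1 - n)) * ∫⁻ x, f x ^ p) ^ (q / p)) := by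
        gcongr
        exact (bound _ (measurable_projectivePullback hf h)).trans
          (by gcongr; exact lintegral_projectivePullback_rpow_le hf hh hp)
    _ = _ := by rw [mul_left_comm, ofReal_pow_mul_rpow_eq n hh (by positivity) hqp, mul_assoc]

lemma exists_mixedLIntegral_xrayT_le (hq : 0 < q) (hr : 0 < r) (hqr : q ≤ r) (hp : 1 ≤ p)
    (hscale : 0 < n + (p - 1 - n) * (q / p)) {A : ℝ≥0∞} (hA : A ≠ ⊤)
    (bound : ∀ g : Euc n × ℝ → ℝ≥0∞, Measurable g →
      mixedLIntegral volume (volume.restrict (Metric.ball 0 C)) q r (projXray g) ≤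
        A * (∫⁻ x, g x ^ p) ^ (q / p)) :
    ∃ A' : ℝ≥0∞, A' ≠ ⊤ ∧ ∀ f : Euc n × ℝ → ℝ≥0∞, Measurable f →
      mixedLIntegral volume (volume.restrict (Metric.ball 0 C)) q r (fun x ξ => xrayT f ξ x) ≤
        A' * (∫⁻ x, f x ^ p) ^ (q / p) := by
  set θ : ℝ := n + (p - 1 - n) * (q / p)
  have hqp : 0 ≤ q / p := by positivity
  obtain ⟨A₁, hA₁, sum_le⟩ := exists_mixedLIntegral_tsum_le_of_geometric hq hr hqr
    (τ := ENNReal.ofReal ((1 / 2) ^ θ)) (ENNReal.ofReal_pos.mpr (by positivity)).ne'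
    (ENNReal.ofReal_lt_one.mpr (Real.rpow_lt_one (by norm_num) one_half_lt_one hscale))
  refine ⟨A₁ * (A * ENNReal.ofReal (2 ^ n) ^ (q / p)), ENNReal.mul_ne_top hA₁
    (ENNReal.mul_ne_top hA (ENNReal.rpow_ne_top_of_nonneg hqp ofReal_ne_top)), fun f hf => ?_⟩
  rw [mul_assoc, mul_assoc, ← ENNReal.mul_rpow_of_nonneg _ _ hqp]
  refine (mixedLIntegral_mono hq.le hr.le fun x ξ => xrayT_le_tsum_xraySlab f ξ x).trans
    (sum_le (fun k => measurable_xraySlab hf _) fun k => ?_)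
  refine (mixedLIntegral_xraySlab_le hq.le hp bound hf (by positivity)).trans_eq ?_
  rw [← ENNReal.ofReal_pow (by positivity), Real.rpow_pow_comm (by norm_num)]

lemma exists_nikodymMixedNorm_le (hq : 0 < q) (hr : 0 < r) (hqr : q ≤ r) (hp : 1 ≤ p)
    (hscale : 0 < n + (p - 1 - n) * (q / p)) {A : ℝ≥0∞} (hA : A ≠ ⊤)
    (bound : ∀ g : Euc n × ℝ → ℝ≥0∞, Measurable g →
      mixedLIntegral volume (volume.restrict (Metric.ball 0 C)) q r (projXray g) ≤
        A * (∫⁻ x, g x ^ p) ^ (q / p)) :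
    ∃ A' : ℝ, 0 < A' ∧ ∀ f : Euc n × ℝ → ℝ≥0∞, Measurable f →
      nikodymMixedNorm q r C f ≤ ENNReal.ofReal A' * lpNorm p f := by
  obtain ⟨A', hA', xray_le⟩ := exists_mixedLIntegral_xrayT_le hq hr hqr hp hscale hA bound
  have root_ne_top : A' ^ (1 / q) ≠ ⊤ := ENNReal.rpow_ne_top_of_nonneg (by positivity) hA'
  refine ⟨(A' ^ (1 / q)).toReal + 1, by positivity, fun f hf => ?_⟩
  calc nikodymMixedNorm q r C f ≤ (A' * (∫⁻ x, f x ^ p) ^ (q / p)) ^ (1 / q) :=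
        ENNReal.rpow_le_rpow (xray_le f hf) (by positivity)
    _ = A' ^ (1 / q) * _root_.lpNorm p f := by
        rw [ENNReal.mul_rpow_of_nonneg _ _ (by positivity), ← ENNReal.rpow_mul,
          show q / p * (1 / q) = 1 / p by field_simp]
        rfl
    _ ≤ _ := by
        gcongr
        exact (ENNReal.ofReal_toReal root_ne_top).ge.trans
          (ENNReal.ofReal_le_ofReal (le_add_of_nonneg_right zero_le_one))

end DyadicHeights

-- On the line `Q * a + κ * b = q` the last bound is strict as soon as `κ` is below `4 / 7 * Q`, and
-- the level bound as soon as `κ` is above `1`, so the midpoint of the two works for small `b`.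
lemma exists_interpolation_weights {Q q r : ℝ} (hQ : 7 / 4 < Q) (hq : 0 < q) (hqQ : q < Q)
    (hr : 0 < r) (hrQ : r < 4 / 3 * Q) :
    ∃ a b c η : ℝ, 0 ≤ a ∧ 0 ≤ b ∧ 0 ≤ c ∧ a + b + c = 1 ∧ 0 < η ∧ (Q + η) * a + b < q ∧
      3 / 4 * a + b < q / r ∧ q < 4 / 7 * Q * (7 / 4 * a + b) := by
  have Q_pos : 0 < Q := by linarith
  set κ : ℝ := (1 + 4 / 7 * Q) / 2 with hκ
  have one_lt_κ : 1 < κ := by linarith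
  have κ_lt : κ < 4 / 7 * Q := by linarith
  have gap_pos : 0 < q / r - 3 / 4 * (q / Q) := by
    rw [sub_pos, ← mul_div_assoc, div_lt_div_iff₀ Q_pos hr]
    nlinarith
  obtain ⟨b, b_pos, hb⟩ : ∃ b : ℝ, 0 < b ∧
      b < min ((Q - q) / Q) (min (q / r - 3 / 4 * (q / Q)) (q / κ)) :=
    exists_between (lt_min (div_pos (by linarith) Q_pos) (lt_min gap_pos (by positivity)))
  rw [lt_min_iff, lt_min_iff, lt_div_iff₀ Q_pos, lt_div_iff₀ (by linarith)] at hb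
  obtain ⟨bQ_lt, b_lt_gap, bκ_lt⟩ := hb
  set a : ℝ := (q - κ * b) / Q with ha
  have aQ : a * Q = q - κ * b := div_mul_cancel₀ _ Q_pos.ne'
  have a_nonneg : 0 ≤ a := div_nonneg (by linarith) Q_pos.le
  have κb_pos : 0 < κ * b := by positivity
  have a_le : a ≤ q / Q := by
    rw [ha]
    gcongr
    linarith
  have a_lt_one : a < 1 := a_le.trans_lt ((div_lt_one Q_pos).mpr hqQ)
  have margin_pos : 0 < (κ - 1) * b := mul_pos (sub_pos.mpr one_lt_κ) b_pos
  have c_nonneg : 0 ≤ 1 - a - b := by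
    refine (pos_of_mul_pos_left ?_ Q_pos.le).le
    linarith
  refine ⟨a, b, 1 - a - b, (κ - 1) * b / 2, a_nonneg, b_pos.le, c_nonneg, by ring,
    half_pos margin_pos, ?_, by linarith, ?_⟩
  · have := mul_lt_mul_of_pos_left a_lt_one margin_pos
    calc (Q + (κ - 1) * b / 2) * a + b = q - (κ - 1) * b + (κ - 1) * b * a / 2 := by
          linear_combination aQ
      _ < q := by linarith
  · calc q = Q * a + κ * b := by linear_combination -aQ
      _ < Q * a + 4 / 7 * Q * b := by gcongr
      _ = 4 / 7 * Q * (7 / 4 * a + b) := by ring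

section NikodymBound

variable {n : ℕ} {C q r : ℝ}

lemma exists_mixedLIntegral_projXray_le_of_five_le (hn : 5 ≤ n) (hC : 0 < C)
    (hpq : 4 / 7 * (n + 7 / 4) ≤ q) (hq : q < n + 7 / 4) (hqr : q ≤ r)
    (hr : r < 4 / 3 * (n + 7 / 4)) :
    ∃ A : ℝ≥0∞, A ≠ ⊤ ∧ ∀ g : Euc n × ℝ → ℝ≥0∞, Measurable g →
      mixedLIntegral volume (volume.restrict (Metric.ball 0 C)) q r (projXray g) ≤
        A * (∫⁻ x, g x ^ (4 / 7 * (n + 7 / 4 : ℝ))) ^ (q / (4 / 7 * (n + 7 / 4))) := by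
  have hn' : (5 : ℝ) ≤ n := by exact_mod_cast hn
  have p_pos : 0 < 4 / 7 * (n + 7 / 4 : ℝ) := by positivity
  have q_pos : 0 < q := p_pos.trans_le hpq
  have r_pos : 0 < r := q_pos.trans_le hqr
  obtain ⟨a, b, c, η, ha, hb, hc, habc, hη, level_lt, height_lt, lt_exponent⟩ :=
    exists_interpolation_weights (by linarith) q_pos hq r_pos hr
  obtain ⟨A₁, hA₁, set_bound⟩ := exists_localNikodym_indicator_le hn hC q_pos r_pos hqr ha hb hc
    habc hη level_lt height_lt
  obtain ⟨A₂, hA₂, local_bound⟩ := exists_localNikodym_le q_pos r_pos hqr p_pos lt_exponent hA₁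
    set_bound (measurableSet_unitCylinder (measurableSet_ball (x := 0) (ε := C + 2)))
    ((volume_unitCylinder _).trans_ne measure_ball_lt_top.ne)
  exact exists_mixedLIntegral_projXray_le p_pos hpq hA₂ local_bound

lemma scaling_exponent_pos (hn : 0 < n) (hq : q < n + 7 / 4) :
    0 < n + (4 / 7 * (n + 7 / 4) - 1 - n) * (q / (4 / 7 * (n + 7 / 4 : ℝ))) := by
  have hn' : (0 : ℝ) < n := by exact_mod_cast hn
  have ratio_lt : q / (4 / 7 * (n + 7 / 4 : ℝ)) < 7 / 4 := by
    rw [div_lt_iff₀ (by positivity)]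
    linarith
  nlinarith

end NikodymBound

theorem statement5_general (d : ℕ) (hd : 6 ≤ d) (p q r : ℝ) (hp : p = (4 * (d : ℝ) + 3) / 7)
    (hpq : p ≤ q) (hq : q < (4 * (d : ℝ) + 3) / 4) (hqr : q ≤ r) (hr : r < (4 * (d : ℝ) + 3) / 3)
    (C : ℝ) (hC : 0 < C) :
    ∃ A : ℝ, 0 < A ∧ ∀ f : Euc (d - 1) × ℝ → ℝ≥0∞, Measurable f →
      nikodymMixedNorm q r C f ≤ ENNReal.ofReal A * lpNorm p f := by
  obtain ⟨n, rfl⟩ : ∃ n, d = n + 1 := ⟨d - 1, by omega⟩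
  rw [Nat.add_sub_cancel]
  have hn' : (5 : ℝ) ≤ n := by exact_mod_cast Nat.le_of_succ_le_succ hd
  push_cast at hp hq hr
  obtain rfl : p = 4 / 7 * (n + 7 / 4) := by rw [hp]; ring
  replace hq : q < n + 7 / 4 := by linarith
  obtain ⟨A, hA, bound⟩ := exists_mixedLIntegral_projXray_le_of_five_le (r := r) (by omega) hC hpq
    hq hqr (by linarith)
  exact exists_nikodymMixedNorm_le (by linarith) (by linarith) hqr (by linarith)
    (scaling_exponent_pos (by omega) hq) hA bound

/-- Corollary: for `d ≥ 6`, `(p,q,r) = ((4d+3)/7, (4d+3)/4 - ε, (4d+3)/3 - ε)`,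
the Nikodym-order mixed norm bound `‖T[f]‖_{L^q(L^r),N} ≲ ‖f‖_{L^p(ℝ^d)}` holds. -/
theorem statement5 (d : ℕ) (hd : 6 ≤ d) (ε : ℝ) (hε : ε ∈ Set.Ioo (0:ℝ) 1)
    (p q r : ℝ) (hp : p = (4 * (d:ℝ) + 3) / 7) (hq : q = (4 * (d:ℝ) + 3) / 4 - ε)
    (hr : r = (4 * (d:ℝ) + 3) / 3 - ε) (C : ℝ) (hC : 0 < C) :
    ∃ A : ℝ, 0 < A ∧ ∀ f : Euc (d - 1) × ℝ → ℝ≥0∞, Measurable f →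
      nikodymMixedNorm q r C f ≤ ENNReal.ofReal A * lpNorm p f := by
  have hd' : (6 : ℝ) ≤ d := by exact_mod_cast hd
  exact statement5_general d hd p q r hp (by linarith [hε.2]) (by linarith [hε.1]) (by linarith)
    (by linarith [hε.1]) C hC

end
end

section
/- Let d ≥ 2 be an integer, let p, q, r ∈ [1,∞), let C ≥ 1, and let A > 0. If ‖T[f]‖_{L^q(L^r),K} ≤ A ‖f‖_{L^p(ℝ^d)} holds for every nonnegative measurable function f on ℝ^d, then necessarily 1 + (d−1)/r ≥ d/p and 1/q + 1/r ≥ 1/p. -/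
open MeasureTheory ENNReal

noncomputable section

/-- The Kakeya-order mixed norm `‖T[f]‖_{L^q(L^r),K}`. -/
def kakeyaMixedNorm {n : ℕ} (q r C : ℝ) (f : Euc n × ℝ → ℝ≥0∞) : ℝ≥0∞ :=
  (∫⁻ ξ in Metric.ball (0 : Euc n) C, (∫⁻ x, xrayT f ξ x ^ r) ^ (q / r)) ^ (1 / q)

/-!
Test the estimate on indicators of cylinders `B(0, 2s) × (0, h]`. The line through `x ∈ B(0, s)` in
direction `ξ ∈ B(0, ρ)` stays inside for time `h` as soon as `h ρ ≤ s`, so for `ρ ≤ C` the left-hand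
side is at least `h |B(0, s)|^{1/r} |B(0, ρ)|^{1/q}`. Now let `s → 0` and compare powers of `s`.
Taking `h = s`, a cylinder comparable to a ball, allows a fixed `ρ` and gives the first condition.
Taking `h = 1`, a thin tube, forces `ρ` to shrink, and `ρ = s` gives the second.
-/

open Filter Metric Topology

section

variable {α : Type*}

lemma const_mul_measure_rpow_le_lintegral_rpow [MeasurableSpace α] {μ : Measure α} {S : Set α}
    (hS : MeasurableSet S) {f : α → ℝ≥0∞} {c : ℝ≥0∞} {p : ℝ} (hp : 0 < p)
    (hf : ∀ x ∈ S, c ≤ f x) : c * μ S ^ (1 / p) ≤ (∫⁻ x, f x ^ p ∂μ) ^ (1 / p) := by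
  have hpow : c ^ p * μ S ≤ ∫⁻ x, f x ^ p ∂μ :=
    calc c ^ p * μ S = ∫⁻ _ in S, c ^ p ∂μ := (setLIntegral_const S _).symm
      _ ≤ ∫⁻ x in S, f x ^ p ∂μ :=
        setLIntegral_mono' hS fun x hx ↦ ENNReal.rpow_le_rpow (hf x hx) hp.le
      _ ≤ ∫⁻ x, f x ^ p ∂μ := setLIntegral_le_lintegral _ _
  calc c * μ S ^ (1 / p) = (c ^ p * μ S) ^ (1 / p) := by
        rw [ENNReal.mul_rpow_of_nonneg _ _ (one_div_pos.2 hp).le, one_div,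
          ENNReal.rpow_rpow_inv hp.ne']
    _ ≤ _ := ENNReal.rpow_le_rpow hpow (one_div_pos.2 hp).le

lemma lpNorm_indicator_one [MeasureSpace α] {S : Set α} (hS : MeasurableSet S) {p : ℝ}
    (hp : 0 < p) : lpNorm p (S.indicator 1) = volume S ^ (1 / p) := by
  have hpow (z : α) : S.indicator (1 : α → ℝ≥0∞) z ^ p = S.indicator 1 z := by
    by_cases hz : z ∈ S <;> simp [hz, hp]
  simp only [_root_.lpNorm, hpow, lintegral_indicator_one hS]

end

lemma volume_ball_mul_rpow_one_div {n : ℕ} {s : ℝ} (hs : 0 < s) (R : ℝ) {p : ℝ} (hp : 0 ≤ p) :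
    volume (ball (0 : Euc n) (s * R)) ^ (1 / p) =
      ENNReal.ofReal s ^ (n / p) * volume (ball (0 : Euc n) R) ^ (1 / p) := by
  rw [Measure.addHaar_ball_mul_of_pos volume 0 hs R, finrank_euclideanSpace_fin,
    ENNReal.mul_rpow_of_nonneg _ _ (one_div_nonneg.2 hp), ENNReal.ofReal_pow hs.le,
    ← ENNReal.rpow_natCast_mul, mul_one_div]

lemma volume_ball_rpow_ne_zero {n : ℕ} {R : ℝ} (hR : 0 < R) (a : ℝ) :
    volume (ball (0 : Euc n) R) ^ a ≠ 0 :=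
  (ENNReal.rpow_pos (measure_ball_pos volume 0 hR) measure_ball_lt_top.ne).ne'

lemma le_of_eventually_mul_ofReal_rpow_le {a b : ℝ} {c K : ℝ≥0∞} (hc : c ≠ 0) (hK : K ≠ ∞)
    (h : ∀ᶠ s : ℝ in 𝓝[>] 0, ENNReal.ofReal s ^ a * c ≤ ENNReal.ofReal s ^ b * K) : b ≤ a := by
  by_contra! hab
  have hlim : Tendsto (fun s : ℝ ↦ K * ENNReal.ofReal s ^ (b - a)) (𝓝[>] 0) (𝓝 0) := by
    refine (ENNReal.tendsto_const_mul_rpow_nhds_zero_of_pos hK (sub_pos.2 hab)).comp ?_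
    simpa using (ENNReal.continuous_ofReal.tendsto 0).mono_left nhdsWithin_le_nhds
  have hle : ∀ᶠ s : ℝ in 𝓝[>] 0, c ≤ K * ENNReal.ofReal s ^ (b - a) := by
    filter_upwards [h, self_mem_nhdsWithin] with s hs hs_pos
    have hs0 : ENNReal.ofReal s ≠ 0 := by simpa using hs_pos
    have hdiv : ENNReal.ofReal s ^ b = ENNReal.ofReal s ^ a * ENNReal.ofReal s ^ (b - a) := by
      rw [← ENNReal.rpow_add _ _ hs0 ofReal_ne_top, add_sub_cancel]
    rw [hdiv, mul_assoc, mul_comm _ K] at hs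
    exact (ENNReal.mul_le_mul_iff_right (ENNReal.rpow_pos (pos_iff_ne_zero.2 hs0) ofReal_ne_top).ne'
      (ENNReal.rpow_ne_top_of_ne_zero hs0 ofReal_ne_top)).1 hs
  exact hc (le_zero_iff.1 (ge_of_tendsto hlim hle))

section Xray

variable {n : ℕ}

lemma le_kakeyaMixedNorm {q r C : ℝ} (hq : 0 < q) (hr : 0 < r) {f : Euc n × ℝ → ℝ≥0∞}
    {Ω X : Set (Euc n)} (hΩ : MeasurableSet Ω) (hΩC : Ω ⊆ ball 0 C) (hX : MeasurableSet X)
    {c : ℝ≥0∞} (hf : ∀ ξ ∈ Ω, ∀ x ∈ X, c ≤ xrayT f ξ x) :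
    c * volume X ^ (1 / r) * volume Ω ^ (1 / q) ≤ kakeyaMixedNorm q r C f := by
  have hexp (I : ℝ≥0∞) : I ^ (q / r) = (I ^ (1 / r)) ^ q := by
    rw [← ENNReal.rpow_mul, one_div_mul_eq_div]
  have hinner (ξ : Euc n) (hξ : ξ ∈ Ω) :
      c * volume X ^ (1 / r) ≤ (∫⁻ x, xrayT f ξ x ^ r) ^ (1 / r) :=
    const_mul_measure_rpow_le_lintegral_rpow hX hr (hf ξ hξ)
  simp only [kakeyaMixedNorm, hexp]
  rw [← Measure.restrict_eq_self volume hΩC]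
  exact const_mul_measure_rpow_le_lintegral_rpow hΩ hq hinner

/-- The cylinder `B(0, R) × (0, h]` about the last coordinate axis, on whose indicator the estimate
is tested. The interval is half-open to match the domain of integration in `xrayT`. -/
def solidCylinder (n : ℕ) (R h : ℝ) : Set (Euc n × ℝ) :=
  ball 0 R ×ˢ Set.Ioc 0 h

lemma measurableSet_solidCylinder (R h : ℝ) : MeasurableSet (solidCylinder n R h) :=
  measurableSet_ball.prod measurableSet_Ioc

lemma volume_solidCylinder (R h : ℝ) :
    volume (solidCylinder n R h) = volume (ball (0 : Euc n) R) * ENNReal.ofReal h := by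
  rw [solidCylinder, Measure.volume_eq_prod, Measure.prod_prod, Real.volume_Ioc, sub_zero]

lemma ofReal_le_xrayT_indicator_solidCylinder {R h : ℝ} (hh : h ≤ 1) {ξ x : Euc n}
    (hR : ‖x‖ + h * ‖ξ‖ < R) :
    ENNReal.ofReal h ≤ xrayT ((solidCylinder n R h).indicator 1) ξ x := by
  have hmem (t : ℝ) (ht : t ∈ Set.Ioc 0 h) : (x + t • ξ, t) ∈ solidCylinder n R h := by
    refine ⟨mem_ball_zero_iff.2 ?_, ht⟩
    calc ‖x + t • ξ‖ ≤ ‖x‖ + ‖t • ξ‖ := norm_add_le _ _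
      _ = ‖x‖ + t * ‖ξ‖ := by rw [norm_smul, Real.norm_of_nonneg ht.1.le]
      _ ≤ ‖x‖ + h * ‖ξ‖ := by gcongr; exact ht.2
      _ < R := hR
  calc ENNReal.ofReal h = ∫⁻ _ in Set.Ioc (0 : ℝ) h, 1 := by simp
    _ ≤ ∫⁻ t in Set.Ioc 0 h, (solidCylinder n R h).indicator 1 (x + t • ξ, t) :=
      setLIntegral_mono' measurableSet_Ioc fun t ht ↦ by simp [hmem t ht]
    _ ≤ xrayT ((solidCylinder n R h).indicator 1) ξ x :=
      lintegral_mono_set (Set.Ioc_subset_Ioc_right hh)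

/-- The restricted strong-type version of the bound `‖T[f]‖_{L^q(L^r),K} ≤ A ‖f‖_{L^p}`: it is only
required of indicator functions `f = 1_S`, for which `‖f‖_{L^p} = |S|^{1/p}`. -/
def RestrictedKakeyaBound (n : ℕ) (p q r C : ℝ) (A : ℝ≥0∞) : Prop :=
  ∀ S : Set (Euc n × ℝ), MeasurableSet S →
    kakeyaMixedNorm q r C (S.indicator 1) ≤ A * volume S ^ (1 / p)

namespace RestrictedKakeyaBound

variable {p q r C : ℝ} {A : ℝ≥0∞}

lemma ofReal_mul_volume_ball_rpow_le (hbound : RestrictedKakeyaBound n p q r C A) (hq : 0 < q)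
    (hr : 0 < r) {s h ρ : ℝ} (hh : 0 ≤ h) (hh1 : h ≤ 1) (hρC : ρ ≤ C) (hρs : h * ρ ≤ s) :
    ENNReal.ofReal h * volume (ball (0 : Euc n) s) ^ (1 / r) *
        volume (ball (0 : Euc n) ρ) ^ (1 / q) ≤
      A * (volume (ball (0 : Euc n) (s * 2)) * ENNReal.ofReal h) ^ (1 / p) := by
  have hlower : ∀ ξ ∈ ball (0 : Euc n) ρ, ∀ x ∈ ball (0 : Euc n) s,
      ENNReal.ofReal h ≤ xrayT ((solidCylinder n (s * 2) h).indicator 1) ξ x := by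
    intro ξ hξ x hx
    rw [mem_ball_zero_iff] at hξ hx
    refine ofReal_le_xrayT_indicator_solidCylinder hh1 ?_
    linarith [mul_le_mul_of_nonneg_left hξ.le hh]
  rw [← volume_solidCylinder]
  exact (le_kakeyaMixedNorm hq hr measurableSet_ball (ball_subset_ball hρC) measurableSet_ball
    hlower).trans (hbound _ (measurableSet_solidCylinder _ _))

theorem add_one_div_le_one_add_div (hbound : RestrictedKakeyaBound n p q r C A) (hp : 0 < p)
    (hq : 0 < q) (hr : 0 < r) (hC : 0 < C) (hA : A ≠ ∞) : (n + 1) / p ≤ 1 + n / r := by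
  set ρ := min C 1
  have hρ : 0 < ρ := lt_min hC one_pos
  set c := volume (ball (0 : Euc n) 1) ^ (1 / r) * volume (ball (0 : Euc n) ρ) ^ (1 / q) with c_def
  set K := A * volume (ball (0 : Euc n) 2) ^ (1 / p) with K_def
  have hc : c ≠ 0 :=
    mul_ne_zero (volume_ball_rpow_ne_zero one_pos _) (volume_ball_rpow_ne_zero hρ _)
  have hK : K ≠ ∞ :=
    mul_ne_top hA (ENNReal.rpow_ne_top_of_nonneg (one_div_pos.2 hp).le measure_ball_lt_top.ne)
  refine le_of_eventually_mul_ofReal_rpow_le hc hK ?_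
  filter_upwards [Ioc_mem_nhdsGT one_pos] with s ⟨hs, hs1⟩
  have hs0 : ENNReal.ofReal s ≠ 0 := by simpa using hs
  have hball := volume_ball_mul_rpow_one_div (n := n) hs 1 hr.le
  rw [mul_one] at hball
  calc ENNReal.ofReal s ^ (1 + n / r) * c
      = ENNReal.ofReal s * volume (ball (0 : Euc n) s) ^ (1 / r) *
          volume (ball (0 : Euc n) ρ) ^ (1 / q) := by
        rw [ENNReal.rpow_add _ _ hs0 ofReal_ne_top, ENNReal.rpow_one, hball, c_def]
        ring
    _ ≤ A * (volume (ball (0 : Euc n) (s * 2)) * ENNReal.ofReal s) ^ (1 / p) :=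
        hbound.ofReal_mul_volume_ball_rpow_le hq hr hs.le hs1 (min_le_left C 1)
          (mul_le_of_le_one_right hs.le (min_le_right C 1))
    _ = ENNReal.ofReal s ^ ((n + 1) / p) * K := by
        rw [ENNReal.mul_rpow_of_nonneg _ _ (one_div_pos.2 hp).le,
          volume_ball_mul_rpow_one_div hs 2 hp.le, add_div,
          ENNReal.rpow_add _ _ hs0 ofReal_ne_top, K_def]
        ring

theorem one_div_le_one_div_add_one_div (hbound : RestrictedKakeyaBound n p q r C A) (hn : n ≠ 0)
    (hp : 0 < p) (hq : 0 < q) (hr : 0 < r) (hC : 0 < C) (hA : A ≠ ∞) :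
    1 / p ≤ 1 / q + 1 / r := by
  suffices hdim : (n : ℝ) / p ≤ n / q + n / r by
    refine le_of_mul_le_mul_left ?_ (Nat.cast_pos.2 (Nat.pos_of_ne_zero hn) : (0 : ℝ) < n)
    simpa only [mul_add, mul_one_div] using hdim
  set c := volume (ball (0 : Euc n) 1) ^ (1 / q) * volume (ball (0 : Euc n) 1) ^ (1 / r) with c_def
  set K := A * volume (ball (0 : Euc n) 2) ^ (1 / p) with K_def
  have hc : c ≠ 0 :=
    mul_ne_zero (volume_ball_rpow_ne_zero one_pos _) (volume_ball_rpow_ne_zero one_pos _)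
  have hK : K ≠ ∞ :=
    mul_ne_top hA (ENNReal.rpow_ne_top_of_nonneg (one_div_pos.2 hp).le measure_ball_lt_top.ne)
  refine le_of_eventually_mul_ofReal_rpow_le hc hK ?_
  filter_upwards [Ioc_mem_nhdsGT hC] with s ⟨hs, hsC⟩
  have hs0 : ENNReal.ofReal s ≠ 0 := by simpa using hs
  have hball {a : ℝ} (ha : 0 < a) := volume_ball_mul_rpow_one_div (n := n) hs 1 ha.le
  simp only [mul_one] at hball
  calc ENNReal.ofReal s ^ (n / q + n / r) * c
      = ENNReal.ofReal 1 * volume (ball (0 : Euc n) s) ^ (1 / r) *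
          volume (ball (0 : Euc n) s) ^ (1 / q) := by
        rw [ENNReal.rpow_add _ _ hs0 ofReal_ne_top, hball hq, hball hr, ofReal_one, c_def]
        ring
    _ ≤ A * (volume (ball (0 : Euc n) (s * 2)) * ENNReal.ofReal 1) ^ (1 / p) :=
        hbound.ofReal_mul_volume_ball_rpow_le hq hr zero_le_one le_rfl hsC (one_mul s).le
    _ = ENNReal.ofReal s ^ (n / p) * K := by
        rw [ofReal_one, mul_one, volume_ball_mul_rpow_one_div hs 2 hp.le, K_def]
        ring

end RestrictedKakeyaBound

end Xray

theorem statement6_general (d : ℕ) (hd : 2 ≤ d) (p q r : ℝ) (hp : 0 < p) (hq : 0 < q) (hr : 0 < r)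
    (C : ℝ) (hC : 0 < C) (A : ℝ≥0∞) (hA : A ≠ ∞)
    (hbound : RestrictedKakeyaBound (d - 1) p q r C A) :
    1 + ((d : ℝ) - 1) / r ≥ (d : ℝ) / p ∧ 1 / q + 1 / r ≥ 1 / p := by
  refine ⟨?_, hbound.one_div_le_one_div_add_one_div (by lia) hp hq hr hC hA⟩
  simpa [Nat.cast_pred (by lia : 0 < d)] using
    hbound.add_one_div_le_one_add_div hp hq hr hC hA

/-- Necessary conditions for the Kakeya-order mixed norm bound:
`1 + (d-1)/r ≥ d/p` and `1/q + 1/r ≥ 1/p`. -/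
theorem statement6 (d : ℕ) (hd : 2 ≤ d) (p q r : ℝ)
    (hp : 1 ≤ p) (hq : 1 ≤ q) (hr : 1 ≤ r) (C : ℝ) (hC : 1 ≤ C) (A : ℝ) (hA : 0 < A)
    (hbound : ∀ f : Euc (d - 1) × ℝ → ℝ≥0∞, Measurable f →
      kakeyaMixedNorm q r C f ≤ ENNReal.ofReal A * lpNorm p f) :
    1 + ((d:ℝ) - 1) / r ≥ (d:ℝ) / p ∧ 1 / q + 1 / r ≥ 1 / p :=
  statement6_general d hd p q r (one_pos.trans_le hp) (one_pos.trans_le hq) (one_pos.trans_le hr) C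
    (one_pos.trans_le hC) (ENNReal.ofReal A) ofReal_ne_top fun _ hS ↦
      lpNorm_indicator_one hS (one_pos.trans_le hp) ▸ hbound _ (measurable_one.indicator hS)

end
end
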